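/- arXiv:1301.1735 — 3 statements merged into one kernel-verified Lean document; each statement's English description precedes it below -/
import Mathlib

section
/- (27/4) ∫_0^1 t(1−t) [K(√(1−t))]² K(√t) / (1 − t + t²)^{7/4} dt = [Γ(1/4)]⁴ / (8 √(2√3)). -/
open Real MeasureTheory intervalIntegral

/-- Complete elliptic integral of the first kind. -/
noncomputable def ellipticK (k : ℝ) : ℝ :=
  ∫ θ in (0:ℝ)..(π/2), 1 / Real.sqrt (1 - k^2 * Real.sin θ ^ 2)

/-- Power series with complex coefficients evaluated at a real point. -/
noncomputable def psr (a : ℕ → ℂ) (s : ℝ) : ℂ := ∑' j, a j * (s : ℂ) ^ j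

lemma psr_summable {a : ℕ → ℂ} {C : ℝ} (ha : ∀ j, ‖a j‖ ≤ C) {s : ℝ} (h0 : 0 ≤ s) (h1 : s < 1) :
    Summable (fun j => a j * (s : ℂ) ^ j) := by
  apply Summable.of_norm_bounded (g := fun j => C * s ^ j)
  · exact (summable_geometric_of_lt_one h0 h1).mul_left C
  · intro j
    rw [norm_mul, norm_pow, Complex.norm_real, Real.norm_of_nonneg h0]
    gcongr
    exact ha j

lemma psr_norm_le {a : ℕ → ℂ} {b : ℕ → ℝ} {s : ℝ} (h0 : 0 ≤ s)
    (hb : ∀ j, ‖a j‖ ≤ b j) (hs : Summable (fun j => b j * s ^ j)) :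
    ‖psr a s‖ ≤ ∑' j, b j * s ^ j := by
  refine tsum_of_norm_bounded hs.hasSum ?_
  intro j
  rw [norm_mul, norm_pow, Complex.norm_real, Real.norm_of_nonneg h0]
  gcongr
  exact hb j

lemma psr_norm_le_const {a : ℕ → ℂ} {C : ℝ} (ha : ∀ j, ‖a j‖ ≤ C) {s : ℝ}
    (h0 : 0 ≤ s) (h1 : s < 1) : ‖psr a s‖ ≤ C / (1 - s) := by
  refine (psr_norm_le h0 ha ((summable_geometric_of_lt_one h0 h1).mul_left C)).trans_eq ?_
  rw [tsum_mul_left, tsum_geometric_of_lt_one h0 h1]; rfl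

lemma psr_hasDerivAt {a : ℕ → ℂ} {C : ℝ} (ha : ∀ j, ‖a j‖ ≤ C) {s : ℝ} (h0 : 0 ≤ s) (h1 : s < 1) :
    HasDerivAt (psr a) (psr (fun j => (j + 1) * a (j + 1)) s) s := by
  obtain ⟨r, hr1, hr2⟩ := exists_between h1
  have hr0 : 0 < r := lt_of_le_of_lt h0 hr1
  have hC : 0 ≤ C := (norm_nonneg _).trans (ha 0)
  have hsum : Summable (fun n : ℕ => C * (n * r ^ (n - 1))) := by
    apply Summable.mul_left
    rw [← summable_nat_add_iff 1]
    have h2 : Summable (fun n : ℕ => ((n : ℝ) ^ 1 * r ^ n)) :=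
      summable_pow_mul_geometric_of_norm_lt_one 1 (by rw [Real.norm_of_nonneg hr0.le]; exact hr2)
    have h3 := summable_geometric_of_lt_one hr0.le hr2
    refine (h2.add h3).congr ?_
    intro n
    simp
    ring
  have key := hasDerivAt_tsum_of_isPreconnected (𝕜 := ℝ) (F := ℂ)
    (g := fun n s => a n * (s : ℂ) ^ n)
    (g' := fun n s => a n * (n * (s : ℂ) ^ (n - 1))) (t := Set.Ioo (-r) r) (y₀ := s) (y := s)
    hsum isOpen_Ioo isPreconnected_Ioo ?_ ?_ ⟨by linarith, hr1⟩ (psr_summable ha h0 h1)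
    ⟨by linarith, hr1⟩
  · have h3 : (∑' n, a n * (n * (s : ℂ) ^ (n - 1))) = psr (fun j => (j + 1) * a (j + 1)) s := by
      rw [← Summable.sum_add_tsum_nat_add 1]
      · simp only [Finset.range_one, Finset.sum_singleton, psr]
        simp
        refine tsum_congr fun j => ?_
        ring
      · refine Summable.of_norm_bounded hsum ?_
        intro n
        rw [norm_mul, norm_mul, norm_pow, Complex.norm_real, Complex.norm_natCast, Real.norm_of_nonneg h0]
        gcongr
        exact ha n
    rw [h3] at key
    exact key
  · intro n y hy
    have h := ((hasDerivAt_pow n (y : ℂ)).comp_ofReal).const_mul (a n)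
    simpa using h
  · intro n y hy
    rw [norm_mul, norm_mul, norm_pow, Complex.norm_real, Complex.norm_natCast]
    have : ‖y‖ ≤ r := by rw [Real.norm_eq_abs, abs_le]; exact ⟨hy.1.le, hy.2.le⟩
    gcongr
    exact ha n

/-- Legendre coefficients. -/
noncomputable def ac (l : ℂ) : ℕ → ℂ
  | 0 => 1
  | (j + 1) => ac l j * ((j : ℂ) * (j + 1) - l) / ((j : ℂ) + 1) ^ 2

lemma ac_zero (l : ℂ) : ac l 0 = 1 := rfl
lemma ac_succ (l : ℂ) (j : ℕ) :
    ac l (j + 1) = ac l j * ((j : ℂ) * (j + 1) - l) / ((j : ℂ) + 1) ^ 2 := rfl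

noncomputable def Mb (l : ℂ) : ℝ := ‖l‖ * Real.exp ‖l‖

lemma Mb_nonneg (l : ℂ) : 0 ≤ Mb l := by unfold Mb; positivity

lemma ac_bound1 (l : ℂ) (j : ℕ) :
    ((j : ℝ) + 1) * ‖ac l (j + 1)‖ ≤ ‖l‖ * Real.exp (‖l‖ * (1 - 1 / ((j : ℝ) + 1))) := by
  induction j with
  | zero => simp [ac_succ, ac_zero]
  | succ j ih =>
    rw [ac_succ]
    rw [norm_div, norm_mul, norm_pow]
    have e1 : ‖((j + 1 : ℕ) : ℂ) + 1‖ = (j : ℝ) + 2 := by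
      have : ((j + 1 : ℕ) : ℂ) + 1 = ((j + 2 : ℕ) : ℂ) := by push_cast; ring
      rw [this, Complex.norm_natCast]; push_cast; ring
    have e2 : ‖((j + 1 : ℕ) : ℂ) * (((j + 1 : ℕ) : ℂ) + 1) - l‖ ≤ ((j : ℝ) + 1) * (j + 2) + ‖l‖ := by
      refine (norm_sub_le _ _).trans ?_
      rw [norm_mul, e1, Complex.norm_natCast]
      push_cast; rfl
    rw [e1]
    have hj : (0 : ℝ) ≤ j := Nat.cast_nonneg j
    have e3 : (1 + ‖l‖ / ((j + 1) * (j + 2))) ≤ Real.exp (‖l‖ / ((j + 1) * (j + 2))) := by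
      rw [add_comm]; exact Real.add_one_le_exp _
    calc (((j + 1 : ℕ) : ℝ) + 1) * (‖ac l (j + 1)‖ * ‖((j + 1 : ℕ) : ℂ) * (((j + 1 : ℕ) : ℂ) + 1) - l‖ / ((j : ℝ) + 2) ^ 2)
        ≤ (((j + 1 : ℕ) : ℝ) + 1) * (‖ac l (j + 1)‖ * (((j : ℝ) + 1) * (j + 2) + ‖l‖) / ((j : ℝ) + 2) ^ 2) := by
          gcongr
      _ = (((j : ℝ) + 1) * ‖ac l (j + 1)‖) * (1 + ‖l‖ / ((j + 1) * (j + 2))) := by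
          push_cast; field_simp; ring
      _ ≤ (‖l‖ * Real.exp (‖l‖ * (1 - 1 / ((j : ℝ) + 1)))) * Real.exp (‖l‖ / ((j + 1) * (j + 2))) := by
          gcongr
      _ = _ := by
          rw [mul_assoc, ← Real.exp_add]
          congr 2
          push_cast; field_simp; ring

lemma ac_bound2 (l : ℂ) (j : ℕ) : ((j : ℝ) + 1) * ‖ac l (j + 1)‖ ≤ Mb l := by
  refine (ac_bound1 l j).trans ?_
  unfold Mb
  gcongr
  have : 0 ≤ 1 / ((j : ℝ) + 1) := by positivity
  nlinarith [norm_nonneg l]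

lemma ac_bound3 (l : ℂ) (j : ℕ) : ‖ac l j‖ ≤ 1 + Mb l := by
  have hM := Mb_nonneg l
  cases j with
  | zero => simp [ac_zero]; exact hM
  | succ j =>
    have := ac_bound2 l j
    have hj : (0 : ℝ) ≤ j := Nat.cast_nonneg j
    nlinarith [norm_nonneg (ac l (j + 1))]

noncomputable def YL (l : ℂ) (s : ℝ) : ℂ := psr (ac l) s

/-- coefficients of the integrated series -/
noncomputable def dc (l : ℂ) : ℕ → ℂ
  | 0 => 0
  | (j + 1) => -l * ac l j / ((j : ℂ) + 1)

noncomputable def DL (l : ℂ) (s : ℝ) : ℂ := psr (dc l) s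

lemma dc_bound (l : ℂ) (j : ℕ) : ‖dc l j‖ ≤ ‖l‖ * (1 + Mb l) := by
  have hM := Mb_nonneg l
  cases j with
  | zero => simp [dc]; positivity
  | succ j =>
    have hj : (0 : ℝ) ≤ j := Nat.cast_nonneg j
    have e1 : ‖(j : ℂ) + 1‖ = (j : ℝ) + 1 := by
      have : (j : ℂ) + 1 = ((j + 1 : ℕ) : ℂ) := by push_cast; ring
      rw [this, Complex.norm_natCast]; push_cast; ring
    simp only [dc]
    rw [norm_div, norm_mul, norm_neg, e1]
    refine (div_le_self (by positivity) (by linarith)).trans ?_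
    gcongr
    exact ac_bound3 l j

lemma dc_eq (l : ℂ) (j : ℕ) : dc l (j + 1) = (j + 1) * ac l (j + 1) - j * ac l j := by
  simp only [dc, ac_succ]
  have : (j : ℂ) + 1 ≠ 0 := Nat.cast_add_one_ne_zero j
  field_simp
  ring

noncomputable def ec (l : ℂ) (j : ℕ) : ℂ := ((j : ℂ) + 1) * ac l (j + 1)

lemma ec_bound (l : ℂ) (j : ℕ) : ‖ec l j‖ ≤ Mb l := by
  have e1 : ‖(j : ℂ) + 1‖ = (j : ℝ) + 1 := by
    have : (j : ℂ) + 1 = ((j + 1 : ℕ) : ℂ) := by push_cast; ring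
    rw [this, Complex.norm_natCast]; push_cast; ring
  rw [ec, norm_mul, e1]; exact ac_bound2 l j

lemma psr_shift {a : ℕ → ℂ} {C : ℝ} (ha : ∀ j, ‖a j‖ ≤ C) {s : ℝ} (h0 : 0 ≤ s) (h1 : s < 1) :
    psr a s = a 0 + s * psr (fun j => a (j + 1)) s := by
  unfold psr
  rw [← Summable.sum_add_tsum_nat_add 1 (psr_summable ha h0 h1), ← tsum_mul_left]
  simp only [Finset.range_one, Finset.sum_singleton, pow_zero, mul_one]
  congr 1
  refine tsum_congr fun j => ?_
  ring

lemma psr_congr {a b : ℕ → ℂ} (h : ∀ j, a j = b j) (s : ℝ) : psr a s = psr b s := by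
  rw [show a = b from funext h]

lemma psr_lin {a b : ℕ → ℂ} {C C' : ℝ} (ha : ∀ j, ‖a j‖ ≤ C) (hb : ∀ j, ‖b j‖ ≤ C') (x y : ℂ) {s : ℝ} (h0 : 0 ≤ s)
    (h1 : s < 1) : psr (fun j => x * a j + y * b j) s = x * psr a s + y * psr b s := by
  unfold psr
  rw [← tsum_mul_left, ← tsum_mul_left, ← Summable.tsum_add]
  · exact tsum_congr fun j => by ring
  · exact (psr_summable ha h0 h1).mul_left _
  · exact (psr_summable hb h0 h1).mul_left _

lemma DL_eq (l : ℂ) {s : ℝ} (h0 : 0 ≤ s) (h1 : s < 1) :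
    DL l s = s * (1 - s) * psr (ec l) s := by
  have hb : ∀ j : ℕ, ‖(j : ℂ) * ac l j‖ ≤ Mb l := by
    intro j
    cases j with
    | zero => simp; exact Mb_nonneg l
    | succ j => have := ec_bound l j; unfold ec at this; push_cast; exact this
  have h2 : psr (fun j => (j : ℂ) * ac l j) s = s * psr (ec l) s := by
    rw [psr_shift hb h0 h1]
    simp
    left
    apply psr_congr
    intro j; unfold ec; push_cast; rfl
  unfold DL
  rw [psr_shift (dc_bound l) h0 h1]
  have h3 : psr (fun j => dc l (j + 1)) s = psr (ec l) s - psr (fun j => (j : ℂ) * ac l j) s := by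
    have := psr_lin (ec_bound l) hb 1 (-1) h0 h1
    rw [one_mul, neg_one_mul, ← sub_eq_add_neg] at this
    rw [← this]
    apply psr_congr
    intro j; rw [dc_eq]; unfold ec; ring
  rw [h3, h2]
  simp [dc]
  ring

lemma YL_hasDerivAt (l : ℂ) {s : ℝ} (h0 : 0 < s) (h1 : s < 1) :
    HasDerivAt (YL l) (DL l s / (s * (1 - s))) s := by
  have h := psr_hasDerivAt (ac_bound3 l) h0.le h1
  have e : DL l s / (s * (1 - s)) = psr (fun j => (j + 1) * ac l (j + 1)) s := by
    rw [DL_eq l h0.le h1]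
    have : (s : ℂ) ≠ 0 := by exact_mod_cast h0.ne'
    have : (1 - s : ℂ) ≠ 0 := by
      have : (1 - s : ℝ) ≠ 0 := by linarith
      exact_mod_cast this
    field_simp
    rfl
  rw [e]; exact h

lemma YL_hasDerivAt' (l : ℂ) {s : ℝ} (h0 : 0 ≤ s) (h1 : s < 1) :
    HasDerivAt (YL l) (psr (ec l) s) s := psr_hasDerivAt (ac_bound3 l) h0 h1

lemma DL_hasDerivAt (l : ℂ) {s : ℝ} (h0 : 0 ≤ s) (h1 : s < 1) :
    HasDerivAt (DL l) (-l * YL l s) s := by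
  have h := psr_hasDerivAt (dc_bound l) h0 h1
  have e : -l * YL l s = psr (fun j => (j + 1) * dc l (j + 1)) s := by
    unfold YL psr
    rw [← tsum_mul_left]
    refine tsum_congr fun j => ?_
    have : (j : ℂ) + 1 ≠ 0 := Nat.cast_add_one_ne_zero j
    simp only [dc]
    field_simp
  rw [e]; exact h

lemma YL_at_zero (l : ℂ) : YL l 0 = 1 := by
  unfold YL
  rw [psr_shift (ac_bound3 l) le_rfl one_pos]
  simp [ac_zero]

lemma DL_at_zero (l : ℂ) : DL l 0 = 0 := by
  rw [DL_eq l le_rfl one_pos]; simp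

lemma DL_bound (l : ℂ) {s : ℝ} (h0 : 0 ≤ s) (h1 : s < 1) : ‖DL l s‖ ≤ Mb l * s := by
  rw [DL_eq l h0 h1, norm_mul, norm_mul]
  have h := psr_norm_le_const (ec_bound l) h0 h1
  have e : ‖(1 : ℂ) - s‖ = 1 - s := by
    have : (1 : ℂ) - s = ((1 - s : ℝ) : ℂ) := by push_cast; ring
    rw [this, Complex.norm_real, Real.norm_of_nonneg (by linarith)]
  rw [e, Complex.norm_real, Real.norm_of_nonneg h0]
  have h2 : 0 < 1 - s := by linarith
  rw [le_div_iff₀ h2] at h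
  nlinarith

lemma YL_bound_log (l : ℂ) {s : ℝ} (h0 : 0 ≤ s) (h1 : s < 1) :
    ‖YL l s‖ ≤ 1 + Mb l * (-Real.log (1 - s)) := by
  have hl := (Real.hasSum_pow_div_log_of_abs_lt_one (x := s) (by rw [abs_of_nonneg h0]; exact h1))
  unfold YL
  rw [psr_shift (ac_bound3 l) h0 h1, ac_zero]
  refine (norm_add_le _ _).trans ?_
  rw [norm_one]
  gcongr
  unfold psr
  rw [← tsum_mul_left]
  refine tsum_of_norm_bounded (hl.mul_left (Mb l)) ?_
  intro j
  rw [norm_mul, norm_mul, norm_pow, Complex.norm_real, Real.norm_of_nonneg h0]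
  have := ac_bound2 l j
  have hj : (0 : ℝ) < j + 1 := by positivity
  have h3 : ‖ac l (j + 1)‖ ≤ Mb l / (j + 1) := by rw [le_div_iff₀ hj]; linarith
  calc s * (‖ac l (j + 1)‖ * s ^ j) = ‖ac l (j + 1)‖ * s ^ (j + 1) := by ring
    _ ≤ Mb l / (j + 1) * s ^ (j + 1) := by gcongr
    _ = _ := by ring

lemma YL_zero (s : ℝ) : YL 0 s = 1 := by
  have h : ∀ j, ac 0 (j + 1) = 0 := by
    intro j
    induction j with
    | zero => simp [ac_succ]
    | succ j ih => rw [ac_succ, ih]; simp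
  unfold YL psr
  rw [tsum_eq_single 0]
  · simp [ac_zero]
  · intro j hj
    obtain ⟨k, rfl⟩ := Nat.exists_eq_succ_of_ne_zero hj
    simp [h]

lemma ac_ladder (ν : ℂ) (j : ℕ) :
    ac ((ν + 1) * (ν + 2)) (j + 1) = -((j + 1 + ν) * (j + 2 + ν)) * ac (ν * (ν + 1)) j / ((j : ℂ) + 1) ^ 2 := by
  induction j with
  | zero => simp [ac_succ, ac_zero]; ring
  | succ j ih =>
    rw [ac_succ, ih, ac_succ]
    have h1 : (j : ℂ) + 1 ≠ 0 := Nat.cast_add_one_ne_zero j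
    have h2 : (j : ℂ) + 1 + 1 ≠ 0 := by
      have := Nat.cast_add_one_ne_zero (R := ℂ) (j + 1); push_cast at this; exact this
    push_cast
    field_simp
    ring

lemma YL_ladder (ν : ℂ) (hν : ν + 1 ≠ 0) {s : ℝ} (h0 : 0 ≤ s) (h1 : s < 1) :
    YL ((ν + 1) * (ν + 2)) s = (1 - 2 * s) * YL (ν * (ν + 1)) s + 2 * DL (ν * (ν + 1)) s / (ν + 1) := by
  have hdb : ∀ j, ‖dc (ν * (ν + 1)) (j + 1)‖ ≤ _ := fun j => dc_bound (ν * (ν + 1)) (j + 1)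
  have hab : ∀ j, ‖ac (ν * (ν + 1)) (j + 1)‖ ≤ _ := fun j => ac_bound3 (ν * (ν + 1)) (j + 1)
  have e1 : YL ((ν + 1) * (ν + 2)) s = 1 + s * psr (fun j => ac ((ν + 1) * (ν + 2)) (j + 1)) s := by
    unfold YL; rw [psr_shift (ac_bound3 _) h0 h1, ac_zero]
  have e2 : YL (ν * (ν + 1)) s = 1 + s * psr (fun j => ac (ν * (ν + 1)) (j + 1)) s := by
    unfold YL; rw [psr_shift (ac_bound3 _) h0 h1, ac_zero]
  have e3 : DL (ν * (ν + 1)) s = s * psr (fun j => dc (ν * (ν + 1)) (j + 1)) s := by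
    unfold DL; rw [psr_shift (dc_bound _) h0 h1]; simp [dc]
  have e4 : psr (fun j => ac ((ν + 1) * (ν + 2)) (j + 1)) s
      = psr (fun j => ac (ν * (ν + 1)) (j + 1)) s - 2 * YL (ν * (ν + 1)) s
        + 2 / (ν + 1) * psr (fun j => dc (ν * (ν + 1)) (j + 1)) s := by
    have h2 := psr_lin (ac_bound3 (ν * (ν + 1))) hdb (-2) (2 / (ν + 1)) h0 h1
    have hb2 : ∀ j, ‖(-2) * ac (ν * (ν + 1)) j + 2 / (ν + 1) * dc (ν * (ν + 1)) (j + 1)‖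
        ≤ 2 * (1 + Mb (ν * (ν + 1))) + ‖2 / (ν + 1)‖ * (‖ν * (ν + 1)‖ * (1 + Mb (ν * (ν + 1)))) := by
      intro j
      refine (norm_add_le _ _).trans ?_
      rw [norm_mul, norm_mul]
      have := ac_bound3 (ν * (ν + 1)) j
      have := hdb j
      simp only [norm_neg, Complex.norm_ofNat]
      gcongr
    have h3 := psr_lin hab hb2 1 1 h0 h1
    unfold YL
    rw [h2] at h3
    rw [show psr (fun j => ac (ν * (ν + 1)) (j + 1)) s - 2 * psr (ac (ν * (ν + 1))) s
        + 2 / (ν + 1) * psr (fun j => dc (ν * (ν + 1)) (j + 1)) s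
        = 1 * psr (fun j => ac (ν * (ν + 1)) (j + 1)) s + 1 * ((-2) * psr (ac (ν * (ν + 1))) s
        + 2 / (ν + 1) * psr (fun j => dc (ν * (ν + 1)) (j + 1)) s) by ring, ← h3]
    apply psr_congr
    intro j
    rw [ac_ladder, ac_succ]
    have h1 : (j : ℂ) + 1 ≠ 0 := Nat.cast_add_one_ne_zero j
    simp only [dc]
    field_simp
    ring
  rw [e1, e4, e3]
  linear_combination (-1 : ℂ) * e2

lemma YL_ladder_down (μ : ℂ) (hμ : μ ≠ 0) {s : ℝ} (h0 : 0 ≤ s) (h1 : s < 1) :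
    YL (μ * (μ - 1)) s = (1 - 2 * s) * YL (μ * (μ + 1)) s - 2 * DL (μ * (μ + 1)) s / μ := by
  have h := YL_ladder (-1 - μ) (by rw [show (-1 - μ + 1) = -μ by ring]; exact neg_ne_zero.2 hμ) h0 h1
  rw [show (-1 - μ + 1) * (-1 - μ + 2) = μ * (μ - 1) by ring,
    show (-1 - μ) * (-1 - μ + 1) = μ * (μ + 1) by ring, show (-1 - μ + 1) = -μ by ring, div_neg] at h
  rw [h]; ring

/-- a quarter power bound -/
lemma YL_bound_rpow (l : ℂ) {s : ℝ} (h0 : 0 ≤ s) (h1 : s < 1) :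
    ‖YL l s‖ ≤ (1 + 4 * Mb l) * (1 - s) ^ (-(1/4) : ℝ) := by
  have hu : 0 < 1 - s := by linarith
  have h2 : -Real.log (1 - s) ≤ 4 * (1 - s) ^ (-(1/4) : ℝ) := by
    have := Real.log_le_rpow_div (x := (1 - s)⁻¹) (by positivity) (show (0:ℝ) < 1/4 by norm_num)
    rw [Real.log_inv, Real.inv_rpow hu.le, ← Real.rpow_neg hu.le] at this
    linarith
  have h3 : 1 ≤ (1 - s) ^ (-(1/4) : ℝ) :=
    Real.one_le_rpow_of_pos_of_le_one_of_nonpos hu (by linarith) (by norm_num)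
  have := YL_bound_log l h0 h1
  have := Mb_nonneg l
  nlinarith

lemma dom_int : IntegrableOn (fun s : ℝ => (1 - s) ^ (-(1/2) : ℝ) * s ^ (-(1/4) : ℝ)) (Set.Ioo 0 1) := by
  have h := (Complex.betaIntegral_convergent (u := (3/4 : ℝ)) (v := (1/2 : ℝ)) (by rw [Complex.ofReal_re]; norm_num) (by rw [Complex.ofReal_re]; norm_num))
  rw [intervalIntegrable_iff_integrableOn_Ioo_of_le zero_le_one] at h
  refine h.norm.congr ?_
  refine (ae_restrict_iff' measurableSet_Ioo).2 (Filter.Eventually.of_forall ?_)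
  intro s hs
  have h1 : (1 : ℂ) - s = ((1 - s : ℝ) : ℂ) := by push_cast; ring
  simp only [h1]
  rw [norm_mul, Complex.norm_cpow_eq_rpow_re_of_pos hs.1, Complex.norm_cpow_eq_rpow_re_of_pos (by linarith [hs.2])]
  rw [mul_comm]
  congr 2 <;> rw [Complex.sub_re, Complex.ofReal_re, Complex.one_re] <;> norm_num

lemma YL_continuousOn (l : ℂ) : ContinuousOn (YL l) (Set.Ico 0 1) := fun s hs =>
  (YL_hasDerivAt' l hs.1 hs.2).continuousAt.continuousWithinAt
lemma DL_continuousOn (l : ℂ) : ContinuousOn (DL l) (Set.Ico 0 1) := fun s hs =>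
  (DL_hasDerivAt l hs.1 hs.2).continuousAt.continuousWithinAt

lemma cub_continuousOn (l : ℂ) : ContinuousOn (fun s : ℝ => YL l s ^ 2 * YL l (1 - s)) (Set.Ioo 0 1) := by
  have h1 : ContinuousOn (YL l) (Set.Ioo 0 1) := (YL_continuousOn l).mono Set.Ioo_subset_Ico_self
  have h2 : ContinuousOn (fun s : ℝ => YL l (1 - s)) (Set.Ioo 0 1) := by
    refine (YL_continuousOn l).comp (by fun_prop) ?_
    intro s hs; exact ⟨by linarith [hs.2], by linarith [hs.1]⟩
  exact (h1.pow 2).mul h2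

lemma cub_bound (l : ℂ) {s : ℝ} (hs : s ∈ Set.Ioo (0:ℝ) 1) :
    ‖YL l s ^ 2 * YL l (1 - s)‖ ≤ (1 + 4 * Mb l) ^ 3 * ((1 - s) ^ (-(1/2) : ℝ) * s ^ (-(1/4) : ℝ)) := by
  have h1 := YL_bound_rpow l hs.1.le hs.2
  have h2 := YL_bound_rpow l (s := 1 - s) (by linarith [hs.2]) (by linarith [hs.1])
  rw [sub_sub_cancel] at h2
  have hu : 0 < 1 - s := by linarith [hs.2]
  have hp := hs.1
  have e : (1 - s) ^ (-(1/2) : ℝ) = ((1 - s) ^ (-(1/4) : ℝ)) ^ 2 := by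
    rw [← Real.rpow_natCast, ← Real.rpow_mul hu.le]; norm_num
  have hM := Mb_nonneg l
  rw [norm_mul, norm_pow, e]
  calc ‖YL l s‖ ^ 2 * ‖YL l (1 - s)‖ ≤ ((1 + 4 * Mb l) * (1 - s) ^ (-(1/4) : ℝ)) ^ 2 * ((1 + 4 * Mb l) * s ^ (-(1/4) : ℝ)) := by
        gcongr
    _ = _ := by ring

lemma cub_int (l : ℂ) : IntegrableOn (fun s : ℝ => YL l s ^ 2 * YL l (1 - s)) (Set.Ioo 0 1) := by
  refine Integrable.mono' (dom_int.const_mul ((1 + 4 * Mb l) ^ 3)) 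
    ((cub_continuousOn l).aestronglyMeasurable measurableSet_Ioo) ?_
  exact (ae_restrict_iff' measurableSet_Ioo).2 (Filter.Eventually.of_forall fun s hs => cub_bound l hs)

noncomputable def bL (l : ℂ) : ℂ := ∫ s in Set.Ioo (0:ℝ) 1, YL l s ^ 2 * YL l (1 - s)

noncomputable def CC (μ : ℂ) (s : ℝ) : ℂ :=
  4 * s * (1 - s) * ((-12 * μ ^ 3 - 18 * μ ^ 2 - 10 * μ - 2) + (-6 * μ ^ 3 - 9 * μ ^ 2 - 7 * μ - 2) * (1 - 2 * s) ^ 2)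
      * (YL (μ * (μ + 1)) s ^ 2 * YL (μ * (μ + 1)) (1 - s))
    - 2 * (4 * s * (1 - s)) * (4 * μ + 2) * (1 - 2 * s) *
      (2 * (DL (μ * (μ + 1)) s * YL (μ * (μ + 1)) s * YL (μ * (μ + 1)) (1 - s))
        + YL (μ * (μ + 1)) s ^ 2 * (-DL (μ * (μ + 1)) (1 - s)))
    + 4 * (4 * s * (1 - s)) * (-3 * (2 * μ + 1)) *
      (DL (μ * (μ + 1)) s ^ 2 * YL (μ * (μ + 1)) (1 - s)
        + 2 * (DL (μ * (μ + 1)) s * YL (μ * (μ + 1)) s * (-DL (μ * (μ + 1)) (1 - s))))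
    - 8 * ((2 * μ + 1) / (μ * (μ + 1))) * (1 - 2 * s) * (DL (μ * (μ + 1)) s ^ 2 * (-DL (μ * (μ + 1)) (1 - s)))

lemma YL_refl_deriv (l : ℂ) {s : ℝ} (h0 : 0 < s) (h1 : s < 1) :
    HasDerivAt (fun s : ℝ => YL l (1 - s)) ((-DL l (1 - s)) / (s * (1 - s))) s := by
  have h := (YL_hasDerivAt l (s := 1 - s) (by linarith) (by linarith)).comp_const_sub 1 s
  refine h.congr_deriv ?_
  push_cast
  rw [sub_sub_cancel, neg_div, mul_comm]

lemma DL_refl_deriv (l : ℂ) {s : ℝ} (h0 : 0 < s) (h1 : s < 1) :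
    HasDerivAt (fun s : ℝ => DL l (1 - s)) (l * YL l (1 - s)) s := by
  have h := (DL_hasDerivAt l (s := 1 - s) (by linarith) (by linarith)).comp_const_sub 1 s
  refine h.congr_deriv ?_
  ring

set_option maxHeartbeats 2000000 in
lemma CC_deriv (μ : ℂ) (hμ : μ ≠ 0) (hμ1 : μ + 1 ≠ 0) {s : ℝ} (h0 : 0 < s) (h1 : s < 1) :
    HasDerivAt (CC μ) (2 * ((μ + 1) ^ 2 * (3 * μ + 2) * (3 * μ + 4) *
        (YL ((μ + 1) * (μ + 2)) s ^ 2 * YL ((μ + 1) * (μ + 2)) (1 - s))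
      - μ ^ 2 * (3 * μ - 1) * (3 * μ + 1) * (YL (μ * (μ - 1)) s ^ 2 * YL (μ * (μ - 1)) (1 - s)))) s := by
  have hs : HasDerivAt (fun s : ℝ => (s : ℂ)) 1 s := (hasDerivAt_id s).ofReal_comp
  have hf := YL_hasDerivAt (μ * (μ + 1)) h0 h1
  have hD := DL_hasDerivAt (μ * (μ + 1)) h0.le h1
  have hg := YL_refl_deriv (μ * (μ + 1)) h0 h1
  have hG := (DL_refl_deriv (μ * (μ + 1)) h0 h1).neg
  have hx := (hs.const_mul 2).const_sub 1
  have hw := (hs.const_mul 4).mul (hs.const_sub 1)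
  rw [YL_ladder μ hμ1 h0.le h1, YL_ladder μ hμ1 (s := 1 - s) (by linarith) (by linarith),
    YL_ladder_down μ hμ h0.le h1, YL_ladder_down μ hμ (s := 1 - s) (by linarith) (by linarith)]
  have hC := ((((hw.mul (((hx.pow 2).const_mul (-6 * μ ^ 3 - 9 * μ ^ 2 - 7 * μ - 2)).const_add
      (-12 * μ ^ 3 - 18 * μ ^ 2 - 10 * μ - 2))).mul ((hf.pow 2).mul hg)).sub
    ((((hw.const_mul 2).mul_const (4 * μ + 2)).mul hx).mul
      ((((hD.mul hf).mul hg).const_mul 2).add ((hf.pow 2).mul hG)))).add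
    (((hw.const_mul 4).mul_const (-3 * (2 * μ + 1))).mul
      (((hD.pow 2).mul hg).add (((hD.mul hf).mul hG).const_mul 2)))).sub
    ((hx.const_mul (8 * ((2 * μ + 1) / (μ * (μ + 1))))).mul ((hD.pow 2).mul hG))
  refine HasDerivAt.congr_deriv (f := CC μ) hC ?_
  simp only [Pi.mul_apply, Pi.add_apply, Pi.sub_apply, Pi.pow_apply, Pi.neg_apply]
  have h2 : (s : ℂ) ≠ 0 := by exact_mod_cast h0.ne'
  have h3 : (1 - s : ℂ) ≠ 0 := by
    have : (1 - s : ℝ) ≠ 0 := by linarith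
    exact_mod_cast this
  push_cast
  generalize YL (μ * (μ + 1)) s = f
  generalize YL (μ * (μ + 1)) (1 - s) = g
  generalize DL (μ * (μ + 1)) s = D
  generalize DL (μ * (μ + 1)) (1 - s) = G
  generalize (s : ℂ) = z at *
  field_simp
  ring

lemma mono_bounds {w f g D G : ℂ} {p q c : ℝ} (hp : 0 < p) (hp1 : p ≤ 1) (hq : 0 < q) (hq1 : q ≤ 1)
    (hc : 0 ≤ c)
    (hw : ‖w‖ = p ^ 4 * q ^ 4) (hf : ‖f‖ * q ≤ c) (hg : ‖g‖ * p ≤ c) (hD : ‖D‖ ≤ c * p ^ 4)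
    (hG : ‖G‖ ≤ c * q ^ 4) :
    ‖w * (f ^ 2 * g)‖ ≤ c ^ 3 * (p * q) ∧ ‖w * (D * f * g)‖ ≤ c ^ 3 * (p * q) ∧
    ‖w * (f ^ 2 * G)‖ ≤ c ^ 3 * (p * q) ∧ ‖w * (D ^ 2 * g)‖ ≤ c ^ 3 * (p * q) ∧
    ‖w * (D * f * G)‖ ≤ c ^ 3 * (p * q) ∧ ‖D ^ 2 * G‖ ≤ c ^ 3 * (p * q) := by
  have hpn : ∀ n : ℕ, p ^ n ≤ 1 := fun n => pow_le_one₀ hp.le hp1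
  have hqn : ∀ n : ℕ, q ^ n ≤ 1 := fun n => pow_le_one₀ hq.le hq1
  have key : ∀ m n : ℕ, c ^ 3 * (p * q) * (p ^ m * q ^ n) ≤ c ^ 3 * (p * q) := by
    intro m n
    apply mul_le_of_le_one_right (by positivity)
    exact mul_le_one₀ (hpn m) (by positivity) (hqn n)
  simp only [norm_mul, norm_pow, hw]
  refine ⟨?_, ?_, ?_, ?_, ?_, ?_⟩
  · calc p ^ 4 * q ^ 4 * (‖f‖ ^ 2 * ‖g‖) = p ^ 3 * q ^ 2 * ((‖f‖ * q) ^ 2 * (‖g‖ * p)) := by ring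
      _ ≤ p ^ 3 * q ^ 2 * (c ^ 2 * c) := by gcongr
      _ = c ^ 3 * (p * q) * (p ^ 2 * q ^ 1) := by ring
      _ ≤ _ := key _ _
  · calc p ^ 4 * q ^ 4 * (‖D‖ * ‖f‖ * ‖g‖) = p ^ 3 * q ^ 3 * (‖D‖ * (‖f‖ * q) * (‖g‖ * p)) := by ring
      _ ≤ p ^ 3 * q ^ 3 * ((c * p ^ 4) * c * c) := by gcongr
      _ = c ^ 3 * (p * q) * (p ^ 6 * q ^ 2) := by ring
      _ ≤ _ := key _ _
  · calc p ^ 4 * q ^ 4 * (‖f‖ ^ 2 * ‖G‖) = p ^ 4 * q ^ 2 * ((‖f‖ * q) ^ 2 * ‖G‖) := by ring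
      _ ≤ p ^ 4 * q ^ 2 * (c ^ 2 * (c * q ^ 4)) := by gcongr
      _ = c ^ 3 * (p * q) * (p ^ 3 * q ^ 5) := by ring
      _ ≤ _ := key _ _
  · calc p ^ 4 * q ^ 4 * (‖D‖ ^ 2 * ‖g‖) = p ^ 3 * q ^ 4 * (‖D‖ ^ 2 * (‖g‖ * p)) := by ring
      _ ≤ p ^ 3 * q ^ 4 * ((c * p ^ 4) ^ 2 * c) := by gcongr
      _ = c ^ 3 * (p * q) * (p ^ 10 * q ^ 3) := by ring
      _ ≤ _ := key _ _
  · calc p ^ 4 * q ^ 4 * (‖D‖ * ‖f‖ * ‖G‖) = p ^ 4 * q ^ 3 * (‖D‖ * (‖f‖ * q) * ‖G‖) := by ring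
      _ ≤ p ^ 4 * q ^ 3 * ((c * p ^ 4) * c * (c * q ^ 4)) := by gcongr
      _ = c ^ 3 * (p * q) * (p ^ 7 * q ^ 6) := by ring
      _ ≤ _ := key _ _
  · calc ‖D‖ ^ 2 * ‖G‖ ≤ (c * p ^ 4) ^ 2 * (c * q ^ 4) := by gcongr
      _ = c ^ 3 * (p * q) * (p ^ 7 * q ^ 3) := by ring
      _ ≤ _ := key _ _

lemma mono_bounds' (l : ℂ) {s : ℝ} (hs : s ∈ Set.Ioo (0:ℝ) 1) :
    ‖(s * (1 - s) : ℂ) * (YL l s ^ 2 * YL l (1 - s))‖ ≤ (1 + 4 * Mb l) ^ 3 * (s ^ (1/4 : ℝ) * (1 - s) ^ (1/4 : ℝ)) ∧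
    ‖(s * (1 - s) : ℂ) * (DL l s * YL l s * YL l (1 - s))‖ ≤ (1 + 4 * Mb l) ^ 3 * (s ^ (1/4 : ℝ) * (1 - s) ^ (1/4 : ℝ)) ∧
    ‖(s * (1 - s) : ℂ) * (YL l s ^ 2 * DL l (1 - s))‖ ≤ (1 + 4 * Mb l) ^ 3 * (s ^ (1/4 : ℝ) * (1 - s) ^ (1/4 : ℝ)) ∧
    ‖(s * (1 - s) : ℂ) * (DL l s ^ 2 * YL l (1 - s))‖ ≤ (1 + 4 * Mb l) ^ 3 * (s ^ (1/4 : ℝ) * (1 - s) ^ (1/4 : ℝ)) ∧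
    ‖(s * (1 - s) : ℂ) * (DL l s * YL l s * DL l (1 - s))‖ ≤ (1 + 4 * Mb l) ^ 3 * (s ^ (1/4 : ℝ) * (1 - s) ^ (1/4 : ℝ)) ∧
    ‖DL l s ^ 2 * DL l (1 - s)‖ ≤ (1 + 4 * Mb l) ^ 3 * (s ^ (1/4 : ℝ) * (1 - s) ^ (1/4 : ℝ)) := by
  obtain ⟨h0, h1⟩ := hs
  have hM := Mb_nonneg l
  have hu : 0 < 1 - s := by linarith
  have p4 : ∀ x : ℝ, 0 < x → (x ^ (1/4 : ℝ)) ^ 4 = x := by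
    intro x hx
    rw [← Real.rpow_natCast, ← Real.rpow_mul hx.le]; norm_num
  have pm : ∀ x : ℝ, 0 < x → x ^ (-(1/4) : ℝ) * x ^ (1/4 : ℝ) = 1 := by
    intro x hx
    rw [← Real.rpow_add hx]; norm_num
  have h1' := YL_bound_rpow l h0.le h1
  have h2' := YL_bound_rpow l (s := 1 - s) hu.le (by linarith)
  rw [sub_sub_cancel] at h2'
  have h3' := DL_bound l h0.le h1
  have h4' := DL_bound l (s := 1 - s) hu.le (by linarith)
  refine mono_bounds (Real.rpow_pos_of_pos h0 _) (Real.rpow_le_one h0.le h1.le (by norm_num))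
    (Real.rpow_pos_of_pos hu _) (Real.rpow_le_one hu.le (by linarith) (by norm_num)) (by positivity) ?_ ?_ ?_ ?_ ?_
  · rw [p4 _ h0, p4 _ hu]
    have : (s * (1 - s) : ℂ) = ((s * (1 - s) : ℝ) : ℂ) := by push_cast; ring
    rw [this, Complex.norm_real, Real.norm_of_nonneg (by positivity)]
  · calc _ ≤ (1 + 4 * Mb l) * (1 - s) ^ (-(1/4) : ℝ) * (1 - s) ^ (1/4 : ℝ) := by gcongr
      _ = _ := by rw [mul_assoc, pm _ hu, mul_one]
  · calc _ ≤ (1 + 4 * Mb l) * s ^ (-(1/4) : ℝ) * s ^ (1/4 : ℝ) := by gcongr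
      _ = _ := by rw [mul_assoc, pm _ h0, mul_one]
  · rw [p4 _ h0]; nlinarith
  · rw [p4 _ hu]; nlinarith

open Filter Topology in
lemma CC_tendsto (μ : ℂ) (F : Filter ℝ) (a : ℝ) (ha : a = 0 ∨ a = 1) (hF : F ≤ 𝓝 a)
    (hF2 : ∀ᶠ s in F, s ∈ Set.Ioo (0:ℝ) 1) : Tendsto (CC μ) F (𝓝 0) := by
  have hpq : Tendsto (fun s : ℝ => (1 + 4 * Mb (μ * (μ + 1))) ^ 3 * (s ^ (1/4 : ℝ) * (1 - s) ^ (1/4 : ℝ))) F (𝓝 0) := by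
    have hc : Continuous (fun s : ℝ => (1 + 4 * Mb (μ * (μ + 1))) ^ 3 * (s ^ (1/4 : ℝ) * (1 - s) ^ (1/4 : ℝ))) := by
      have h1 : Continuous (fun s : ℝ => s ^ (1/4 : ℝ)) := Real.continuous_rpow_const (by norm_num)
      have h2 : Continuous (fun s : ℝ => (1 - s) ^ (1/4 : ℝ)) := h1.comp (by fun_prop)
      fun_prop
    have := (hc.tendsto a).mono_left hF
    convert this using 2
    rcases ha with rfl | rfl <;> simp
  have sq : ∀ h : ℝ → ℂ, (∀ s ∈ Set.Ioo (0:ℝ) 1, ‖h s‖ ≤ (1 + 4 * Mb (μ * (μ + 1))) ^ 3 * (s ^ (1/4 : ℝ) * (1 - s) ^ (1/4 : ℝ))) →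
      Tendsto h F (𝓝 0) := fun h hh => squeeze_zero_norm' (hF2.mono fun s hs => hh s hs) hpq
  have t1 := sq _ (fun s hs => (mono_bounds' (μ * (μ + 1)) hs).1)
  have t2 := sq _ (fun s hs => (mono_bounds' (μ * (μ + 1)) hs).2.1)
  have t3 := sq _ (fun s hs => (mono_bounds' (μ * (μ + 1)) hs).2.2.1)
  have t4 := sq _ (fun s hs => (mono_bounds' (μ * (μ + 1)) hs).2.2.2.1)
  have t5 := sq _ (fun s hs => (mono_bounds' (μ * (μ + 1)) hs).2.2.2.2.1)
  have t6 := sq _ (fun s hs => (mono_bounds' (μ * (μ + 1)) hs).2.2.2.2.2)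
  have cont : ∀ h : ℝ → ℂ, Continuous h → Tendsto h F (𝓝 (h a)) := fun h hh => (hh.tendsto a).mono_left hF
  have c1 := cont (fun s => 4 * ((-12 * μ ^ 3 - 18 * μ ^ 2 - 10 * μ - 2) + (-6 * μ ^ 3 - 9 * μ ^ 2 - 7 * μ - 2) * (1 - 2 * s) ^ 2)) (by fun_prop)
  have c2 := cont (fun s => -16 * (4 * μ + 2) * (1 - 2 * s)) (by fun_prop)
  have c3 := cont (fun s => 8 * (4 * μ + 2) * (1 - 2 * s)) (by fun_prop)
  have c6 := cont (fun s => 8 * ((2 * μ + 1) / (μ * (μ + 1))) * (1 - 2 * s)) (by fun_prop)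
  have T := (((((c1.mul t1).add (c2.mul t2)).add (c3.mul t3)).add (t4.const_mul (16 * (-3 * (2 * μ + 1))))).add
    (t5.const_mul (-32 * (-3 * (2 * μ + 1))))).add (c6.mul t6)
  simp only [mul_zero, add_zero] at T
  refine T.congr fun s => ?_
  unfold CC
  ring

lemma bL_rec (μ : ℂ) (hμ : μ ≠ 0) (hμ1 : μ + 1 ≠ 0) :
    (μ + 1) ^ 2 * (3 * μ + 2) * (3 * μ + 4) * bL ((μ + 1) * (μ + 2))
      = μ ^ 2 * (3 * μ - 1) * (3 * μ + 1) * bL (μ * (μ - 1)) := by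
  have hIn1 := ((cub_int ((μ + 1) * (μ + 2))).const_mul ((μ + 1) ^ 2 * (3 * μ + 2) * (3 * μ + 4))).sub
    ((cub_int (μ * (μ - 1))).const_mul (μ ^ 2 * (3 * μ - 1) * (3 * μ + 1)))
  have hIn2 := hIn1.const_mul 2
  have h := integral_eq_sub_of_hasDerivAt_of_tendsto (a := 0) (b := 1) (f := CC μ) zero_lt_one
    (fun s hs => CC_deriv μ hμ hμ1 hs.1 hs.2)
    ((intervalIntegrable_iff_integrableOn_Ioo_of_le zero_le_one).2 hIn2)
    (CC_tendsto μ _ 0 (Or.inl rfl) nhdsWithin_le_nhds (Ioo_mem_nhdsGT zero_lt_one))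
    (CC_tendsto μ _ 1 (Or.inr rfl) nhdsWithin_le_nhds (Ioo_mem_nhdsLT zero_lt_one))
  rw [intervalIntegral.integral_of_le zero_le_one, integral_Ioc_eq_integral_Ioo] at h
  rw [MeasureTheory.integral_const_mul, MeasureTheory.integral_sub ((cub_int _).const_mul _) ((cub_int _).const_mul _),
    MeasureTheory.integral_const_mul, MeasureTheory.integral_const_mul] at h
  unfold bL
  rw [sub_zero] at h
  linear_combination h / 2

open Filter Topology in
lemma hol_integral {F : ℂ → ℝ → ℂ} {S : Set ℝ} (hS : MeasurableSet S) {g : ℝ → ℝ} {K : ℝ → ℝ}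
    (hg : IntegrableOn g S)
    (hK : ∀ R l s, ‖l‖ ≤ R → s ∈ S → ‖F l s‖ ≤ K R * g s)
    (hd : ∀ s ∈ S, Differentiable ℂ (fun l => F l s))
    (hm : ∀ l, AEStronglyMeasurable (F l) (volume.restrict S)) :
    Differentiable ℂ (fun l => ∫ s in S, F l s) := by
  intro l₀
  have hae : ∀ᵐ s ∂(volume.restrict S), s ∈ S := ae_restrict_mem hS
  have hder : ∀ s ∈ S, ∀ l, HasDerivAt (fun l => F l s) (deriv (fun l => F l s) l) l :=
    fun s hs l => (hd s hs l).hasDerivAt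
  refine (hasDerivAt_integral_of_dominated_loc_of_deriv_le (F := F)
    (F' := fun l s => deriv (fun l => F l s) l) (s := Metric.ball l₀ 1)
    (bound := fun s => K (‖l₀‖ + 2) * g s)
    (Metric.ball_mem_nhds l₀ one_pos) (Eventually.of_forall hm) ?_ ?_ ?_ (hg.const_mul _) ?_).2.differentiableAt
  · exact Integrable.mono' (hg.const_mul (K ‖l₀‖)) (hm l₀) (hae.mono fun s hs => hK _ _ s le_rfl hs)
  · refine aestronglyMeasurable_of_tendsto_ae (𝓝[≠] (0:ℂ)) (f := fun t s => t⁻¹ • (F (l₀ + t) s - F l₀ s)) ?_ ?_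
    · intro t
      exact ((hm (l₀ + t)).sub (hm l₀)).const_smul t⁻¹
    · exact hae.mono fun s hs => (hder s hs l₀).tendsto_slope_zero
  · refine hae.mono fun s hs l hl => ?_
    have h := Complex.norm_deriv_le_of_forall_mem_sphere_norm_le (c := l) (R := 1) (C := K (‖l₀‖ + 2) * g s) one_pos
      (hd s hs).diffContOnCl ?_
    · simpa using h
    · intro z hz
      refine hK _ _ s ?_ hs
      rw [mem_sphere_iff_norm] at hz
      rw [mem_ball_iff_norm] at hl
      calc ‖z‖ = ‖(z - l) + (l - l₀) + l₀‖ := by congr 1; ring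
        _ ≤ ‖z - l‖ + ‖l - l₀‖ + ‖l₀‖ := norm_add₃_le
        _ ≤ _ := by linarith
  · exact hae.mono fun s hs l _ => hder s hs l

lemma ac_diff (j : ℕ) : Differentiable ℂ (fun l => ac l j) := by
  induction j with
  | zero => simp only [ac_zero]; fun_prop
  | succ j ih =>
    simp only [ac_succ]
    fun_prop

lemma Mb_mono {l : ℂ} {R : ℝ} (h : ‖l‖ ≤ R) : Mb l ≤ R * Real.exp R := by
  unfold Mb
  have : 0 ≤ R := (norm_nonneg _).trans h
  gcongr

lemma YL_diff {s : ℝ} (h0 : 0 ≤ s) (h1 : s < 1) : Differentiable ℂ (fun l => YL l s) := by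
  intro l₀
  have h : DifferentiableOn ℂ (fun l => YL l s) (Metric.ball 0 (‖l₀‖ + 1)) := by
    unfold YL psr
    refine Complex.differentiableOn_tsum_of_summable_norm (u := fun j => (1 + (‖l₀‖ + 1) * Real.exp (‖l₀‖ + 1)) * s ^ j)
      ((summable_geometric_of_lt_one h0 h1).mul_left _) ?_ Metric.isOpen_ball ?_
    · intro j
      exact ((ac_diff j).mul_const _).differentiableOn
    · intro j w hw
      rw [norm_mul, norm_pow, Complex.norm_real, Real.norm_of_nonneg h0]
      rw [mem_ball_zero_iff] at hw
      have := ac_bound3 w j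
      have := Mb_mono hw.le
      gcongr
      linarith
  exact h.differentiableAt (Metric.isOpen_ball.mem_nhds (by simp))

lemma bL_diff : Differentiable ℂ bL := by
  refine hol_integral (K := fun R => (1 + 4 * (R * Real.exp R)) ^ 3) measurableSet_Ioo dom_int ?_ ?_ ?_
  · intro R l s hl hs
    refine (cub_bound l hs).trans ?_
    have := Mb_mono hl
    have := Mb_nonneg l
    have h1 : 0 ≤ 1 - s := by linarith [hs.2]
    have := hs.1.le
    gcongr
  · intro s hs
    exact ((YL_diff hs.1.le hs.2).pow 2).mul (YL_diff (by linarith [hs.2]) (by linarith [hs.1]))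
  · intro l
    exact (cub_continuousOn l).aestronglyMeasurable measurableSet_Ioo

lemma bL_zero : bL 0 = 1 := by
  unfold bL
  simp [YL_zero]

noncomputable def yr (c : ℝ) (s : ℝ) : ℝ := (YL (-(c : ℂ)) s).re
noncomputable def dr (c : ℝ) (s : ℝ) : ℝ := (DL (-(c : ℂ)) s).re

noncomputable def rc (c : ℝ) : ℕ → ℝ
  | 0 => 1
  | (j + 1) => rc c j * ((j : ℝ) * (j + 1) + c) / ((j : ℝ) + 1) ^ 2

lemma ac_eq_rc (c : ℝ) (j : ℕ) : ac (-(c : ℂ)) j = (rc c j : ℂ) := by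
  induction j with
  | zero => simp [ac_zero, rc]
  | succ j ih => rw [ac_succ, ih, rc]; push_cast; ring

lemma rc_nonneg {c : ℝ} (hc : 0 ≤ c) (j : ℕ) : 0 ≤ rc c j := by
  induction j with
  | zero => simp [rc]
  | succ j ih => rw [rc]; positivity

lemma ac_le_rc {l : ℂ} {c : ℝ} (h : ‖l‖ ≤ c) (j : ℕ) : ‖ac l j‖ ≤ rc c j := by
  have hc : 0 ≤ c := (norm_nonneg _).trans h
  induction j with
  | zero => simp [ac_zero, rc]
  | succ j ih =>
    rw [ac_succ, rc, norm_div, norm_mul, norm_pow]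
    have e1 : ‖(j : ℂ) + 1‖ = (j : ℝ) + 1 := by
      have : (j : ℂ) + 1 = ((j + 1 : ℕ) : ℂ) := by push_cast; ring
      rw [this, Complex.norm_natCast]; push_cast; ring
    have e2 : ‖(j : ℂ) * (j + 1) - l‖ ≤ (j : ℝ) * (j + 1) + c := by
      refine (norm_sub_le _ _).trans ?_
      rw [norm_mul, e1, Complex.norm_natCast]
      linarith
    have := rc_nonneg hc j
    rw [e1]
    gcongr

lemma rc_le {c : ℝ} (hc : 0 ≤ c) (j : ℕ) : rc c j ≤ 1 + Mb (-(c : ℂ)) := by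
  have h := ac_bound3 (-(c : ℂ)) j
  rw [ac_eq_rc, Complex.norm_real, Real.norm_of_nonneg (rc_nonneg hc j)] at h
  exact h

lemma rc_summable {c : ℝ} (hc : 0 ≤ c) {s : ℝ} (h0 : 0 ≤ s) (h1 : s < 1) :
    Summable (fun j => rc c j * s ^ j) := by
  refine Summable.of_nonneg_of_le (fun j => mul_nonneg (rc_nonneg hc j) (by positivity)) (fun j => ?_)
    ((summable_geometric_of_lt_one h0 h1).mul_left (1 + Mb (-(c : ℂ))))
  gcongr
  exact rc_le hc j

lemma yr_eq (c : ℝ) (s : ℝ) : yr c s = ∑' j, rc c j * s ^ j := by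
  have : YL (-(c : ℂ)) s = ((∑' j, rc c j * s ^ j : ℝ) : ℂ) := by
    unfold YL psr
    rw [Complex.ofReal_tsum]
    refine tsum_congr fun j => ?_
    rw [ac_eq_rc]; push_cast; rfl
  rw [yr, this, Complex.ofReal_re]

lemma YL_eq_yr (c : ℝ) (s : ℝ) : YL (-(c : ℂ)) s = (yr c s : ℂ) := by
  rw [yr_eq]
  unfold YL psr
  rw [Complex.ofReal_tsum]
  refine tsum_congr fun j => ?_
  rw [ac_eq_rc]; push_cast; rfl

lemma yr_nonneg {c : ℝ} (hc : 0 ≤ c) {s : ℝ} (h0 : 0 ≤ s) : 0 ≤ yr c s := by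
  rw [yr_eq]
  exact tsum_nonneg fun j => mul_nonneg (rc_nonneg hc j) (by positivity)

lemma YL_le_yr {l : ℂ} {c : ℝ} (h : ‖l‖ ≤ c) {s : ℝ} (h0 : 0 ≤ s) (h1 : s < 1) : ‖YL l s‖ ≤ yr c s := by
  have hc : 0 ≤ c := (norm_nonneg _).trans h
  rw [yr_eq]
  exact psr_norm_le h0 (ac_le_rc h) (rc_summable hc h0 h1)

lemma re_hasDerivAt {f : ℝ → ℂ} {f' : ℂ} {s : ℝ} (h : HasDerivAt f f' s) :
    HasDerivAt (fun s => (f s).re) f'.re s := Complex.reCLM.hasFDerivAt.comp_hasDerivAt s h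

lemma yr_hasDerivAt (c : ℝ) {s : ℝ} (h0 : 0 < s) (h1 : s < 1) :
    HasDerivAt (yr c) (dr c s / (s * (1 - s))) s := by
  refine (re_hasDerivAt (YL_hasDerivAt (-(c : ℂ)) h0 h1)).congr_deriv ?_
  have : (s * (1 - s) : ℂ) = ((s * (1 - s) : ℝ) : ℂ) := by push_cast; ring
  rw [this, Complex.div_ofReal_re]
  rfl

lemma dr_hasDerivAt (c : ℝ) {s : ℝ} (h0 : 0 ≤ s) (h1 : s < 1) :
    HasDerivAt (dr c) (c * yr c s) s := by
  refine (re_hasDerivAt (DL_hasDerivAt (-(c : ℂ)) h0 h1)).congr_deriv ?_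
  rw [neg_neg, Complex.re_ofReal_mul]
  rfl

lemma yr_at_zero (c : ℝ) : yr c 0 = 1 := by simp [yr, YL_at_zero]
lemma dr_at_zero (c : ℝ) : dr c 0 = 0 := by simp [dr, DL_at_zero]

lemma yr_cont0 (c : ℝ) : ContinuousAt (yr c) 0 :=
  (re_hasDerivAt (YL_hasDerivAt' (-(c : ℂ)) le_rfl one_pos)).continuousAt

lemma dr_bound (c : ℝ) {s : ℝ} (h0 : 0 ≤ s) (h1 : s < 1) : |dr c s| ≤ Mb (-(c : ℂ)) * s :=
  (Complex.abs_re_le_norm _).trans (DL_bound _ h0 h1)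

lemma dr_nonneg {c : ℝ} (hc : 0 ≤ c) {s : ℝ} (h0 : 0 ≤ s) (h1 : s < 1) : 0 ≤ dr c s := by
  have hmono : MonotoneOn (dr c) (Set.Ico 0 1) := by
    refine monotoneOn_of_deriv_nonneg (convex_Ico 0 1) ?_ ?_ ?_
    · exact fun t ht => (dr_hasDerivAt c ht.1 ht.2).continuousAt.continuousWithinAt
    · intro t ht
      rw [interior_Ico] at ht
      exact (dr_hasDerivAt c ht.1.le ht.2).differentiableAt.differentiableWithinAt
    · intro t ht
      rw [interior_Ico] at ht
      rw [(dr_hasDerivAt c ht.1.le ht.2).deriv]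
      exact mul_nonneg hc (yr_nonneg hc ht.1.le)
  have := hmono ⟨le_rfl, one_pos⟩ ⟨h0, h1⟩ h0
  rwa [dr_at_zero] at this

noncomputable def Th (s : ℝ) : ℝ := Real.arcsin (2 * s - 1) + π / 2

lemma Th_refl (s : ℝ) : Th s + Th (1 - s) = π := by
  unfold Th
  rw [show 2 * (1 - s) - 1 = -(2 * s - 1) by ring, Real.arcsin_neg]; ring

lemma Th_nonneg (s : ℝ) : 0 ≤ Th s := by
  unfold Th; linarith [Real.neg_pi_div_two_le_arcsin (2 * s - 1)]

lemma Th_le (s : ℝ) : Th s ≤ π := by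
  unfold Th; linarith [Real.arcsin_le_pi_div_two (2 * s - 1)]

lemma Th_zero : Th 0 = 0 := by simp [Th]
lemma Th_half : Th (1/2) = π / 2 := by simp [Th]

lemma Th_hasDerivAt {s : ℝ} (h0 : 0 < s) (h1 : s < 1) :
    HasDerivAt Th (1 / √(s * (1 - s))) s := by
  have h := (Real.hasDerivAt_arcsin (x := 2 * s - 1) (by linarith) (by linarith)).comp s
    (((hasDerivAt_id s).const_mul 2).sub_const 1)
  refine (h.add_const (π / 2)).congr_deriv ?_
  have e : √(1 - (2 * s - 1) ^ 2) = 2 * √(s * (1 - s)) := by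
    rw [show 1 - (2 * s - 1) ^ 2 = 2 ^ 2 * (s * (1 - s)) by ring, Real.sqrt_mul (by positivity),
      Real.sqrt_sq (by norm_num)]
  rw [e]
  have : 0 < √(s * (1 - s)) := Real.sqrt_pos.2 (mul_pos h0 (by linarith))
  field_simp

lemma Th_cont : Continuous Th := by unfold Th; fun_prop

lemma sqs_hasDerivAt {s : ℝ} (h0 : 0 < s) (h1 : s < 1) :
    HasDerivAt (fun s : ℝ => √(s * (1 - s))) ((1 - 2 * s) / (2 * √(s * (1 - s)))) s := by
  have h := ((hasDerivAt_id s).mul ((hasDerivAt_id s).const_sub 1)).sqrt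
    (by simp only [Pi.mul_apply, id]; exact (mul_pos h0 (by linarith)).ne')
  refine h.congr_deriv ?_
  simp only [Pi.mul_apply, id]
  ring

lemma expTh_hasDerivAt (κ : ℝ) {s : ℝ} (h0 : 0 < s) (h1 : s < 1) :
    HasDerivAt (fun s => Real.exp (-(κ * Th s))) (Real.exp (-(κ * Th s)) * (-(κ * (1 / √(s * (1 - s)))))) s :=
  (((Th_hasDerivAt h0 h1).const_mul κ).neg).exp

open Filter Topology in
lemma grow1 {κ : ℝ} (hκ : 0 < κ) {s : ℝ} (h0 : 0 < s) (h1 : s ≤ 1/2) :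
    dr (κ^2) s / √(s * (1 - s)) + κ * yr (κ^2) s ≤ κ * Real.exp (κ * Th s) := by
  set φ : ℝ → ℝ := fun s => (dr (κ^2) s / √(s * (1 - s)) + κ * yr (κ^2) s) * Real.exp (-(κ * Th s)) with hφ
  have hder : ∀ t ∈ Set.Ioc (0:ℝ) (1/2), ∃ d ≤ 0, HasDerivAt φ d t := by
    intro t ht
    have ht1 : t < 1 := by linarith [ht.2]
    have hσ : 0 < t * (1 - t) := mul_pos ht.1 (by linarith)
    have hr : 0 < √(t * (1 - t)) := Real.sqrt_pos.2 hσ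
    have hr2 : √(t * (1 - t)) ^ 2 = t * (1 - t) := Real.sq_sqrt hσ.le
    have h := (((dr_hasDerivAt (κ^2) ht.1.le ht1).div (sqs_hasDerivAt ht.1 ht1) hr.ne').add
      ((yr_hasDerivAt (κ^2) ht.1 ht1).const_mul κ)).mul (expTh_hasDerivAt κ ht.1 ht1)
    refine ⟨_, ?_, h⟩
    have hD := dr_nonneg (sq_nonneg κ) ht.1.le ht1
    simp only [Pi.add_apply, Pi.div_apply]
    rw [← hr2]
    set r := √(t * (1 - t))
    rw [Real.sqrt_sq hr.le]
    have e : ((κ ^ 2 * yr (κ ^ 2) t * r - dr (κ ^ 2) t * ((1 - 2 * t) / (2 * r))) / r ^ 2 + κ * (dr (κ ^ 2) t / r ^ 2)) * Real.exp (-(κ * Th t)) +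
        (dr (κ ^ 2) t / r + κ * yr (κ ^ 2) t) * (Real.exp (-(κ * Th t)) * -(κ * (1 / r)))
        = - (dr (κ ^ 2) t * (1 - 2 * t) / (2 * r ^ 3) * Real.exp (-(κ * Th t))) := by
      field_simp
      ring
    rw [e]
    have : 0 ≤ 1 - 2 * t := by linarith [ht.2]
    rw [neg_nonpos]
    positivity
  have hanti : AntitoneOn φ (Set.Ioc 0 (1/2)) := by
    refine antitoneOn_of_deriv_nonpos (convex_Ioc 0 (1/2)) ?_ ?_ ?_
    · intro t ht
      obtain ⟨d, _, h⟩ := hder t ht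
      exact h.continuousAt.continuousWithinAt
    · intro t ht
      obtain ⟨d, _, h⟩ := hder t (interior_subset ht)
      exact h.differentiableAt.differentiableWithinAt
    · intro t ht
      obtain ⟨d, hd, h⟩ := hder t (interior_subset ht)
      rw [h.deriv]; exact hd
  have hlim : Tendsto φ (𝓝[>] 0) (𝓝 κ) := by
    have a1 : Tendsto (fun t => dr (κ^2) t / √(t * (1 - t))) (𝓝[>] 0) (𝓝 0) := by
      have hz : Tendsto (fun t : ℝ => Mb (-((κ^2 : ℝ) : ℂ)) * (2 * √t)) (𝓝[>] 0) (𝓝 0) := by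
        have : Continuous (fun t : ℝ => Mb (-((κ^2 : ℝ) : ℂ)) * (2 * √t)) := by fun_prop
        have := (this.tendsto 0).mono_left (nhdsWithin_le_nhds (s := Set.Ioi 0))
        simpa using this
      refine squeeze_zero_norm' ?_ hz
      filter_upwards [Ioo_mem_nhdsGT (show (0:ℝ) < 1/2 by norm_num)] with t ht
      have hb := dr_bound (κ^2) ht.1.le (show t < 1 by linarith [ht.2])
      rw [norm_div, Real.norm_eq_abs, Real.norm_of_nonneg (Real.sqrt_nonneg _)]
      have hσ : 0 < t * (1 - t) := mul_pos ht.1 (by linarith [ht.2])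
      rw [div_le_iff₀ (Real.sqrt_pos.2 hσ)]
      refine hb.trans ?_
      rw [mul_assoc, mul_assoc]
      refine mul_le_mul_of_nonneg_left ?_ (Mb_nonneg _)
      rw [← Real.sqrt_mul ht.1.le]
      have : t / 2 ≤ √(t * (t * (1 - t))) := by
        apply Real.le_sqrt_of_sq_le
        nlinarith [ht.1, ht.2, sq_nonneg t]
      linarith
    have a2 : Tendsto (yr (κ^2)) (𝓝[>] 0) (𝓝 1) := by
      have := (yr_cont0 (κ^2)).tendsto.mono_left (nhdsWithin_le_nhds (s := Set.Ioi 0))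
      rwa [yr_at_zero] at this
    have a3 : Tendsto (fun s => Real.exp (-(κ * Th s))) (𝓝[>] 0) (𝓝 1) := by
      have hc : Continuous (fun s => Real.exp (-(κ * Th s))) := by
        have := Th_cont
        fun_prop
      have := (hc.tendsto 0).mono_left (nhdsWithin_le_nhds (s := Set.Ioi 0))
      simpa [Th_zero] using this
    have := (a1.add (a2.const_mul κ)).mul a3
    simpa using this
  have hle : φ s ≤ κ := by
    refine ge_of_tendsto hlim ?_
    filter_upwards [Ioo_mem_nhdsGT h0] with t ht
    exact hanti ⟨ht.1, by linarith [ht.2]⟩ ⟨h0, h1⟩ ht.2.le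
  simp only [hφ] at hle
  rw [Real.exp_neg, ← div_eq_mul_inv, div_le_iff₀ (Real.exp_pos _)] at hle
  exact hle

lemma grow2 {κ : ℝ} (hκ : 0 < κ) {s : ℝ} (h0 : 0 < s) (h1 : s ≤ 1/2) :
    yr (κ^2) s ≤ Real.exp (κ * Th s) := by
  have h := grow1 hκ h0 h1
  have hD := dr_nonneg (sq_nonneg κ) h0.le (show s < 1 by linarith)
  have : 0 ≤ dr (κ^2) s / √(s * (1 - s)) := by positivity
  have : κ * yr (κ^2) s ≤ κ * Real.exp (κ * Th s) := by linarith
  exact le_of_mul_le_mul_left this hκ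

lemma grow3 {κ : ℝ} (hκ : 0 < κ) {s : ℝ} (h0 : 1/2 ≤ s) (h1 : s < 1) :
    dr (κ^2) s ≤ κ / 2 * Real.exp (κ * Th s) := by
  set φ : ℝ → ℝ := fun s => (dr (κ^2) s + κ * (√(s * (1 - s)) * yr (κ^2) s)) * Real.exp (-(κ * Th s)) with hφ
  have hder : ∀ t ∈ Set.Ico (1/2:ℝ) 1, ∃ d ≤ 0, HasDerivAt φ d t := by
    intro t ht
    have ht0 : 0 < t := by linarith [ht.1]
    have hσ : 0 < t * (1 - t) := mul_pos ht0 (by linarith [ht.2])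
    have hr : 0 < √(t * (1 - t)) := Real.sqrt_pos.2 hσ
    have hr2 : √(t * (1 - t)) ^ 2 = t * (1 - t) := Real.sq_sqrt hσ.le
    have h := ((dr_hasDerivAt (κ^2) ht0.le ht.2).add
      (((sqs_hasDerivAt ht0 ht.2).mul (yr_hasDerivAt (κ^2) ht0 ht.2)).const_mul κ)).mul (expTh_hasDerivAt κ ht0 ht.2)
    refine ⟨_, ?_, h⟩
    have hY := yr_nonneg (sq_nonneg κ) ht0.le
    simp only [Pi.add_apply, Pi.mul_apply]
    rw [← hr2]
    set r := √(t * (1 - t))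
    rw [Real.sqrt_sq hr.le]
    have e : (κ ^ 2 * yr (κ ^ 2) t + κ * ((1 - 2 * t) / (2 * r) * yr (κ ^ 2) t + r * (dr (κ ^ 2) t / r ^ 2))) * Real.exp (-(κ * Th t)) +
        (dr (κ ^ 2) t + κ * (r * yr (κ ^ 2) t)) * (Real.exp (-(κ * Th t)) * -(κ * (1 / r)))
        = - (κ * ((2 * t - 1) / (2 * r) * yr (κ ^ 2) t) * Real.exp (-(κ * Th t))) := by
      field_simp
      ring
    rw [e]
    have : 0 ≤ 2 * t - 1 := by linarith [ht.1]
    rw [neg_nonpos]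
    positivity
  have hanti : AntitoneOn φ (Set.Ico (1/2) 1) := by
    refine antitoneOn_of_deriv_nonpos (convex_Ico (1/2) 1) ?_ ?_ ?_
    · intro t ht
      obtain ⟨d, _, h⟩ := hder t ht
      exact h.continuousAt.continuousWithinAt
    · intro t ht
      obtain ⟨d, _, h⟩ := hder t (interior_subset ht)
      exact h.differentiableAt.differentiableWithinAt
    · intro t ht
      obtain ⟨d, hd, h⟩ := hder t (interior_subset ht)
      rw [h.deriv]; exact hd
  have hle := hanti ⟨le_rfl, by norm_num⟩ ⟨h0, h1⟩ h0
  have hhalf : φ (1/2) ≤ κ / 2 := by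
    have h := grow1 hκ (show (0:ℝ) < 1/2 by norm_num) le_rfl
    have e : √((1/2:ℝ) * (1 - 1/2)) = 1/2 := by
      rw [show (1/2:ℝ) * (1 - 1/2) = (1/2) ^ 2 by norm_num, Real.sqrt_sq (by norm_num)]
    simp only [hφ]
    rw [e] at h ⊢
    rw [Real.exp_neg, ← div_eq_mul_inv, div_le_iff₀ (Real.exp_pos _)]
    linarith
  have hY := yr_nonneg (sq_nonneg κ) (show 0 ≤ s by linarith)
  have hle2 : φ s ≤ κ / 2 := hle.trans hhalf
  simp only [hφ] at hle2
  rw [Real.exp_neg, ← div_eq_mul_inv, div_le_iff₀ (Real.exp_pos _)] at hle2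
  have : 0 ≤ κ * (√(s * (1 - s)) * yr (κ^2) s) := by positivity
  linarith

lemma grow4 {κ : ℝ} (hκ : 0 < κ) {s : ℝ} (h0 : 0 < s) (h1 : s < 1) :
    yr (κ^2) s ≤ Real.exp (κ * Th s) * (1 - κ * Real.log (1 - s)) := by
  have hlog : ∀ t : ℝ, 0 < t → t < 1 → Real.log (1 - t) ≤ 0 := fun t ht ht1 =>
    Real.log_nonpos (by linarith) (by linarith)
  have aux : ∀ t : ℝ, 0 < t → t ≤ 1/2 → yr (κ^2) t ≤ Real.exp (κ * Th t) * (1 - κ * Real.log (1 - t)) := by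
    intro t ht ht1
    refine (grow2 hκ ht ht1).trans (le_mul_of_one_le_right (Real.exp_pos _).le ?_)
    nlinarith [hlog t ht (by linarith)]
  rcases le_total s (1/2) with h | h
  · exact aux s h0 h
  set ψ : ℝ → ℝ := fun t => Real.exp (κ * Th t) * (1 - κ * Real.log (1 - t)) - yr (κ^2) t with hψ
  have hder : ∀ t ∈ Set.Ico (1/2:ℝ) 1, ∃ d, 0 ≤ d ∧ HasDerivAt ψ d t := by
    intro t ht
    have ht0 : 0 < t := by linarith [ht.1]
    have hu : 0 < 1 - t := by linarith [ht.2]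
    have hl := (((hasDerivAt_id t).const_sub 1).log (by simpa using hu.ne')).const_mul κ
    have h := ((((Th_hasDerivAt ht0 ht.2).const_mul κ).exp).mul (hl.const_sub 1)).sub (yr_hasDerivAt (κ^2) ht0 ht.2)
    refine ⟨_, ?_, h⟩
    have hD := grow3 hκ ht.1 ht.2
    have hlg := hlog t ht0 ht.2
    simp only [id]
    have hd2 : dr (κ^2) t / (t * (1 - t)) ≤ Real.exp (κ * Th t) * (κ / (1 - t)) := by
      rw [div_le_iff₀ (by positivity)]
      have : Real.exp (κ * Th t) * (κ / (1 - t)) * (t * (1 - t)) = Real.exp (κ * Th t) * κ * t := by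
        field_simp
      rw [this]
      have : 0 < Real.exp (κ * Th t) * κ := by positivity
      nlinarith [ht.1]
    have h3 : 0 ≤ Real.exp (κ * Th t) * (κ * (1 / √(t * (1 - t)))) * (1 - κ * Real.log (1 - t)) := by
      have : 0 ≤ 1 - κ * Real.log (1 - t) := by nlinarith
      positivity
    have h4 : Real.exp (κ * Th t) * -(κ * (-1 / (1 - t))) = Real.exp (κ * Th t) * (κ / (1 - t)) := by
      ring
    rw [h4]
    linarith
  have hmono : MonotoneOn ψ (Set.Ico (1/2) 1) := by
    refine monotoneOn_of_deriv_nonneg (convex_Ico (1/2) 1) ?_ ?_ ?_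
    · intro t ht
      obtain ⟨d, _, h⟩ := hder t ht
      exact h.continuousAt.continuousWithinAt
    · intro t ht
      obtain ⟨d, _, h⟩ := hder t (interior_subset ht)
      exact h.differentiableAt.differentiableWithinAt
    · intro t ht
      obtain ⟨d, hd, h⟩ := hder t (interior_subset ht)
      rw [h.deriv]; exact hd
  have h2 := hmono ⟨le_rfl, by norm_num⟩ ⟨h, h1⟩ h
  have h3 := aux (1/2) (by norm_num) le_rfl
  simp only [hψ] at h2
  linarith

lemma YL_grow {κ : ℝ} (hκ : 0 < κ) {l : ℂ} (hl : ‖l‖ ≤ κ^2) {s : ℝ} (h0 : 0 < s) (h1 : s < 1) :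
    ‖YL l s‖ ≤ (1 + 4 * κ) * Real.exp (κ * Th s) * (1 - s) ^ (-(1/4) : ℝ) := by
  refine (YL_le_yr hl h0.le h1).trans ((grow4 hκ h0 h1).trans ?_)
  have hu : 0 < 1 - s := by linarith
  have h2 : -Real.log (1 - s) ≤ 4 * (1 - s) ^ (-(1/4) : ℝ) := by
    have := Real.log_le_rpow_div (x := (1 - s)⁻¹) (by positivity) (show (0:ℝ) < 1/4 by norm_num)
    rw [Real.log_inv, Real.inv_rpow hu.le, ← Real.rpow_neg hu.le] at this
    linarith
  have h3 : 1 ≤ (1 - s) ^ (-(1/4) : ℝ) :=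
    Real.one_le_rpow_of_pos_of_le_one_of_nonpos hu (by linarith) (by norm_num)
  have h4 : 1 - κ * Real.log (1 - s) ≤ (1 + 4 * κ) * (1 - s) ^ (-(1/4) : ℝ) := by nlinarith
  calc Real.exp (κ * Th s) * (1 - κ * Real.log (1 - s)) ≤ Real.exp (κ * Th s) * ((1 + 4 * κ) * (1 - s) ^ (-(1/4) : ℝ)) := by
        gcongr
    _ = _ := by ring

lemma bL_grow : ∃ C : ℝ, 0 ≤ C ∧ ∀ (κ : ℝ) (l : ℂ), 0 < κ → ‖l‖ ≤ κ^2 →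
    ‖bL l‖ ≤ C * (1 + 4 * κ) ^ 3 * Real.exp (2 * π * κ) := by
  refine ⟨∫ s in Set.Ioo (0:ℝ) 1, (1 - s) ^ (-(1/2) : ℝ) * s ^ (-(1/4) : ℝ), ?_, ?_⟩
  · refine setIntegral_nonneg measurableSet_Ioo fun s hs => ?_
    have := hs.1.le
    have : 0 ≤ 1 - s := by linarith [hs.2]
    positivity
  · intro κ l hκ hl
    unfold bL
    rw [mul_assoc, mul_comm, ← MeasureTheory.integral_const_mul]
    refine norm_integral_le_of_norm_le (dom_int.const_mul _) ?_
    refine (ae_restrict_iff' measurableSet_Ioo).2 (Filter.Eventually.of_forall fun s hs => ?_)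
    have h1 := YL_grow hκ hl hs.1 hs.2
    have h2 := YL_grow hκ hl (s := 1 - s) (by linarith [hs.2]) (by linarith [hs.1])
    rw [sub_sub_cancel] at h2
    have hu : 0 < 1 - s := by linarith [hs.2]
    have hp := hs.1
    have e : (1 - s) ^ (-(1/2) : ℝ) = ((1 - s) ^ (-(1/4) : ℝ)) ^ 2 := by
      rw [← Real.rpow_natCast, ← Real.rpow_mul hu.le]; norm_num
    rw [norm_mul, norm_pow, e]
    have hexp : Real.exp (κ * Th s) ^ 2 * Real.exp (κ * Th (1 - s)) ≤ Real.exp (2 * π * κ) := by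
      rw [← Real.exp_nat_mul, ← Real.exp_add]
      apply Real.exp_le_exp.2
      have := Th_refl s
      have := Th_le s
      push_cast
      nlinarith
    have hpos : 0 ≤ (1 + 4 * κ) ^ 3 * (((1 - s) ^ (-(1/4) : ℝ)) ^ 2 * s ^ (-(1/4) : ℝ)) := by positivity
    calc ‖YL l s‖ ^ 2 * ‖YL l (1 - s)‖ ≤ ((1 + 4 * κ) * Real.exp (κ * Th s) * (1 - s) ^ (-(1/4) : ℝ)) ^ 2 *
          ((1 + 4 * κ) * Real.exp (κ * Th (1 - s)) * s ^ (-(1/4) : ℝ)) := by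
          gcongr
      _ = (1 + 4 * κ) ^ 3 * (((1 - s) ^ (-(1/4) : ℝ)) ^ 2 * s ^ (-(1/4) : ℝ)) * (Real.exp (κ * Th s) ^ 2 * Real.exp (κ * Th (1 - s))) := by ring
      _ ≤ (1 + 4 * κ) ^ 3 * (((1 - s) ^ (-(1/4) : ℝ)) ^ 2 * s ^ (-(1/4) : ℝ)) * Real.exp (2 * π * κ) := by gcongr
      _ = _ := by ring

lemma gamma_ratio {δ s : ℝ} (hδ : 0 < δ) (hs : 0 < s) :
    ∃ K : ℝ, 0 ≤ K ∧ ∀ z : ℂ, δ ≤ z.re → ‖Complex.Gamma z‖ ≤ K * ‖Complex.Gamma (z + s)‖ := by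
  have hI := Complex.betaIntegral_convergent (u := (δ : ℂ)) (v := (s : ℂ)) (by simpa using hδ) (by simpa using hs)
  rw [intervalIntegrable_iff_integrableOn_Ioo_of_le zero_le_one] at hI
  have hGs : 0 < ‖Complex.Gamma (s : ℂ)‖ := norm_pos_iff.2 (Complex.Gamma_ne_zero_of_re_pos (by simpa using hs))
  refine ⟨(∫ x in Set.Ioo (0:ℝ) 1, ‖(x : ℂ) ^ ((δ : ℂ) - 1) * (1 - (x : ℂ)) ^ ((s : ℂ) - 1)‖) / ‖Complex.Gamma (s : ℂ)‖,
    by positivity, ?_⟩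
  intro z hz
  have h := Complex.Gamma_mul_Gamma_eq_betaIntegral (s := z) (t := (s : ℂ)) (by linarith) (by simpa using hs)
  have hB : ‖Complex.betaIntegral z s‖ ≤ ∫ x in Set.Ioo (0:ℝ) 1, ‖(x : ℂ) ^ ((δ : ℂ) - 1) * (1 - (x : ℂ)) ^ ((s : ℂ) - 1)‖ := by
    unfold Complex.betaIntegral
    rw [intervalIntegral.integral_of_le zero_le_one, integral_Ioc_eq_integral_Ioo]
    refine norm_integral_le_of_norm_le hI.norm ?_
    refine (ae_restrict_iff' measurableSet_Ioo).2 (Filter.Eventually.of_forall fun x hx => ?_)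
    rw [norm_mul, norm_mul, Complex.norm_cpow_eq_rpow_re_of_pos hx.1, Complex.norm_cpow_eq_rpow_re_of_pos hx.1]
    refine mul_le_mul_of_nonneg_right ?_ (norm_nonneg _)
    refine Real.rpow_le_rpow_of_exponent_ge hx.1 hx.2.le ?_
    simp only [Complex.sub_re, Complex.one_re, Complex.ofReal_re]
    linarith
  have h2 : ‖Complex.Gamma z‖ * ‖Complex.Gamma (s : ℂ)‖ = ‖Complex.Gamma (z + s)‖ * ‖Complex.betaIntegral z s‖ := by
    rw [← norm_mul, ← norm_mul, h]
  rw [div_mul_eq_mul_div, le_div_iff₀ hGs, h2, mul_comm]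
  gcongr

lemma cos_lower {z : ℂ} (h : 1 ≤ |z.im|) : Real.exp |z.im| ≤ 4 * ‖Complex.cos z‖ := by
  have aux : ∀ w : ℂ, 1 ≤ w.im → Real.exp w.im ≤ 4 * ‖Complex.cos w‖ := by
    intro w hw
    have e1 : ‖Complex.exp (-w * Complex.I)‖ = Real.exp w.im := by
      rw [Complex.norm_exp]; simp
    have e2 : ‖Complex.exp (w * Complex.I)‖ = Real.exp (-w.im) := by
      rw [Complex.norm_exp]; simp
    have e3 : Complex.exp (-w * Complex.I) = 2 * Complex.cos w - Complex.exp (w * Complex.I) := by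
      rw [Complex.two_cos]; ring
    have e4 : Real.exp w.im ≤ 2 * ‖Complex.cos w‖ + Real.exp (-w.im) := by
      rw [← e1, e3]
      refine (norm_sub_le _ _).trans ?_
      rw [e2, norm_mul]; simp
    have e5 : 2 * Real.exp (-w.im) ≤ Real.exp w.im := by
      have h1 : 2 ≤ Real.exp (2 * w.im) := by linarith [Real.add_one_le_exp (2 * w.im)]
      have h2 : Real.exp w.im = Real.exp (2 * w.im) * Real.exp (-w.im) := by
        rw [← Real.exp_add]; congr 1; ring
      rw [h2]
      gcongr
    linarith
  rcases le_or_gt 0 z.im with h0 | h0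
  · rw [abs_of_nonneg h0] at h ⊢; exact aux z h
  · rw [abs_of_neg h0] at h ⊢
    have := aux (-z) (by simpa using h)
    simpa using this

noncomputable def Nf (ν : ℂ) : ℂ := bL (ν * (ν + 1)) *
  (Complex.Gamma ((1 - ν) / 2) ^ 2 * Complex.Gamma (1 + ν / 2) ^ 2 * Complex.Gamma (3 * (1 + ν) / 2)
    * Complex.Gamma (1 - 3 * ν / 2) * (Complex.Gamma ((1 + ν) / 2))⁻¹ * (Complex.Gamma (1 - ν / 2))⁻¹)

lemma Nf_diff {ν : ℂ} (h : |ν.re| < 2/3) : DifferentiableAt ℂ Nf ν := by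
  rw [abs_lt] at h
  have ne : ∀ z : ℂ, 0 < z.re → ∀ m : ℕ, z ≠ -m := by
    intro z hz m hm
    rw [hm] at hz
    simp at hz
    have : (0:ℝ) ≤ m := Nat.cast_nonneg m
    linarith
  have gd : ∀ z : ℂ, 0 < z.re → DifferentiableAt ℂ Complex.Gamma z := fun z hz =>
    Complex.differentiableAt_Gamma z (ne z hz)
  have g1 : DifferentiableAt ℂ (fun ν : ℂ => Complex.Gamma ((1 - ν) / 2)) ν :=
    (gd _ (by simp; linarith)).comp ν (by fun_prop)
  have g2 : DifferentiableAt ℂ (fun ν : ℂ => Complex.Gamma (1 + ν / 2)) ν :=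
    (gd _ (by simp; linarith)).comp ν (by fun_prop)
  have g3 : DifferentiableAt ℂ (fun ν : ℂ => Complex.Gamma (3 * (1 + ν) / 2)) ν :=
    (gd _ (by simp; linarith)).comp ν (by fun_prop)
  have g4 : DifferentiableAt ℂ (fun ν : ℂ => Complex.Gamma (1 - 3 * ν / 2)) ν :=
    (gd _ (by simp; linarith)).comp ν (by fun_prop)
  have g5 : DifferentiableAt ℂ (fun ν : ℂ => (Complex.Gamma ((1 + ν) / 2))⁻¹) ν :=
    (Complex.differentiable_one_div_Gamma ((1 + ν) / 2)).comp ν (f := fun ν : ℂ => (1 + ν) / 2) (by fun_prop)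
  have g6 : DifferentiableAt ℂ (fun ν : ℂ => (Complex.Gamma (1 - ν / 2))⁻¹) ν :=
    (Complex.differentiable_one_div_Gamma (1 - ν / 2)).comp ν (f := fun ν : ℂ => 1 - ν / 2) (by fun_prop)
  have gb : DifferentiableAt ℂ (fun ν : ℂ => bL (ν * (ν + 1))) ν :=
    (bL_diff _).comp ν (f := fun ν : ℂ => ν * (ν + 1)) (by fun_prop)
  unfold Nf
  exact gb.mul ((((((g1.pow 2).mul (g2.pow 2)).mul g3).mul g4).mul g5).mul g6)

lemma Nf_symA {ν : ℂ} (h1 : -(2/3) < ν.re) (h2 : ν.re < -(1/3)) : Nf (-1 - ν) = Nf ν := by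
  have hν : ν ≠ 0 := by rintro rfl; simp at h2; linarith
  have hν1 : 1 + ν ≠ 0 := by
    intro h
    have : (1 + ν).re = 0 := by rw [h]; simp
    simp at this; linarith
  unfold Nf
  have e0 : (-1 - ν) * (-1 - ν + 1) = ν * (ν + 1) := by ring
  have e1 : (1 - (-1 - ν)) / 2 = 1 + ν / 2 := by ring
  have e2 : 1 + (-1 - ν) / 2 = (1 - ν) / 2 := by ring
  have e3 : 3 * (1 + (-1 - ν)) / 2 = -3 * ν / 2 := by ring
  have e4 : 1 - 3 * (-1 - ν) / 2 = 3 * (1 + ν) / 2 + 1 := by ring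
  have e5 : (1 + (-1 - ν)) / 2 = -ν / 2 := by ring
  have e6 : 1 - (-1 - ν) / 2 = (1 + ν) / 2 + 1 := by ring
  have e7 : 1 - 3 * ν / 2 = -3 * ν / 2 + 1 := by ring
  have e8 : 1 - ν / 2 = -ν / 2 + 1 := by ring
  rw [e0, e1, e2, e3, e4, e5, e6, e7, e8]
  rw [Complex.Gamma_add_one (3 * (1 + ν) / 2) (by simpa using hν1),
    Complex.Gamma_add_one ((1 + ν) / 2) (by simpa using hν1),
    Complex.Gamma_add_one (-3 * ν / 2) (by simpa using hν),
    Complex.Gamma_add_one (-ν / 2) (by simpa using hν), mul_inv, mul_inv]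
  generalize (Complex.Gamma ((1 + ν) / 2))⁻¹ = A
  generalize (Complex.Gamma (-ν / 2))⁻¹ = B
  field_simp

lemma Nf_symB {u : ℂ} (h1 : 1/3 < u.re) (h2 : u.re < 2/3) : Nf (1 - u) = Nf u := by
  have hre : ∀ z : ℂ, z.re ≠ 0 → z ≠ 0 := by rintro z hz rfl; simp at hz
  have hrec := bL_rec (u - 1) (hre _ (by simp; linarith)) (hre _ (by simp; linarith))
  rw [show (u - 1 + 1) * (u - 1 + 2) = u * (u + 1) by ring,
    show (u - 1) * (u - 1 - 1) = (1 - u) * (1 - u + 1) by ring] at hrec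
  unfold Nf
  have e1 : (1 - (1 - u)) / 2 = u / 2 := by ring
  have e2 : 1 + (1 - u) / 2 = (1 - u) / 2 + 1 := by ring
  have e3 : 3 * (1 + (1 - u)) / 2 = (1 - 3 * u / 2) + 1 + 1 := by ring
  have e4 : 1 - 3 * (1 - u) / 2 = 3 * u / 2 - 1 / 2 := by ring
  have e5 : (1 + (1 - u)) / 2 = 1 - u / 2 := by ring
  have e6 : 1 - (1 - u) / 2 = (1 + u) / 2 := by ring
  have e7 : 3 * (1 + u) / 2 = (3 * u / 2 - 1 / 2) + 1 + 1 := by ring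
  have e8 : 1 + u / 2 = u / 2 + 1 := by ring
  rw [e1, e2, e3, e4, e5, e6, e7, e8]
  rw [Complex.Gamma_add_one ((1 - u) / 2) (hre _ (by simp; linarith)),
    Complex.Gamma_add_one (u / 2) (hre _ (by simp; linarith)),
    Complex.Gamma_add_one (1 - 3 * u / 2 + 1) (hre _ (by simp; linarith)),
    Complex.Gamma_add_one (1 - 3 * u / 2) (hre _ (by simp; linarith)),
    Complex.Gamma_add_one (3 * u / 2 - 1 / 2 + 1) (hre _ (by simp; linarith)),
    Complex.Gamma_add_one (3 * u / 2 - 1 / 2) (hre _ (by simp; linarith))]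
  generalize (Complex.Gamma ((1 + u) / 2))⁻¹ = A
  generalize (Complex.Gamma (1 - u / 2))⁻¹ = B
  generalize Complex.Gamma (u / 2) = C at *
  generalize Complex.Gamma ((1 - u) / 2) = D at *
  generalize Complex.Gamma (1 - 3 * u / 2) = E at *
  generalize Complex.Gamma (3 * u / 2 - 1 / 2) = F at *
  linear_combination (-1 / 16) * C ^ 2 * D ^ 2 * E * F * A * B * hrec

lemma Nf_zero : Nf 0 = π / 2 := by
  unfold Nf
  simp only [zero_mul, bL_zero, sub_zero, zero_div, add_zero, mul_zero, Complex.Gamma_one, inv_one, mul_one, one_mul, one_pow]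
  have h : Complex.Gamma (3 / 2) = (1/2) * Complex.Gamma (1/2) := by
    rw [← Complex.Gamma_add_one (1/2) (by norm_num)]; norm_num
  rw [h, Complex.Gamma_one_half_eq]
  have h2 : ((π : ℂ) ^ (1/2 : ℂ)) ^ 2 = π := by
    rw [← Complex.cpow_nat_mul]; norm_num
  have h3 : ((π : ℂ) ^ (1/2 : ℂ)) ≠ 0 := by
    intro h; rw [h] at h2
    have : (π : ℂ) ≠ 0 := by exact_mod_cast Real.pi_ne_zero
    apply this; rw [← h2]; norm_num
  field_simp
  rw [h2]

lemma gamma_cos {z c : ℂ} (hc : c = π * z - π / 2) (h : 1 ≤ |c.im|) :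
    ‖Complex.Gamma z‖ * ‖Complex.Gamma (1 - z)‖ ≤ 4 * π * Real.exp (-|c.im|) := by
  have hs : Complex.sin (π * z) = Complex.cos c := by
    rw [hc, Complex.cos_sub_pi_div_two]
  have hl := cos_lower h
  have hpos : 0 < ‖Complex.cos c‖ := by
    have := Real.exp_pos |c.im|; linarith
  rw [← norm_mul, Complex.Gamma_mul_Gamma_one_sub, hs, norm_div, Complex.norm_real, Real.norm_of_nonneg Real.pi_pos.le,
    Real.exp_neg, div_le_iff₀ hpos]
  have he := Real.exp_pos |c.im|
  have this : Real.exp |c.im| / Real.exp |c.im| ≤ 4 * ‖Complex.cos c‖ / Real.exp |c.im| := by gcongr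
  rw [div_self he.ne'] at this
  have hpi := Real.pi_pos
  calc π = π * 1 := (mul_one _).symm
    _ ≤ π * (4 * ‖Complex.cos c‖ / Real.exp |c.im|) := by gcongr
    _ = _ := by field_simp

lemma combine_bound {g1 g2 g34 h1 h2 K1 K2 w E1 E2 : ℝ} (p1 : 0 ≤ g1) (p2 : 0 ≤ g2) (p34 : 0 ≤ g34)
    (q1 : 0 < h1) (q2 : 0 < h2) (hK1 : 0 ≤ K1) (hK2 : 0 ≤ K2) (hw : 0 ≤ w) (hE1 : 0 ≤ E1)
    (a1 : g1 ≤ K1 * h2) (a2 : g2 ≤ K2 * (w * h1)) (a3 : g1 * h1 ≤ E1) (a4 : g34 ≤ E2) :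
    g1 ^ 2 * g2 ^ 2 * g34 * h1⁻¹ * h2⁻¹ ≤ K1 * (K2 * w) ^ 2 * E1 * E2 := by
  calc g1 ^ 2 * g2 ^ 2 * g34 * h1⁻¹ * h2⁻¹ = g1 * g1 * g2 ^ 2 * g34 * h1⁻¹ * h2⁻¹ := by ring
    _ ≤ (K1 * h2) * g1 * (K2 * (w * h1)) ^ 2 * g34 * h1⁻¹ * h2⁻¹ := by gcongr
    _ = K1 * (K2 * w) ^ 2 * (g1 * h1) * g34 := by field_simp
    _ ≤ _ := by gcongr

lemma norm_le_strip {ν : ℂ} (h : |ν.re| ≤ 1/2) : ‖ν‖ ≤ 1/2 + |ν.im| := by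
  have := Complex.norm_le_abs_re_add_abs_im ν
  linarith

lemma norm_lin (a b : ℝ) (ν : ℂ) (ha : 0 ≤ a) (hb : 0 ≤ b) : ‖(a : ℂ) + b * ν‖ ≤ a + b * ‖ν‖ ∧ ‖(a : ℂ) - b * ν‖ ≤ a + b * ‖ν‖ := by
  constructor
  · refine (norm_add_le _ _).trans_eq ?_
    rw [norm_mul, Complex.norm_real, Complex.norm_real, Real.norm_of_nonneg ha, Real.norm_of_nonneg hb]
  · refine (norm_sub_le _ _).trans_eq ?_
    rw [norm_mul, Complex.norm_real, Complex.norm_real, Real.norm_of_nonneg ha, Real.norm_of_nonneg hb]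

lemma Nf_grow_far : ∃ C : ℝ, 0 ≤ C ∧ ∀ ν : ℂ, |ν.re| ≤ 1/2 → 1 ≤ |ν.im| → ‖Nf ν‖ ≤ C * (1 + |ν.im|) ^ 8 := by
  obtain ⟨C0, hC0, hb⟩ := bL_grow
  obtain ⟨K1, hK1, r1⟩ := gamma_ratio (δ := 1/4) (s := 1/2) (by norm_num) (by norm_num)
  obtain ⟨K2, hK2, r2⟩ := gamma_ratio (δ := 3/4) (s := 1/2) (by norm_num) (by norm_num)
  obtain ⟨K3, hK3, r3⟩ := gamma_ratio (δ := 1/4) (s := 3/2) (by norm_num) (by norm_num)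
  refine ⟨C0 * 729 * Real.exp (4 * π) * (K1 * K2 ^ 2 * (4 * π) * (48 * π * K3)), by positivity, ?_⟩
  intro ν hre him
  have hre' := abs_le.1 hre
  set y := |ν.im| with hy
  have hn : ‖ν‖ ≤ 1/2 + y := norm_le_strip hre
  have hne : ∀ z : ℂ, z.im ≠ 0 → z ≠ 0 := by rintro z hz rfl; simp at hz
  have him0 : ν.im ≠ 0 := by intro h; rw [hy, h] at him; simp at him; linarith
  have hpi : 3 < π := Real.pi_gt_three
  have b1 : ‖bL (ν * (ν + 1))‖ ≤ C0 * (9 * (1 + y)) ^ 3 * Real.exp (2 * π * (y + 2)) := by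
    refine (hb (y + 2) _ (by linarith) ?_).trans ?_
    · rw [norm_mul]
      have : ‖ν + 1‖ ≤ 3/2 + y := (norm_add_le _ _).trans (by rw [norm_one]; linarith)
      calc ‖ν‖ * ‖ν + 1‖ ≤ (1/2 + y) * (3/2 + y) := by gcongr
        _ ≤ _ := by nlinarith
    · have : 1 + 4 * (y + 2) ≤ 9 * (1 + y) := by linarith
      gcongr
  have a1 : ‖Complex.Gamma ((1 - ν) / 2)‖ ≤ K1 * ‖Complex.Gamma (1 - ν / 2)‖ := by
    have := r1 ((1 - ν) / 2) (by simp; linarith)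
    rwa [show (1 - ν) / 2 + ((1/2 : ℝ) : ℂ) = 1 - ν / 2 by push_cast; ring] at this
  have a2 : ‖Complex.Gamma (1 + ν / 2)‖ ≤ K2 * ((1 + y) * ‖Complex.Gamma ((1 + ν) / 2)‖) := by
    have := r2 (1 + ν / 2) (by simp; linarith)
    rw [show 1 + ν / 2 + ((1/2 : ℝ) : ℂ) = (1 + ν) / 2 + 1 by push_cast; ring,
      Complex.Gamma_add_one _ (hne _ (by simpa using him0)), norm_mul] at this
    have h2 : ‖(1 + ν) / 2‖ ≤ 1 + y := by
      have := (norm_lin (1/2) (1/2) ν (by norm_num) (by norm_num)).1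
      rw [show (((1/2 : ℝ) : ℂ) + ((1/2 : ℝ) : ℂ) * ν) = (1 + ν) / 2 by push_cast; ring] at this
      linarith
    refine this.trans ?_
    gcongr
  have a3 : ‖Complex.Gamma ((1 - ν) / 2)‖ * ‖Complex.Gamma ((1 + ν) / 2)‖ ≤ 4 * π * Real.exp (-(π / 2 * y)) := by
    have him2 : ((π : ℂ) * ν / 2).im = π / 2 * ν.im := by
      rw [show (π : ℂ) * ν / 2 = ((π / 2 : ℝ) : ℂ) * ν by push_cast; ring, Complex.im_ofReal_mul]
    have habs : |((π : ℂ) * ν / 2).im| = π / 2 * y := by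
      rw [him2, abs_mul, abs_of_pos (by positivity)]
    have := gamma_cos (z := (1 + ν) / 2) (c := π * ν / 2) (by ring) (by rw [habs]; nlinarith)
    rw [habs, show 1 - (1 + ν) / 2 = (1 - ν) / 2 by ring] at this
    linarith
  have a4 : ‖Complex.Gamma (3 * (1 + ν) / 2)‖ * ‖Complex.Gamma (1 - 3 * ν / 2)‖ ≤
      48 * π * K3 * (1 + y) ^ 3 * Real.exp (-(3 * π / 2 * y)) := by
    have him2 : (3 * (π : ℂ) * ν / 2).im = 3 * π / 2 * ν.im := by
      rw [show 3 * (π : ℂ) * ν / 2 = ((3 * π / 2 : ℝ) : ℂ) * ν by push_cast; ring, Complex.im_ofReal_mul]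
    have habs : |(3 * (π : ℂ) * ν / 2).im| = 3 * π / 2 * y := by
      rw [him2, abs_mul, abs_of_pos (by positivity)]
    have hc := gamma_cos (z := 1 / 2 + 3 * ν / 2) (c := 3 * π * ν / 2) (by ring) (by rw [habs]; nlinarith)
    rw [habs, show 1 - (1 / 2 + 3 * ν / 2) = 1 / 2 - 3 * ν / 2 by ring] at hc
    have g3 : Complex.Gamma (3 * (1 + ν) / 2) = (1 / 2 + 3 * ν / 2) * Complex.Gamma (1 / 2 + 3 * ν / 2) := by
      rw [← Complex.Gamma_add_one _ (hne _ (by simpa using him0))]; congr 1; ring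
    have g4 := r3 (1 - 3 * ν / 2) (by simp; linarith)
    rw [show 1 - 3 * ν / 2 + ((3/2 : ℝ) : ℂ) = (1 / 2 - 3 * ν / 2 + 1) + 1 by push_cast; ring,
      Complex.Gamma_add_one _ (hne _ (by simpa using him0)), Complex.Gamma_add_one _ (hne _ (by simpa using him0)),
      norm_mul, norm_mul] at g4
    have n1 : ‖1 / 2 + 3 * ν / 2‖ ≤ 2 * (1 + y) := by
      have := (norm_lin (1/2) (3/2) ν (by norm_num) (by norm_num)).1
      rw [show (((1/2 : ℝ) : ℂ) + ((3/2 : ℝ) : ℂ) * ν) = 1 / 2 + 3 * ν / 2 by push_cast; ring] at this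
      linarith
    have n2 : ‖1 / 2 - 3 * ν / 2‖ ≤ 2 * (1 + y) := by
      have := (norm_lin (1/2) (3/2) ν (by norm_num) (by norm_num)).2
      rw [show (((1/2 : ℝ) : ℂ) - ((3/2 : ℝ) : ℂ) * ν) = 1 / 2 - 3 * ν / 2 by push_cast; ring] at this
      linarith
    have n3 : ‖1 / 2 - 3 * ν / 2 + 1‖ ≤ 3 * (1 + y) := by
      refine (norm_add_le _ _).trans ?_
      rw [norm_one]; linarith
    rw [g3, norm_mul]
    calc ‖1 / 2 + 3 * ν / 2‖ * ‖Complex.Gamma (1 / 2 + 3 * ν / 2)‖ * ‖Complex.Gamma (1 - 3 * ν / 2)‖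
        ≤ ‖1 / 2 + 3 * ν / 2‖ * ‖Complex.Gamma (1 / 2 + 3 * ν / 2)‖ *
          (K3 * (‖1 / 2 - 3 * ν / 2 + 1‖ * (‖1 / 2 - 3 * ν / 2‖ * ‖Complex.Gamma (1 / 2 - 3 * ν / 2)‖))) := by gcongr
      _ = ‖1 / 2 + 3 * ν / 2‖ * ‖1 / 2 - 3 * ν / 2 + 1‖ * ‖1 / 2 - 3 * ν / 2‖ * K3 *
          (‖Complex.Gamma (1 / 2 + 3 * ν / 2)‖ * ‖Complex.Gamma (1 / 2 - 3 * ν / 2)‖) := by ring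
      _ ≤ (2 * (1 + y)) * (3 * (1 + y)) * (2 * (1 + y)) * K3 * (4 * π * Real.exp (-(3 * π / 2 * y))) := by
          gcongr
      _ = _ := by ring
  have q1 : 0 < ‖Complex.Gamma ((1 + ν) / 2)‖ :=
    norm_pos_iff.2 (Complex.Gamma_ne_zero_of_re_pos (by simp; linarith))
  have q2 : 0 < ‖Complex.Gamma (1 - ν / 2)‖ :=
    norm_pos_iff.2 (Complex.Gamma_ne_zero_of_re_pos (by simp; linarith))
  have hcomb := combine_bound (norm_nonneg _) (norm_nonneg _) (mul_nonneg (norm_nonneg _) (norm_nonneg _)) q1 q2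
    hK1 hK2 (by positivity) (by positivity) a1 a2 a3 a4
  unfold Nf
  rw [norm_mul]
  have hnorm : ‖Complex.Gamma ((1 - ν) / 2) ^ 2 * Complex.Gamma (1 + ν / 2) ^ 2 * Complex.Gamma (3 * (1 + ν) / 2)
    * Complex.Gamma (1 - 3 * ν / 2) * (Complex.Gamma ((1 + ν) / 2))⁻¹ * (Complex.Gamma (1 - ν / 2))⁻¹‖ =
    ‖Complex.Gamma ((1 - ν) / 2)‖ ^ 2 * ‖Complex.Gamma (1 + ν / 2)‖ ^ 2 * (‖Complex.Gamma (3 * (1 + ν) / 2)‖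
    * ‖Complex.Gamma (1 - 3 * ν / 2)‖) * (‖Complex.Gamma ((1 + ν) / 2)‖)⁻¹ * (‖Complex.Gamma (1 - ν / 2)‖)⁻¹ := by
    simp only [norm_mul, norm_pow, norm_inv]; ring
  rw [hnorm]
  calc _ ≤ (C0 * (9 * (1 + y)) ^ 3 * Real.exp (2 * π * (y + 2))) * (K1 * (K2 * (1 + y)) ^ 2 * (4 * π * Real.exp (-(π / 2 * y))) *
        (48 * π * K3 * (1 + y) ^ 3 * Real.exp (-(3 * π / 2 * y)))) := by gcongr
    _ = C0 * 729 * (K1 * K2 ^ 2 * (4 * π) * (48 * π * K3)) * (1 + y) ^ 8 *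
        (Real.exp (2 * π * (y + 2)) * Real.exp (-(π / 2 * y)) * Real.exp (-(3 * π / 2 * y))) := by ring
    _ = C0 * 729 * (K1 * K2 ^ 2 * (4 * π) * (48 * π * K3)) * (1 + y) ^ 8 * Real.exp (4 * π) := by
        rw [← Real.exp_add, ← Real.exp_add]; congr 2; ring
    _ = _ := by ring

lemma Nf_grow : ∃ C : ℝ, 0 ≤ C ∧ ∀ ν : ℂ, |ν.re| ≤ 1/2 → ‖Nf ν‖ ≤ C * (1 + |ν.im|) ^ 8 := by
  obtain ⟨C, hC, h⟩ := Nf_grow_far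
  have hcomp : IsCompact (Metric.closedBall (0:ℂ) 2 ∩ {ν : ℂ | |ν.re| ≤ 1/2}) := by
    refine (isCompact_closedBall _ _).inter_right ?_
    exact isClosed_le (by fun_prop) continuous_const
  obtain ⟨B, hB⟩ := hcomp.exists_bound_of_continuousOn (f := Nf) (fun ν hν =>
    (Nf_diff (lt_of_le_of_lt hν.2 (by norm_num))).continuousAt.continuousWithinAt)
  refine ⟨C + |B|, by positivity, fun ν hν => ?_⟩
  have hT : (1:ℝ) ≤ (1 + |ν.im|) ^ 8 := one_le_pow₀ (by linarith [abs_nonneg ν.im])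
  rcases le_total 1 |ν.im| with h1 | h1
  · refine (h ν hν h1).trans ?_
    gcongr
    linarith [abs_nonneg B]
  · have := hB ν ⟨by rw [mem_closedBall_zero_iff]; linarith [norm_le_strip hν], hν⟩
    have := le_abs_self B
    have := abs_nonneg B
    nlinarith

lemma per_const (m : ℕ) : ∀ F : ℂ → ℂ, Differentiable ℂ F → (∀ z, F (z + 2) = F z) →
    (∃ C : ℝ, 0 ≤ C ∧ ∀ z, ‖F z‖ ≤ C * (1 + ‖z‖) ^ m) → ∀ z w, F z = F w := by
  induction m with
  | zero =>
    intro F hd _ ⟨C, hC, hb⟩ z w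
    refine hd.apply_eq_apply_of_bounded ?_ z w
    refine isBounded_iff_forall_norm_le.2 ⟨C, ?_⟩
    rintro _ ⟨x, rfl⟩
    simpa using hb x
  | succ m ih =>
    intro F hd hp ⟨C, hC, hb⟩
    have hd' : Differentiable ℂ (deriv F) := by
      have := hd.contDiff (n := 2)
      exact (this.iterate_deriv' 1 1).differentiable (by simp)
    have hp' : ∀ z, deriv F (z + 2) = deriv F z := by
      intro z
      rw [← deriv_comp_add_const]
      congr 1
      ext x; exact hp x
    have hc := ih (deriv F) hd' hp' ⟨C * 2 ^ (m + 1), by positivity, fun z => by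
      have hz := norm_nonneg z
      have h := Complex.norm_deriv_le_of_forall_mem_sphere_norm_le (c := z) (R := 1 + ‖z‖)
        (C := C * (2 * (1 + ‖z‖)) ^ (m + 1)) (by positivity) hd.diffContOnCl (fun w hw => by
          refine (hb w).trans ?_
          have : ‖w‖ ≤ ‖w - z‖ + ‖z‖ := by simpa using norm_add_le (w - z) z
          rw [mem_sphere_iff_norm] at hw
          gcongr
          linarith)
      refine h.trans_eq ?_
      rw [mul_pow, pow_succ (1 + ‖z‖)]
      field_simp⟩
    set c := deriv F 0
    have hG : ∀ z w, (fun x => F x - c * x) z = (fun x => F x - c * x) w := by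
      refine is_const_of_deriv_eq_zero (by fun_prop) ?_
      intro x
      have := ((hd x).hasDerivAt).sub ((hasDerivAt_id x).const_mul c)
      have h2 := this.deriv
      simp only [id] at h2
      have h3 : deriv (fun x => F x - c * x) x = deriv F x - c * 1 := h2
      rw [h3, hc x 0]; simp [c]
    have h20 := hG 2 0
    have hp0 := hp 0
    simp only [zero_add] at hp0
    simp only [hp0, mul_zero, sub_zero] at h20
    have hc0 : c = 0 := by
      have : c * 2 = 0 := by linear_combination -h20
      simpa using this
    intro z w
    have := hG z w
    simpa [hc0] using this

def sg (k : ℤ) : ℂ := if Even k then 1 else -1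

lemma sg_even {k : ℤ} (h : Even k) : sg k = 1 := by simp [sg, h]
lemma sg_odd {k : ℤ} (h : ¬ Even k) : sg k = -1 := by simp [sg, h]

lemma sg_step (k : ℤ) (ν : ℂ) (h1 : |ν.re - k| < 2/3) (h2 : |ν.re - (k + 1)| < 2/3) :
    Nf (sg k * (ν - k)) = Nf (sg (k + 1) * (ν - ((k + 1 : ℤ) : ℂ))) := by
  rw [abs_lt] at h1 h2
  by_cases hk : Even k
  · have hk1 : ¬ Even (k + 1) := by rw [Int.even_add_one]; simpa using hk
    rw [sg_even hk, sg_odd hk1, one_mul, ← Nf_symB (u := ν - k) (by simp; linarith) (by simp; linarith)]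
    congr 1; push_cast; ring
  · have hk1 : Even (k + 1) := by rw [Int.even_add_one]; simpa using hk
    rw [sg_odd hk, sg_even hk1, one_mul, ← Nf_symA (ν := -1 * (ν - k)) (by simp; linarith) (by simp; linarith)]
    congr 1; push_cast; ring

lemma sg_any (k j : ℤ) (ν : ℂ) (h1 : |ν.re - k| < 2/3) (h2 : |ν.re - j| < 2/3) :
    Nf (sg k * (ν - k)) = Nf (sg j * (ν - j)) := by
  have a1 := abs_lt.1 h1
  have a2 := abs_lt.1 h2
  have b1 : k < j + 2 := by
    have : (k : ℝ) < j + 2 := by linarith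
    exact_mod_cast this
  have b2 : j < k + 2 := by
    have : (j : ℝ) < k + 2 := by linarith
    exact_mod_cast this
  rcases (by omega : k = j ∨ j = k + 1 ∨ k = j + 1) with h | h | h
  · subst h; rfl
  · subst h
    exact sg_step k ν h1 (by push_cast at h2; exact h2)
  · subst h
    exact (sg_step j ν h2 (by push_cast at h1; exact h1)).symm

noncomputable def Fg (ν : ℂ) : ℂ := Nf (sg (round ν.re) * (ν - (round ν.re : ℤ)))

lemma Fg_eq (k : ℤ) (ν : ℂ) (h : |ν.re - k| < 2/3) : Fg ν = Nf (sg k * (ν - k)) := by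
  refine sg_any _ _ ν ?_ h
  have := abs_sub_round ν.re
  linarith

lemma sg_re (k : ℤ) (z : ℂ) : |(sg k * z).re| = |z.re| ∧ |(sg k * z).im| = |z.im| := by
  by_cases h : Even k
  · simp [sg_even h]
  · simp [sg_odd h]

lemma Fg_diff : Differentiable ℂ Fg := by
  intro ν
  set k := round ν.re
  have h0 : |ν.re - k| < 2/3 := by
    have := abs_sub_round ν.re
    exact lt_of_le_of_lt this (by norm_num)
  have hopen : IsOpen {z : ℂ | |z.re - k| < 2/3} := by
    apply isOpen_lt <;> fun_prop
  have hev : Fg =ᶠ[nhds ν] fun z => Nf (sg k * (z - k)) := by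
    filter_upwards [hopen.mem_nhds h0] with z hz using Fg_eq k z hz
  refine DifferentiableAt.congr_of_eventuallyEq ?_ hev
  have hd : DifferentiableAt ℂ Nf (sg k * (ν - k)) := Nf_diff (by
    rw [(sg_re _ _).1]; simpa using h0)
  exact hd.comp ν (f := fun z => sg k * (z - k)) (by fun_prop)

lemma Fg_per (ν : ℂ) : Fg (ν + 2) = Fg ν := by
  have h0 : |ν.re - round ν.re| < 2/3 := by
    have := abs_sub_round ν.re
    exact lt_of_le_of_lt this (by norm_num)
  rw [Fg_eq (round ν.re) ν h0, Fg_eq (round ν.re + 2) (ν + 2) (by push_cast; simpa using h0)]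
  have : sg (round ν.re + 2) = sg (round ν.re) := by
    simp [sg, Int.even_add]
  rw [this]; congr 2; push_cast; ring

lemma Fg_grow : ∃ C : ℝ, 0 ≤ C ∧ ∀ z, ‖Fg z‖ ≤ C * (1 + ‖z‖) ^ 8 := by
  obtain ⟨C, hC, h⟩ := Nf_grow
  refine ⟨C, hC, fun z => ?_⟩
  have h1 := h (sg (round z.re) * (z - (round z.re : ℤ))) (by
    rw [(sg_re _ _).1]; simpa using abs_sub_round z.re)
  refine h1.trans ?_
  rw [(sg_re _ _).2]
  have : |(z - (round z.re : ℤ)).im| ≤ ‖z‖ := by simpa using Complex.abs_im_le_norm z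
  gcongr

lemma Nf_val : Nf (-1/6) = π / 2 := by
  have h := per_const 8 Fg Fg_diff Fg_per Fg_grow (-1/6) 0
  have hre : ((-1/6 : ℂ)).re = -1/6 := by
    rw [show (-1/6 : ℂ) = ((-1/6 : ℝ) : ℂ) by push_cast; ring, Complex.ofReal_re]
  rw [Fg_eq 0 (-1/6) (by rw [hre]; norm_num [abs_lt]), Fg_eq 0 0 (by norm_num)] at h
  simpa [sg, Nf_zero] using h

noncomputable def tripG (s : ℝ) : ℝ :=
  Real.Gamma (s / 3) * Real.Gamma (s / 3 + 1 / 3) * Real.Gamma (s / 3 + 2 / 3) * (3:ℝ) ^ (s - 1)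
    / (Real.Gamma (1 / 3) * Real.Gamma (2 / 3))

lemma tripG_pos {s : ℝ} (hs : 0 < s) : 0 < tripG s := by
  unfold tripG
  have h1 := Real.Gamma_pos_of_pos (s := s / 3) (by positivity)
  have h2 := Real.Gamma_pos_of_pos (s := s / 3 + 1 / 3) (by positivity)
  have h3 := Real.Gamma_pos_of_pos (s := s / 3 + 2 / 3) (by positivity)
  have h4 := Real.Gamma_pos_of_pos (s := 1 / 3) (by positivity)
  have h5 := Real.Gamma_pos_of_pos (s := 2 / 3) (by positivity)
  positivity

lemma convex_logGamma_aff (b : ℝ) (hb : 0 ≤ b) :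
    ConvexOn ℝ (Set.Ioi (0:ℝ)) (fun s => Real.log (Real.Gamma (s / 3 + b))) := by
  refine ⟨convex_Ioi 0, ?_⟩
  intro x hx y hy p q hp hq hpq
  rw [Set.mem_Ioi] at hx hy
  have h := Real.convexOn_log_Gamma.2 (x := x / 3 + b) (by simp; positivity) (y := y / 3 + b)
    (by simp; positivity) hp hq hpq
  simp only [smul_eq_mul, Function.comp] at h ⊢
  convert h using 3
  linear_combination (-b) * hpq

lemma tripG_eq {s : ℝ} (hs : 0 < s) : tripG s = Real.Gamma s := by
  refine Real.eq_Gamma_of_log_convex ?_ ?_ (fun {y} hy => tripG_pos hy) ?_ hs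
  · have hlin : ConvexOn ℝ (Set.Ioi (0:ℝ)) (fun s => s * Real.log 3) := by
      have := (convexOn_id (convex_Ioi (0:ℝ))).smul (Real.log_nonneg (by norm_num : (1:ℝ) ≤ 3))
      simpa [mul_comm] using this
    refine ((((convex_logGamma_aff 0 le_rfl).add (convex_logGamma_aff (1/3) (by norm_num))).add
      (convex_logGamma_aff (2/3) (by norm_num))).add hlin).add_const
      (-Real.log 3 - Real.log (Real.Gamma (1 / 3) * Real.Gamma (2 / 3))) |>.congr ?_
    intro s hs
    rw [Set.mem_Ioi] at hs
    have h1 := (Real.Gamma_pos_of_pos (s := s / 3) (by positivity)).ne'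
    have h2 := (Real.Gamma_pos_of_pos (s := s / 3 + 1 / 3) (by positivity)).ne'
    have h3 := (Real.Gamma_pos_of_pos (s := s / 3 + 2 / 3) (by positivity)).ne'
    have h4 := (Real.Gamma_pos_of_pos (s := 1 / 3) (by positivity)).ne'
    have h5 := (Real.Gamma_pos_of_pos (s := 2 / 3) (by positivity)).ne'
    have h6 : (3:ℝ) ^ (s - 1) ≠ 0 := (Real.rpow_pos_of_pos (by norm_num) _).ne'
    simp only [Function.comp, tripG, Pi.add_apply]
    rw [Real.log_div (by positivity) (by positivity), Real.log_mul (by positivity) h6,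
      Real.log_mul (by positivity) h3, Real.log_mul h1 h2, Real.log_rpow (by norm_num)]
    ring_nf
  · intro y hy
    have h3 : Real.Gamma ((y + 1) / 3 + 2 / 3) = y / 3 * Real.Gamma (y / 3) := by
      rw [← Real.Gamma_add_one (by positivity)]; congr 1; ring
    have e1 : (y + 1) / 3 = y / 3 + 1 / 3 := by ring
    have e2 : (y + 1) / 3 + 1 / 3 = y / 3 + 2 / 3 := by ring
    have e3 : (3:ℝ) ^ (y + 1 - 1) = 3 ^ (y - 1) * 3 := by
      rw [← Real.rpow_add_one (by norm_num)]; congr 1; ring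
    unfold tripG
    rw [h3, e2, e1, e3]
    ring
  · unfold tripG
    have h4 := (Real.Gamma_pos_of_pos (s := 1 / 3) (by positivity)).ne'
    have h5 := (Real.Gamma_pos_of_pos (s := 2 / 3) (by positivity)).ne'
    norm_num
    field_simp
    exact ⟨h4, h5⟩

lemma gamma_ab : Real.Gamma (1/12) * Real.Gamma (5/12) = √(2 * √3) * Real.Gamma (1/4) ^ 2 := by
  have h := tripG_eq (s := 1/4) (by norm_num)
  unfold tripG at h
  have e1 : (1/4 : ℝ)/3 = 1/12 := by norm_num
  have e2 : (1/12 : ℝ) + 1/3 = 5/12 := by norm_num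
  have e3 : (1/12 : ℝ) + 2/3 = 3/4 := by norm_num
  rw [e1, e2, e3] at h
  have hT := Real.Gamma_mul_Gamma_one_sub (1/3)
  rw [show (1:ℝ) - 1/3 = 2/3 by norm_num, show π * (1/3) = π/3 by ring, Real.sin_pi_div_three] at hT
  have hq := Real.Gamma_mul_Gamma_one_sub (1/4)
  rw [show (1:ℝ) - 1/4 = 3/4 by norm_num, show π * (1/4) = π/4 by ring, Real.sin_pi_div_four] at hq
  rw [hT] at h
  have hpi := Real.pi_pos
  have hg := Real.Gamma_pos_of_pos (s := 1/4) (by norm_num)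
  set g := Real.Gamma (1/4)
  set c := Real.Gamma (3/4)
  set a := Real.Gamma (1/12)
  set b := Real.Gamma (5/12)
  have s3 : (√3:ℝ) ^ 2 = 3 := Real.sq_sqrt (by norm_num)
  have s2 : (√2:ℝ) ^ 2 = 2 := Real.sq_sqrt (by norm_num)
  have p3 : 0 < √(3:ℝ) := by positivity
  have p2 : 0 < √(2:ℝ) := by positivity
  set x : ℝ := (3:ℝ) ^ ((1:ℝ)/4 - 1) with hx
  have xp : 0 < x := by positivity
  have hx4 : x ^ 4 = 1 / 27 := by
    rw [hx, ← Real.rpow_natCast, ← Real.rpow_mul (by norm_num)]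
    norm_num
  have hx2 : x ^ 2 = 1 / (3 * √3) := by
    have : (x ^ 2) ^ 2 = (1 / (3 * √3)) ^ 2 := by
      rw [← pow_mul, hx4, div_pow, mul_pow, s3]; norm_num
    exact (pow_left_inj₀ (by positivity) (by positivity) two_ne_zero).1 this
  have hu : √(2 * √3) = √2 / (√3 * x) := by
    rw [Real.sqrt_eq_iff_eq_sq (by positivity) (by positivity), div_pow, mul_pow, s2, s3, hx2]
    field_simp
  rw [hu]
  have hc : c = π * √2 / g := by
    field_simp at hq ⊢
    nlinarith
  rw [hc] at h
  field_simp at h ⊢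
  nlinarith

lemma bL_val : bL (-5/36) = ((√(2 * √3) ^ 3 * Real.Gamma (1/4) ^ 4 / (24 * π ^ 3) : ℝ) : ℂ) := by
  have h := Nf_val
  unfold Nf at h
  rw [show (-1/6 : ℂ) * (-1/6 + 1) = -5/36 by norm_num,
    show (1 - (-1/6 : ℂ)) / 2 = ((7/12 : ℝ) : ℂ) by push_cast; norm_num,
    show (1 + (-1/6 : ℂ) / 2) = ((11/12 : ℝ) : ℂ) by push_cast; norm_num,
    show (3 * (1 + (-1/6 : ℂ)) / 2) = ((5/4 : ℝ) : ℂ) by push_cast; norm_num,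
    show (1 - 3 * (-1/6 : ℂ) / 2) = ((5/4 : ℝ) : ℂ) by push_cast; norm_num,
    show (1 + (-1/6 : ℂ)) / 2 = ((5/12 : ℝ) : ℂ) by push_cast; norm_num,
    show (1 - (-1/6 : ℂ) / 2) = ((13/12 : ℝ) : ℂ) by push_cast; norm_num] at h
  simp only [Complex.Gamma_ofReal] at h
  have g1 : Real.Gamma (13/12) = 1/12 * Real.Gamma (1/12) := by
    rw [← Real.Gamma_add_one (by norm_num)]; norm_num
  have g2 : Real.Gamma (5/4) = 1/4 * Real.Gamma (1/4) := by
    rw [← Real.Gamma_add_one (by norm_num)]; norm_num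
  have r1 := Real.Gamma_mul_Gamma_one_sub (1/12)
  have r2 := Real.Gamma_mul_Gamma_one_sub (5/12)
  rw [show (1:ℝ) - 1/12 = 11/12 by norm_num] at r1
  rw [show (1:ℝ) - 5/12 = 7/12 by norm_num] at r2
  have hab := gamma_ab
  have hs : Real.sin (π * (1/12)) * Real.sin (π * (5/12)) = 1/4 := by
    rw [show π * (5/12) = π / 2 - π * (1/12) by ring, Real.sin_pi_div_two_sub]
    have := Real.sin_two_mul (π * (1/12))
    rw [show 2 * (π * (1/12)) = π / 6 by ring, Real.sin_pi_div_six] at this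
    linarith
  rw [g1, g2] at h
  have ha := Real.Gamma_pos_of_pos (s := 1/12) (by norm_num)
  have hb := Real.Gamma_pos_of_pos (s := 5/12) (by norm_num)
  have hp := Real.Gamma_pos_of_pos (s := 7/12) (by norm_num)
  have hq := Real.Gamma_pos_of_pos (s := 11/12) (by norm_num)
  have hg := Real.Gamma_pos_of_pos (s := 1/4) (by norm_num)
  have hpi := Real.pi_pos
  set g := Real.Gamma (1/4)
  set a := Real.Gamma (1/12)
  set b := Real.Gamma (5/12)
  set p := Real.Gamma (7/12)
  set q := Real.Gamma (11/12)
  have hpq : p * q = 4 * π ^ 2 / (a * b) := by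
    have : (a * q) * (b * p) = 4 * π ^ 2 := by
      rw [r1, r2, div_mul_div_comm, hs]; field_simp
    field_simp
    linarith
  have key : p ^ 2 * q ^ 2 * (1/4 * g) * (1/4 * g) * b⁻¹ * (1/12 * a)⁻¹ =
      (π / 2) / (√(2 * √3) ^ 3 * g ^ 4 / (24 * π ^ 3)) := by
    have : √(2 * √3) = a * b / g ^ 2 := by rw [hab]; field_simp
    rw [this, ← mul_pow, hpq]
    field_simp
    norm_num
  have hu : (0:ℝ) < √(2 * √3) := by positivity
  have key' : ((p ^ 2 * q ^ 2 * (1/4 * g) * (1/4 * g) * b⁻¹ * (1/12 * a)⁻¹ : ℝ) : ℂ) =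
     (((π / 2) / (√(2 * √3) ^ 3 * g ^ 4 / (24 * π ^ 3)) : ℝ) : ℂ) := by rw [key]
  set V := √(2 * √3) ^ 3 * g ^ 4 / (24 * π ^ 3) with hV
  have hVp : 0 < V := by positivity
  push_cast at key' h
  rw [key'] at h
  have hVc : (V : ℂ) ≠ 0 := by exact_mod_cast hVp.ne'
  have hpc : (π : ℂ) ≠ 0 := by exact_mod_cast hpi.ne'
  field_simp at h
  rw [neg_div]
  exact h

noncomputable def cc : ℕ → ℝ
  | 0 => 1
  | (n + 1) => cc n * ((2 * n + 1) / (2 * n + 2))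

lemma cc_nonneg (n : ℕ) : 0 ≤ cc n := by
  induction n with
  | zero => simp [cc]
  | succ n ih => simp only [cc]; positivity

lemma cc_le (n : ℕ) : cc n ≤ 1 := by
  induction n with
  | zero => simp [cc]
  | succ n ih =>
    simp only [cc]
    have : ((2:ℝ) * n + 1) / (2 * n + 2) ≤ 1 := by
      rw [div_le_one (by positivity)]; linarith
    have h0 := cc_nonneg n
    calc cc n * (((2:ℝ) * n + 1) / (2 * n + 2)) ≤ 1 * 1 := by gcongr
      _ = 1 := one_mul 1

lemma choose_cc (n : ℕ) : Ring.choose (-1/2 : ℝ) n = (-1) ^ n * cc n := by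
  induction n with
  | zero => simp [cc]
  | succ n ih =>
    have h : Ring.choose (-1/2 : ℝ) (n + 1) * (n + 1) = Ring.choose (-1/2 : ℝ) n * (-1/2 - n) := by
      rw [Ring.choose_eq_smul, Ring.choose_eq_smul, descPochhammer_succ_right, Polynomial.smeval_mul,
        Polynomial.smeval_sub]
      simp [Polynomial.smeval_X, Polynomial.smeval_natCast, Nat.factorial_succ]
      field_simp
    rw [ih] at h
    have hn : ((n : ℝ) + 1) ≠ 0 := by positivity
    rw [eq_div_of_mul_eq hn h]
    simp only [cc, pow_succ]
    field_simp
    ring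

lemma binom_sum {x : ℝ} (h0 : 0 ≤ x) (h1 : x < 1) : HasSum (fun n => cc n * x ^ n) (1 / √(1 - x)) := by
  have h := (Real.one_add_rpow_hasFPowerSeriesOnBall_zero (a := -1/2)).hasSum (y := -x) (by
    simp [Metric.mem_eball, edist_dist, abs_of_nonneg h0]; exact h1)
  simp only [binomialSeries_apply, choose_cc, smul_eq_mul, List.ofFn_const, List.prod_replicate, zero_add] at h
  have e1 : (fun n => cc n * x ^ n) = fun n => (-1) ^ n * cc n * (-x) ^ n := by
    funext n
    rw [show -x = (-1) * x by ring, mul_pow]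
    have : ((-1:ℝ) ^ n) * (-1) ^ n = 1 := by rw [← mul_pow]; simp
    linear_combination (-(cc n * x ^ n)) * this
  have e2 : 1 / √(1 - x) = (1 + -x) ^ (-1/2 : ℝ) := by
    rw [show 1 + -x = 1 - x by ring, show (-1/2 : ℝ) = -(1/2) by ring, Real.rpow_neg (by linarith),
      ← Real.sqrt_eq_rpow, one_div]
  rw [e1, e2]
  exact h

lemma wallis (n : ℕ) : ∫ θ in (0:ℝ)..(π/2), Real.sin θ ^ (2 * n) = π / 2 * cc n := by
  induction n with
  | zero => simp [cc]
  | succ n ih =>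
    rw [show 2 * (n + 1) = 2 * n + 2 by ring, integral_sin_pow, ih]
    simp only [cc]
    push_cast
    simp
    ring

lemma ac_cc (n : ℕ) : ac (-((1/4 : ℝ) : ℂ)) n = ((cc n ^ 2 : ℝ) : ℂ) := by
  induction n with
  | zero => simp [ac_zero, cc]
  | succ n ih =>
    rw [ac_succ, ih]
    simp only [cc]
    have hn : ((n : ℂ) + 1) ≠ 0 := Nat.cast_add_one_ne_zero n
    have hn2 : (2 * (n : ℂ) + 2) ≠ 0 := by
      intro h; apply hn; linear_combination h / 2
    push_cast
    field_simp
    ring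

lemma ellK_eq {t : ℝ} (h0 : 0 ≤ t) (h1 : t < 1) : ellipticK (√t) = π / 2 * yr (1/4) t := by
  unfold ellipticK
  rw [Real.sq_sqrt h0]
  have hs : ∀ θ : ℝ, 0 ≤ t * Real.sin θ ^ 2 ∧ t * Real.sin θ ^ 2 ≤ t := fun θ =>
    ⟨by positivity, by have := Real.sin_sq_le_one θ; nlinarith⟩
  have key := intervalIntegral.hasSum_integral_of_dominated_convergence (μ := volume) (a := 0) (b := π/2)
    (F := fun n θ => cc n * (t * Real.sin θ ^ 2) ^ n) (f := fun θ => 1 / √(1 - t * Real.sin θ ^ 2))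
    (fun n _ => t ^ n) (fun n => by
      apply Continuous.aestronglyMeasurable; fun_prop)
    (fun n => Filter.Eventually.of_forall fun θ _ => by
      have := hs θ
      have hc := cc_nonneg n
      rw [Real.norm_of_nonneg (by positivity)]
      calc cc n * (t * Real.sin θ ^ 2) ^ n ≤ 1 * t ^ n := by
            gcongr
            · exact cc_le n
            · exact this.2
        _ = t ^ n := one_mul _)
    (Filter.Eventually.of_forall fun θ _ => summable_geometric_of_lt_one h0 h1)
    (by simp)
    (Filter.Eventually.of_forall fun θ _ => binom_sum (hs θ).1 (lt_of_le_of_lt (hs θ).2 h1))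
  have e : ∀ n, ∫ θ in (0:ℝ)..(π/2), cc n * (t * Real.sin θ ^ 2) ^ n = π / 2 * (cc n ^ 2 * t ^ n) := by
    intro n
    simp_rw [mul_pow, ← pow_mul]
    rw [intervalIntegral.integral_const_mul, intervalIntegral.integral_const_mul, wallis]
    ring
  simp_rw [e] at key
  have hy : HasSum (fun n => cc n ^ 2 * t ^ n) (yr (1/4) t) := by
    have hsum := (psr_summable (ac_bound3 (-((1/4 : ℝ) : ℂ))) h0 h1).hasSum
    have h2 := Complex.hasSum_re hsum
    have e1 : (fun n => cc n ^ 2 * t ^ n) = fun n => (ac (-((1/4 : ℝ) : ℂ)) n * (t : ℂ) ^ n).re := by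
      funext n
      rw [ac_cc, ← Complex.ofReal_pow, ← Complex.ofReal_mul, Complex.ofReal_re]
    rw [e1]
    exact h2
  exact key.unique (hy.mul_left _)

lemma lagr {f f' : ℝ → ℝ} {b : ℝ} (hb : 0 < b) (hc : ContinuousOn f (Set.Icc 0 b))
    (hd : ∀ x ∈ Set.Ioo 0 b, HasDerivAt f (f' x) x) : ∃ c ∈ Set.Ioo 0 b, f b - f 0 = f' c * b := by
  obtain ⟨c, hc1, hc2⟩ := exists_hasDerivAt_eq_slope f f' hb hc hd
  refine ⟨c, hc1, ?_⟩
  rw [hc2, sub_zero, div_mul_cancel₀ _ hb.ne']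

lemma yr_cont (c : ℝ) : ContinuousOn (yr c) (Set.Ico 0 1) :=
  Complex.continuous_re.comp_continuousOn (YL_continuousOn _)

lemma dr_cont (c : ℝ) : ContinuousOn (dr c) (Set.Ico 0 1) :=
  Complex.continuous_re.comp_continuousOn (DL_continuousOn _)

noncomputable def rho (t : ℝ) : ℝ := (1 - t + t ^ 2) ^ ((1:ℝ)/4)

lemma qpos (t : ℝ) : 0 < 1 - t + t ^ 2 := by nlinarith [sq_nonneg (t - 1/2)]

lemma rho_pos (t : ℝ) : 0 < rho t := Real.rpow_pos_of_pos (qpos t) _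

lemma rho_pow (t : ℝ) : rho t ^ 4 = 1 - t + t ^ 2 := by
  unfold rho
  rw [← Real.rpow_natCast, ← Real.rpow_mul (qpos t).le]; norm_num

lemma rho_seven (t : ℝ) : (1 - t + t ^ 2) ^ ((7:ℝ)/4) = rho t ^ 7 := by
  unfold rho
  rw [← Real.rpow_natCast (_ ^ ((1:ℝ)/4)), ← Real.rpow_mul (qpos t).le]; norm_num

lemma rho_refl (t : ℝ) : rho (1 - t) = rho t := by
  unfold rho; congr 1; ring

lemma rho_deriv (t : ℝ) : HasDerivAt rho ((2 * t - 1) / (4 * rho t ^ 3)) t := by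
  have h1 : HasDerivAt (fun t : ℝ => 1 - t + t ^ 2) (2 * t - 1) t := by
    have := (((hasDerivAt_id t).const_sub 1).add ((hasDerivAt_id t).pow 2))
    refine this.congr_deriv ?_
    simp; ring
  have h := h1.rpow_const (p := (1:ℝ)/4) (Or.inl (qpos t).ne')
  refine h.congr_deriv ?_
  have e : (1 - t + t ^ 2) ^ ((1:ℝ)/4 - 1) = (rho t ^ 3)⁻¹ := by
    unfold rho
    rw [← Real.rpow_natCast (_ ^ ((1:ℝ)/4)), ← Real.rpow_mul (qpos t).le, ← Real.rpow_neg (qpos t).le]; norm_num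
  rw [e]
  have := rho_pos t
  field_simp

noncomputable def sgm (t : ℝ) : ℝ := 1/2 - (2 - 3 * t - 3 * t ^ 2 + 2 * t ^ 3) / (4 * rho t ^ 6)

lemma sgm_deriv (t : ℝ) : HasDerivAt sgm (27/8 * (t * (1 - t)) / rho t ^ 10) t := by
  have hN : HasDerivAt (fun t : ℝ => 2 - 3 * t - 3 * t ^ 2 + 2 * t ^ 3) (-3 - 6 * t + 6 * t ^ 2) t := by
    have h1 := hasDerivAt_id t
    have := (((h1.const_mul 3).const_sub 2).sub ((h1.pow 2).const_mul 3)).add ((h1.pow 3).const_mul 2)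
    refine this.congr_deriv ?_
    simp; ring
  have hr := ((rho_deriv t).pow 6).const_mul 4
  have hp := rho_pos t
  have h := (hN.div hr (by simp; positivity)).const_sub (1/2)
  refine h.congr_deriv ?_
  have h4 := rho_pow t
  simp only [Pi.pow_apply]
  set r := rho t
  norm_num
  field_simp
  rw [h4]
  ring

lemma sgm_prod (t : ℝ) : sgm t * (1 - sgm t) = 27 * (t * (1 - t)) ^ 2 / (16 * rho t ^ 12) := by
  have hp := rho_pos t
  have h4 := rho_pow t
  have h12 : rho t ^ 12 = (1 - t + t ^ 2) ^ 3 := by rw [← h4]; ring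
  unfold sgm
  set r := rho t
  have : (1/2 - (2 - 3 * t - 3 * t ^ 2 + 2 * t ^ 3) / (4 * r ^ 6)) * (1 - (1/2 - (2 - 3 * t - 3 * t ^ 2 + 2 * t ^ 3) / (4 * r ^ 6)))
     = (4 * r ^ 12 - (2 - 3 * t - 3 * t ^ 2 + 2 * t ^ 3) ^ 2) / (16 * r ^ 12) := by
    field_simp
    ring
  rw [this]
  congr 1
  rw [h12]; ring

lemma sgm_refl (t : ℝ) : sgm (1 - t) = 1 - sgm t := by
  unfold sgm
  rw [rho_refl]
  ring

lemma rho_zero : rho 0 = 1 := by simp [rho]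
lemma sgm_zero : sgm 0 = 0 := by simp [sgm, rho_zero]; norm_num
lemma sgm_one : sgm 1 = 1 := by
  have := sgm_refl 0
  rw [sgm_zero] at this; simpa using this

lemma sgm_mem {t : ℝ} (h0 : 0 < t) (h1 : t < 1) : sgm t ∈ Set.Ioo (0:ℝ) 1 := by
  have h := sgm_prod t
  have hp := rho_pos t
  have h1' : 0 < 1 - t := by linarith
  have : 0 < sgm t * (1 - sgm t) := by rw [h]; positivity
  constructor
  · nlinarith
  · nlinarith

lemma sgm_mem' {t : ℝ} (h0 : 0 ≤ t) (h1 : t < 1) : sgm t ∈ Set.Ico (0:ℝ) 1 := by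
  rcases h0.eq_or_lt with h | h
  · rw [← h, sgm_zero]; simp
  · exact Set.Ioo_subset_Ico_self (sgm_mem h h1)

lemma rho_cont : Continuous rho := continuous_iff_continuousAt.2 fun t => (rho_deriv t).continuousAt
lemma sgm_cont : Continuous sgm := continuous_iff_continuousAt.2 fun t => (sgm_deriv t).continuousAt

noncomputable def hh (t : ℝ) : ℝ := yr (5/36) (sgm t) / rho t
noncomputable def HH (t : ℝ) : ℝ := t * (1 - t) * (1 - 2 * t) / (4 * rho t ^ 5) * yr (5/36) (sgm t)
  + 2 * rho t * dr (5/36) (sgm t)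

lemma ys_deriv {t : ℝ} (h0 : 0 < t) (h1 : t < 1) :
    HasDerivAt (fun t => yr (5/36) (sgm t)) (dr (5/36) (sgm t) * (2 * rho t ^ 2 / (t * (1 - t)))) t := by
  have hm := sgm_mem h0 h1
  have h := (yr_hasDerivAt (5/36) hm.1 hm.2).comp t (sgm_deriv t)
  refine h.congr_deriv ?_
  rw [sgm_prod]
  have hp := rho_pos t
  have h1' : 0 < 1 - t := by linarith
  field_simp
  ring

lemma ds_deriv {t : ℝ} (h0 : 0 < t) (h1 : t < 1) :
    HasDerivAt (fun t => dr (5/36) (sgm t)) (5/36 * yr (5/36) (sgm t) * (27/8 * (t * (1 - t)) / rho t ^ 10)) t := by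
  have hm := sgm_mem h0 h1
  exact (dr_hasDerivAt (5/36) hm.1.le hm.2).comp t (sgm_deriv t)

lemma hh_deriv {t : ℝ} (h0 : 0 < t) (h1 : t < 1) : HasDerivAt hh (HH t / (t * (1 - t))) t := by
  have hp := rho_pos t
  have h := (ys_deriv h0 h1).div (rho_deriv t) hp.ne'
  refine h.congr_deriv ?_
  have h1' : 0 < 1 - t := by linarith
  unfold HH
  field_simp
  ring

lemma HH_deriv {t : ℝ} (h0 : 0 < t) (h1 : t < 1) : HasDerivAt HH (hh t / 4) t := by
  have hp := rho_pos t
  have hi := hasDerivAt_id t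
  have hP : HasDerivAt (fun t : ℝ => t * (1 - t) * (1 - 2 * t)) (1 - 6 * t + 6 * t ^ 2) t := by
    have := (hi.mul (hi.const_sub 1)).mul ((hi.const_mul 2).const_sub 1)
    refine this.congr_deriv ?_
    simp; ring
  have hr := ((rho_deriv t).pow 5).const_mul 4
  have h := ((hP.div hr (by simp; positivity)).mul (ys_deriv h0 h1)).add
    (((rho_deriv t).const_mul 2).mul (ds_deriv h0 h1))
  refine h.congr_deriv ?_
  have h1' : 0 < 1 - t := by linarith
  have h4 := rho_pow t
  unfold hh
  simp only [Pi.pow_apply, Pi.div_apply, Pi.mul_apply]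
  set r := rho t
  set y := yr (5/36) (sgm t)
  set d := dr (5/36) (sgm t)
  have h8 : r ^ 8 = (1 - t + t ^ 2) ^ 2 := by rw [← h4]; ring
  norm_num
  field_simp
  rw [h8, h4]
  ring

lemma yr_pos {c : ℝ} (hc : 0 ≤ c) {s : ℝ} (h0 : 0 ≤ s) (h1 : s < 1) : 0 < yr c s := by
  rcases h0.eq_or_lt with h | h
  · rw [← h, yr_at_zero]; norm_num
  · obtain ⟨x, hx, he⟩ := lagr h ((yr_cont c).mono fun x hx => ⟨hx.1, hx.2.trans_lt h1⟩)
      (fun x hx => yr_hasDerivAt c hx.1 (hx.2.trans h1))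
    rw [yr_at_zero] at he
    have hd := dr_nonneg hc hx.1.le (hx.2.trans h1)
    have h1x : 0 < 1 - x := by linarith [hx.2]
    have hx0 := hx.1
    have : 0 ≤ dr c x / (x * (1 - x)) * s := by positivity
    linarith

lemma hh_cont : ContinuousOn hh (Set.Ico 0 1) := by
  refine ContinuousOn.div ?_ rho_cont.continuousOn fun x _ => (rho_pos x).ne'
  exact (yr_cont _).comp sgm_cont.continuousOn fun x hx => sgm_mem' hx.1 hx.2

lemma HH_cont : ContinuousOn HH (Set.Ico 0 1) := by
  refine ContinuousOn.add (ContinuousOn.mul (ContinuousOn.div (by fun_prop) ?_ ?_) ?_) (ContinuousOn.mul ?_ ?_)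
  · exact ((rho_cont.pow 5).const_mul 4).continuousOn
  · intro x _
    have := rho_pos x
    positivity
  · exact (yr_cont _).comp sgm_cont.continuousOn fun x hx => sgm_mem' hx.1 hx.2
  · exact (rho_cont.const_mul 2).continuousOn
  · exact (dr_cont _).comp sgm_cont.continuousOn fun x hx => sgm_mem' hx.1 hx.2

lemma wronsk {t : ℝ} (h0 : 0 < t) (h1 : t < 1) : hh t * dr (1/4) t = yr (1/4) t * HH t := by
  have hsub : Set.Icc 0 t ⊆ Set.Ico (0:ℝ) 1 := fun x hx => ⟨hx.1, hx.2.trans_lt h1⟩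
  obtain ⟨x, hx, he⟩ := lagr (f := fun t => hh t * dr (1/4) t - yr (1/4) t * HH t) (f' := fun _ => 0) h0
    (((hh_cont.mul (dr_cont _)).sub ((yr_cont _).mul HH_cont)).mono hsub) (fun x hx => by
      have hx1 := hx.2.trans h1
      have h := ((hh_deriv hx.1 hx1).mul (dr_hasDerivAt (1/4) hx.1.le hx1)).sub
        ((yr_hasDerivAt (1/4) hx.1 hx1).mul (HH_deriv hx.1 hx1))
      refine h.congr_deriv ?_
      ring)
  simp only [dr_at_zero, yr_at_zero, zero_mul] at he
  have : HH 0 = 0 := by simp [HH, sgm_zero, dr_at_zero]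
  rw [this] at he
  linarith

lemma hh_eq {t : ℝ} (h0 : 0 < t) (h1 : t < 1) : hh t = yr (1/4) t := by
  have hsub : Set.Icc 0 t ⊆ Set.Ico (0:ℝ) 1 := fun x hx => ⟨hx.1, hx.2.trans_lt h1⟩
  have hk : ∀ x ∈ Set.Icc 0 t, yr (1/4) x ≠ 0 := fun x hx => (yr_pos (by norm_num) hx.1 (hsub hx).2).ne'
  obtain ⟨x, hx, he⟩ := lagr (f := fun t => hh t / yr (1/4) t) (f' := fun _ => 0) h0
    ((hh_cont.mono hsub).div ((yr_cont _).mono hsub) hk) (fun x hx => by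
      have hx1 := hx.2.trans h1
      have h := (hh_deriv hx.1 hx1).div (yr_hasDerivAt (1/4) hx.1 hx1) (hk x ⟨hx.1.le, hx.2.le⟩)
      refine h.congr_deriv ?_
      have hw := wronsk hx.1 hx1
      rw [div_eq_zero_iff]; left
      linear_combination (-1 / (x * (1 - x))) * hw)
  simp only [yr_at_zero, zero_mul] at he
  have h00 : hh 0 = 1 := by simp [hh, sgm_zero, yr_at_zero, rho_zero]
  rw [h00, div_one] at he
  have := hk t ⟨h0.le, le_rfl⟩
  have h2 : hh t / yr (1/4) t = 1 := by linarith
  rwa [div_eq_one_iff_eq this] at h2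

lemma sgm_mono : StrictMonoOn sgm (Set.Icc 0 1) := by
  refine strictMonoOn_of_deriv_pos (convex_Icc 0 1) sgm_cont.continuousOn ?_
  intro x hx
  rw [interior_Icc] at hx
  rw [(sgm_deriv x).deriv]
  have := rho_pos x
  have h1 : 0 < 1 - x := by linarith [hx.2]
  have h2 := hx.1
  positivity

lemma sgm_image : sgm '' Set.Ioo 0 1 = Set.Ioo 0 1 := by
  apply Set.Subset.antisymm
  · rintro _ ⟨x, hx, rfl⟩
    exact sgm_mem hx.1 hx.2
  · have := intermediate_value_Ioo (zero_le_one (α := ℝ)) sgm_cont.continuousOn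
    rwa [sgm_zero, sgm_one] at this

lemma bL_real : ∫ s in Set.Ioo (0:ℝ) 1, yr (5/36) (1 - s) ^ 2 * yr (5/36) s
    = √(2 * √3) ^ 3 * Real.Gamma (1/4) ^ 4 / (24 * π ^ 3) := by
  have h := bL_val
  unfold bL at h
  have e : ∀ s, YL (-5/36) s = (yr (5/36) s : ℂ) := by
    intro s
    rw [← YL_eq_yr]
    congr 1; push_cast; ring
  simp_rw [e, ← Complex.ofReal_pow, ← Complex.ofReal_mul] at h
  rw [integral_complex_ofReal] at h
  have h' := Complex.ofReal_injective h
  rw [← h']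
  rw [← integral_Ioc_eq_integral_Ioo, ← integral_Ioc_eq_integral_Ioo, ← intervalIntegral.integral_of_le zero_le_one,
    ← intervalIntegral.integral_of_le zero_le_one]
  have := intervalIntegral.integral_comp_sub_left (a := 0) (b := 1)
    (fun s => yr (5/36) s ^ 2 * yr (5/36) (1 - s)) 1
  simpa using this

theorem stmt_9 :
    (27/4) * ∫ t in (0:ℝ)..1,
        t * (1-t) * (ellipticK (Real.sqrt (1-t)))^2 * ellipticK (Real.sqrt t)
          / (1 - t + t^2) ^ ((7:ℝ)/4)
      = (Real.Gamma (1/4))^4 / (8 * Real.sqrt (2 * Real.sqrt 3)) := by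
  rw [intervalIntegral.integral_of_le zero_le_one, integral_Ioc_eq_integral_Ioo]
  have hsub := integral_image_eq_integral_abs_deriv_smul (measurableSet_Ioo (a := (0:ℝ)) (b := 1))
    (f := sgm) (fun x _ => (sgm_deriv x).hasDerivWithinAt)
    (sgm_mono.injOn.mono Set.Ioo_subset_Icc_self) (fun s => yr (5/36) (1 - s) ^ 2 * yr (5/36) s)
  rw [sgm_image, bL_real] at hsub
  have hcongr : ∫ t in Set.Ioo (0:ℝ) 1, t * (1-t) * (ellipticK (Real.sqrt (1-t)))^2 * ellipticK (Real.sqrt t)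
          / (1 - t + t^2) ^ ((7:ℝ)/4) = ∫ t in Set.Ioo (0:ℝ) 1, ((π / 2) ^ 3 * (8 / 27)) *
        (|27/8 * (t * (1 - t)) / rho t ^ 10| • (yr (5/36) (1 - sgm t) ^ 2 * yr (5/36) (sgm t))) := by
    refine setIntegral_congr_fun measurableSet_Ioo ?_
    intro t ht
    have hp := rho_pos t
    have ht0 := ht.1
    have ht1 : 0 < 1 - t := by linarith [ht.2]
    simp only
    rw [ellK_eq ht0.le ht.2, ellK_eq ht1.le (by linarith), ← hh_eq ht0 ht.2, ← hh_eq ht1 (by linarith),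
      rho_seven, abs_of_nonneg (by positivity)]
    unfold hh
    rw [rho_refl, sgm_refl, smul_eq_mul]
    field_simp
    try ring
  rw [hcongr, MeasureTheory.integral_const_mul, ← hsub]
  have hu4 : √(2 * √3) ^ 4 = 12 := by
    have h1 : √(2 * √3) ^ 2 = 2 * √3 := Real.sq_sqrt (by positivity)
    have h2 : (√3:ℝ) ^ 2 = 3 := Real.sq_sqrt (by norm_num)
    calc √(2 * √3) ^ 4 = (√(2 * √3) ^ 2) ^ 2 := by ring
      _ = 12 := by rw [h1, mul_pow, h2]; norm_num
  have hu : 0 < √(2 * √3) := by positivity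
  have hpi := Real.pi_pos
  set u := √(2 * √3)
  set g := Real.Gamma (1/4)
  have : u ^ 3 = 12 / u := by field_simp; linarith
  rw [this]
  field_simp
  ring
end

section
/- Beltrami transformation: for every k with 0 < k < 1, K(k) = (2/π) ∫_0^1 K(√(1−κ²)) / (1 − k² κ²) dκ. -/
open Real MeasureTheory intervalIntegral

lemma bel_lint {a b : ℝ} (hab : a ≤ b) {f : ℝ → ℝ} (hf : ContinuousOn f (Set.Icc a b))
    (h0 : ∀ x ∈ Set.Icc a b, 0 ≤ f x) :
    ∫⁻ x in Set.Ioo a b, ENNReal.ofReal (f x) = ENNReal.ofReal (∫ x in a..b, f x) := by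
  rw [intervalIntegral.integral_of_le hab, integral_Ioc_eq_integral_Ioo,
    ofReal_integral_eq_lintegral_ofReal]
  · exact (hf.integrableOn_Icc).mono_set Set.Ioo_subset_Icc_self
  · filter_upwards [ae_restrict_mem measurableSet_Ioo] with x hx
    exact h0 x (Set.Ioo_subset_Icc_self hx)

lemma bel_arctan {A B : ℝ} (hA : 0 < A) (hB : 0 < B) :
    ∫ θ in (0:ℝ)..(π/2), 1 / (A * sin θ ^ 2 + B * cos θ ^ 2) = (π/2) / (√A * √B) := by
  have hpos : ∀ θ : ℝ, 0 < A * sin θ ^ 2 + B * cos θ ^ 2 := by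
    intro θ
    have h := sin_sq_add_cos_sq θ
    rcases (sq_nonneg (sin θ)).eq_or_lt with h1 | h1
    · rw [← h1] at h ⊢; nlinarith
    · have := mul_pos hA h1
      have := mul_nonneg hB.le (sq_nonneg (cos θ))
      linarith
  have hsA := Real.sqrt_pos.2 hA
  have hsB := Real.sqrt_pos.2 hB
  have hp : (0:ℝ) < π/2 := by positivity
  have hd : ∀ x ∈ Set.Ioo (0:ℝ) (π/2), HasDerivAt
      (fun θ => arctan (√A / √B * tan θ) / (√A * √B))
      (1 / (A * sin x ^ 2 + B * cos x ^ 2)) x := by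
    intro x hx
    have hc : 0 < cos x := cos_pos_of_mem_Ioo ⟨by linarith [hx.1], hx.2⟩
    have h1 := (((hasDerivAt_tan hc.ne').const_mul (√A / √B)).arctan).div_const (√A * √B)
    refine h1.congr_deriv ?_
    symm
    have := hpos x
    have eA : A = √A ^ 2 := (Real.sq_sqrt hA.le).symm
    have eB : B = √B ^ 2 := (Real.sq_sqrt hB.le).symm
    rw [tan_eq_sin_div_cos]
    generalize √A = a at *
    generalize √B = b at *
    subst eA eB
    have h2 : 1 + (a / b * (sin x / cos x)) ^ 2
      = (a^2 * sin x ^ 2 + b^2 * cos x ^ 2) / (b^2 * cos x^2) := by field_simp; ring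
    rw [h2]
    field_simp
  have hcont : Continuous (fun θ : ℝ => 1 / (A * sin θ ^ 2 + B * cos θ ^ 2)) := by
    refine continuous_const.div (by fun_prop) (fun θ => (hpos θ).ne')
  have := integral_eq_sub_of_hasDerivAt_of_tendsto hp
    (fa := 0) (fb := (π/2) / (√A * √B)) hd (hcont.intervalIntegrable _ _) ?_ ?_
  · rw [this, sub_zero]
  · have : ContinuousAt (fun θ => arctan (√A / √B * tan θ) / (√A * √B)) 0 := by
      have : ContinuousAt tan 0 := continuousAt_tan.2 (by simp)
      exact ((continuous_arctan.continuousAt).comp (continuousAt_const.mul this)).div_const _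
    have h := this.tendsto
    simp only [tan_zero, mul_zero, arctan_zero, zero_div] at h
    exact h.mono_left nhdsWithin_le_nhds
  · refine Filter.Tendsto.div_const ?_ _
    have h1 := tendsto_tan_pi_div_two.const_mul_atTop (div_pos hsA hsB)
    exact (tendsto_arctan_atTop.mono_right nhdsWithin_le_nhds).comp h1

lemma bel_sub {k θ : ℝ} (hk : 0 < k) (hk1 : k < 1) (hθ : θ ∈ Set.Ioo (0:ℝ) (π/2)) :
    ∫ κ in (0:ℝ)..1, 1 / √(cos θ ^ 2 + κ ^ 2 * sin θ ^ 2) / (1 - k^2 * κ^2) =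
    ∫ φ in (0:ℝ)..(π/2), 
      cos φ * (1 / (cos φ ^ 2 * sin θ ^ 2 + (1 - k^2 * sin φ ^ 2) * cos θ ^ 2)) := by
  have hc : 0 < cos θ := cos_pos_of_mem_Ioo ⟨by linarith [hθ.1, pi_pos], hθ.2⟩
  have hsc := sin_sq_add_cos_sq θ
  have hkk : k^2 < 1 := by nlinarith
  set c := cos θ
  set s := sin θ
  have hm : s^2 + k^2 * c^2 < 1 := by nlinarith [mul_pos hc hc]
  have hg : ∀ u ∈ Set.Icc (0:ℝ) 1, 0 < 1 - (s^2 + k^2 * c^2) * u^2 := by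
    intro u hu
    have h1 : u^2 ≤ 1 := by nlinarith [hu.1, hu.2]
    have : 0 ≤ s^2 + k^2 * c^2 := by positivity
    nlinarith
  have hgc : ContinuousOn (fun u : ℝ => 1 / (1 - (s^2 + k^2 * c^2) * u^2)) (Set.Icc 0 1) :=
    continuousOn_const.div (by fun_prop) (fun u hu => (hg u hu).ne')
  have hD : ∀ x : ℝ, 0 < c^2 + x^2 * s^2 := fun x => by positivity
  trans ∫ u in (0:ℝ)..1, 1 / (1 - (s^2 + k^2 * c^2) * u^2)
  · have hder : ∀ x ∈ Set.uIcc (0:ℝ) 1, HasDerivAt (fun x : ℝ => x / √(c^2 + x^2 * s^2))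
        (c^2 / ((c^2 + x^2 * s^2) * √(c^2 + x^2 * s^2))) x := by
      intro x _
      have h0 : HasDerivAt (fun x : ℝ => c^2 + x^2 * s^2) (2 * x * s^2) x := by
        have := (((hasDerivAt_id x).pow 2).mul_const (s^2)).const_add (c^2)
        simpa using this
      have h1 := (hasDerivAt_id x).div (h0.sqrt (hD x).ne') (Real.sqrt_pos.2 (hD x)).ne'
      refine h1.congr_deriv ?_
      symm
      have e := Real.sq_sqrt (hD x).le
      have hq := Real.sqrt_pos.2 (hD x)
      generalize √(c^2 + x^2 * s^2) = q at *
      rw [← e]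
      simp only [id]
      field_simp
      linarith
    have hmem : ∀ x ∈ Set.Icc (0:ℝ) 1, x / √(c^2 + x^2 * s^2) ∈ Set.Icc (0:ℝ) 1 := by
      intro x hx
      have hq := Real.sqrt_pos.2 (hD x)
      refine ⟨div_nonneg hx.1 hq.le, (div_le_one hq).2 (Real.le_sqrt_of_sq_le ?_)⟩
      have : x^2 ≤ 1 := by nlinarith [hx.1, hx.2]
      nlinarith [sq_nonneg c]
    have key := integral_comp_mul_deriv' (a := (0:ℝ)) (b := 1)
      (g := fun u : ℝ => 1 / (1 - (s^2 + k^2 * c^2) * u^2)) hder ?_ (hgc.mono ?_)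
    · have e1 : c^2 + 1^2 * s^2 = 1 := by linarith
      rw [e1] at key
      simp only [zero_div, Real.sqrt_one, div_one] at key
      rw [← key]
      refine integral_congr (fun x hx => ?_)
      rw [Set.uIcc_of_le zero_le_one] at hx
      have e := Real.sq_sqrt (hD x).le
      have hq := Real.sqrt_pos.2 (hD x)
      have hgx := hg _ (hmem x hx)
      have hx2 : 0 < 1 - k^2 * x^2 := by
        have : x^2 ≤ 1 := by nlinarith [hx.1, hx.2]
        nlinarith [sq_nonneg x]
      simp only [Function.comp]
      have e3 : 1 - (s^2 + k^2 * c^2) * (x / √(c^2 + x^2 * s^2))^2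
          = c^2 * (1 - k^2 * x^2) / (c^2 + x^2 * s^2) := by
        rw [div_pow, e]
        have := (hD x).ne'
        field_simp
        ring
      rw [e3]
      have := (hD x).ne'
      field_simp
    · refine Continuous.continuousOn (continuous_const.div (by fun_prop) (fun x => ?_))
      exact (mul_pos (hD x) (Real.sqrt_pos.2 (hD x))).ne'
    · rw [Set.uIcc_of_le zero_le_one]
      rintro _ ⟨x, hx, rfl⟩
      exact hmem x hx
  · have key := integral_comp_mul_deriv' (a := (0:ℝ)) (b := π/2) (f := sin) (f' := cos)
      (g := fun u : ℝ => 1 / (1 - (s^2 + k^2 * c^2) * u^2)) (fun x _ => hasDerivAt_sin x)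
      (by fun_prop) (hgc.mono ?_)
    · rw [sin_zero, sin_pi_div_two] at key
      rw [← key]
      refine integral_congr (fun x hx => ?_)
      simp only [Function.comp]
      rw [mul_comm]
      congr 3
      have := sin_sq_add_cos_sq x
      linear_combination (-s^2) * this - hsc
    · rw [Set.uIcc_of_le (by positivity)]
      rintro _ ⟨x, hx, rfl⟩
      exact ⟨sin_nonneg_of_nonneg_of_le_pi hx.1 (by linarith [hx.2, pi_pos]), sin_le_one x⟩

/-- Beltrami transformation. -/
theorem stmt_10 (k : ℝ) (hk : 0 < k) (hk1 : k < 1) :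
    ellipticK k
      = (2/π) * ∫ κ in (0:ℝ)..1, ellipticK (Real.sqrt (1 - κ^2)) / (1 - k^2 * κ^2) := by
  have hp : (0:ℝ) < π/2 := by positivity
  have hkk : k^2 < 1 := by nlinarith
  have hk0 : 0 < k^2 := by positivity
  have hden : ∀ x ∈ Set.Icc (0:ℝ) 1, 0 < 1 - k^2 * x^2 := by
    intro x hx
    have : x^2 ≤ 1 := by nlinarith [hx.1, hx.2]
    nlinarith [sq_nonneg x]
  have hdens : ∀ x : ℝ, 0 < 1 - k^2 * sin x^2 := by
    intro x
    nlinarith [sin_sq_le_one x, sq_nonneg (sin x)]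
  have hcos : ∀ x ∈ Set.Icc (0:ℝ) (π/2), 0 ≤ cos x := fun x hx =>
    cos_nonneg_of_mem_Icc ⟨by linarith [hx.1], hx.2⟩
  have hcos' : ∀ x ∈ Set.Ioo (0:ℝ) (π/2), 0 < cos x := fun x hx =>
    cos_pos_of_mem_Ioo ⟨by linarith [hx.1], hx.2⟩
  let F : ℝ → ℝ → ℝ := fun κ θ => 1 / √(cos θ ^ 2 + κ ^ 2 * sin θ ^ 2) / (1 - k^2 * κ^2)
  let G : ℝ → ℝ → ℝ := fun θ φ =>
    cos φ * (1 / (cos φ ^ 2 * sin θ ^ 2 + (1 - k^2 * sin φ ^ 2) * cos θ ^ 2))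
  have hFm : Measurable (fun p : ℝ × ℝ => ENNReal.ofReal (F p.1 p.2)) := by
    simp only [F]; fun_prop
  have hGm : Measurable (fun p : ℝ × ℝ => ENNReal.ofReal (G p.1 p.2)) := by
    simp only [G]; fun_prop
  -- inner integral in theta
  have step1 : ∀ κ ∈ Set.Ioo (0:ℝ) 1,
      ∫⁻ θ in Set.Ioo (0:ℝ) (π/2), ENNReal.ofReal (F κ θ)
        = ENNReal.ofReal (ellipticK (√(1 - κ^2)) / (1 - k^2 * κ^2)) := by
    intro κ hκ
    have hκ' := Set.Ioo_subset_Icc_self hκ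
    have hpos : ∀ θ : ℝ, 0 < cos θ ^ 2 + κ ^ 2 * sin θ ^ 2 := by
      intro θ
      have h := sin_sq_add_cos_sq θ
      have h2 : 0 < κ^2 := pow_pos hκ.1 2
      have h3 : κ^2 < 1 := by nlinarith [hκ.1, hκ.2]
      nlinarith [sq_nonneg (cos θ), sq_nonneg (sin θ)]
    rw [bel_lint hp.le]
    · congr 1
      simp only [F]
      rw [intervalIntegral.integral_div, ellipticK]
      congr 1
      refine integral_congr (fun θ _ => ?_)
      have h3 : κ^2 ≤ 1 := by nlinarith [hκ.1, hκ.2]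
      rw [Real.sq_sqrt (by linarith)]
      congr 2
      linear_combination sin_sq_add_cos_sq θ
    · refine Continuous.continuousOn (Continuous.div_const ?_ _)
      exact continuous_const.div (by fun_prop) (fun x => (Real.sqrt_pos.2 (hpos x)).ne')
    · intro x _
      have := hden κ hκ'
      simp only [F]
      positivity
  have hKnn : ∀ x, 0 ≤ ellipticK x := fun x =>
    intervalIntegral.integral_nonneg hp.le (fun θ _ => by positivity)
  have step2 : ∫ κ in (0:ℝ)..1, ellipticK (Real.sqrt (1 - κ^2)) / (1 - k^2 * κ^2)
      = (∫⁻ κ in Set.Ioo (0:ℝ) 1, ∫⁻ θ in Set.Ioo (0:ℝ) (π/2), ENNReal.ofReal (F κ θ)).toReal := by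
    rw [intervalIntegral.integral_of_le zero_le_one, integral_Ioc_eq_integral_Ioo,
      ← integral_toReal]
    · refine setIntegral_congr_fun measurableSet_Ioo (fun κ hκ => ?_)
      rw [step1 κ hκ, ENNReal.toReal_ofReal]
      exact div_nonneg (hKnn _) (hden κ (Set.Ioo_subset_Icc_self hκ)).le
    · exact (hFm.lintegral_prod_right').aemeasurable
    · filter_upwards [ae_restrict_mem measurableSet_Ioo] with κ hκ
      rw [step1 κ hκ]
      exact ENNReal.ofReal_lt_top
  have step3 : ∀ θ ∈ Set.Ioo (0:ℝ) (π/2),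
      ∫⁻ κ in Set.Ioo (0:ℝ) 1, ENNReal.ofReal (F κ θ)
        = ∫⁻ φ in Set.Ioo (0:ℝ) (π/2), ENNReal.ofReal (G θ φ) := by
    intro θ hθ
    have hc := hcos' θ hθ
    have hD : ∀ x : ℝ, 0 < cos θ^2 + x^2 * sin θ^2 := fun x => by positivity
    have hE : ∀ φ : ℝ, 0 < cos φ ^ 2 * sin θ ^ 2 + (1 - k^2 * sin φ ^ 2) * cos θ ^ 2 := by
      intro φ
      have := hdens φ
      positivity
    rw [bel_lint zero_le_one, bel_lint hp.le]
    · congr 1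
      exact bel_sub hk hk1 hθ
    · refine Continuous.continuousOn (continuous_cos.mul ?_)
      exact continuous_const.div (by fun_prop) (fun x => (hE x).ne')
    · intro x hx
      have := hE x
      have := hcos x hx
      simp only [G]
      positivity
    · refine ContinuousOn.div ?_ (by fun_prop) (fun x hx => (hden x hx).ne')
      exact Continuous.continuousOn
        (continuous_const.div (by fun_prop) (fun x => (Real.sqrt_pos.2 (hD x)).ne'))
    · intro x hx
      have := hden x hx
      simp only [F]
      positivity
  have step4 : ∀ φ ∈ Set.Ioo (0:ℝ) (π/2),
      ∫⁻ θ in Set.Ioo (0:ℝ) (π/2), ENNReal.ofReal (G θ φ)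
        = ENNReal.ofReal ((π/2) * (1 / √(1 - k^2 * sin φ ^ 2))) := by
    intro φ hφ
    have hc := hcos' φ hφ
    have hB := hdens φ
    have hpos : ∀ θ : ℝ, 0 < cos φ ^ 2 * sin θ ^ 2 + (1 - k^2 * sin φ ^ 2) * cos θ ^ 2 := by
      intro θ
      have h := sin_sq_add_cos_sq θ
      rcases (sq_nonneg (sin θ)).eq_or_lt with h1 | h1
      · rw [← h1] at h ⊢; nlinarith
      · have := mul_pos (pow_pos hc 2) h1
        have := mul_nonneg hB.le (sq_nonneg (cos θ))
        linarith
    rw [bel_lint hp.le]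
    · congr 1
      simp only [G]
      rw [intervalIntegral.integral_const_mul, bel_arctan (pow_pos hc 2) hB, Real.sqrt_sq hc.le]
      have := Real.sqrt_pos.2 hB
      field_simp
    · refine Continuous.continuousOn (continuous_const.mul ?_)
      exact continuous_const.div (by fun_prop) (fun x => (hpos x).ne')
    · intro x _
      have := hpos x
      simp only [G]
      positivity
  have step5 : ∫⁻ κ in Set.Ioo (0:ℝ) 1, ∫⁻ θ in Set.Ioo (0:ℝ) (π/2), ENNReal.ofReal (F κ θ)
      = ENNReal.ofReal ((π/2) * ellipticK k) := by
    rw [lintegral_lintegral_swap hFm.aemeasurable, setLIntegral_congr_fun measurableSet_Ioo step3,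
      lintegral_lintegral_swap hGm.aemeasurable, setLIntegral_congr_fun measurableSet_Ioo step4,
      bel_lint hp.le, intervalIntegral.integral_const_mul, ellipticK]
    · refine Continuous.continuousOn (continuous_const.mul ?_)
      exact continuous_const.div (by fun_prop) (fun x => (Real.sqrt_pos.2 (hdens x)).ne')
    · intro x _
      positivity
  rw [step2, step5, ENNReal.toReal_ofReal (mul_nonneg hp.le (hKnn k))]
  field_simp
end

section
/- For every x with −1 < x < 1, the Cauchy principal value P∫_{−1}^1 K(√((1−ξ)/2)) / (π (x−ξ) √(1+ξ)) dξ equals K(√((1+x)/2)) / √(1+x). -/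
open Real MeasureTheory intervalIntegral Filter Topology

lemma ftc_nonneg {F f : ℝ → ℝ} {p q : ℝ} (hpq : p ≤ q) (hF : ContinuousOn F (Set.Icc p q))
    (hd : ∀ x ∈ Set.Ioo p q, HasDerivAt F (f x) x) (h0 : ∀ x ∈ Set.Ioo p q, 0 ≤ f x) :
    IntegrableOn f (Set.Ioo p q) ∧ ∫ x in Set.Ioo p q, f x = F q - F p := by
  have h1 := integrableOn_deriv_of_nonneg hF hd h0
  refine ⟨h1.mono_set Set.Ioo_subset_Ioc_self, ?_⟩
  rw [← integral_Ioc_eq_integral_Ioo, ← intervalIntegral.integral_of_le hpq]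
  exact integral_eq_sub_of_hasDerivAt_of_le hpq hF hd
    ((intervalIntegrable_iff_integrableOn_Ioc_of_le hpq).2 h1)

lemma ftc_nonpos {F f : ℝ → ℝ} {p q : ℝ} (hpq : p ≤ q) (hF : ContinuousOn F (Set.Icc p q))
    (hd : ∀ x ∈ Set.Ioo p q, HasDerivAt F (f x) x) (h0 : ∀ x ∈ Set.Ioo p q, f x ≤ 0) :
    IntegrableOn f (Set.Ioo p q) ∧ ∫ x in Set.Ioo p q, f x = F q - F p := by
  obtain ⟨h1, h2⟩ := ftc_nonneg (F := fun x => - F x) (f := fun x => - f x) hpq hF.neg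
    (fun x hx => (hd x hx).neg) (fun x hx => by have := h0 x hx; linarith)
  refine ⟨by simpa using h1.neg, ?_⟩
  rw [MeasureTheory.integral_neg] at h2
  linarith

lemma arcsin_deriv_aux {u : ℝ} (h0 : 0 < u) (h1 : u < 1) :
    HasDerivAt (fun u : ℝ => arcsin (2 * u - 1)) (1 / (√u * √(1 - u))) u := by
  have h := (Real.hasDerivAt_arcsin (x := 2 * u - 1) (by linarith) (by linarith)).comp u
    (((hasDerivAt_id u).const_mul 2).sub_const 1)
  refine h.congr_deriv ?_
  have : √(1 - (2 * u - 1) ^ 2) = 2 * (√u * √(1 - u)) := by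
    rw [← Real.sqrt_mul h0.le, show 1 - (2 * u - 1) ^ 2 = 2 ^ 2 * (u * (1 - u)) by ring,
      Real.sqrt_mul (by norm_num), Real.sqrt_sq (by norm_num)]
  rw [this]
  have : 0 < √u := Real.sqrt_pos.2 h0
  have : 0 < √(1 - u) := Real.sqrt_pos.2 (by linarith)
  field_simp

/-- the antiderivative in the case `w < a` -/
lemma inner_lt {a w : ℝ} (hw : 0 < w) (hwa : w < a) :
    IntegrableOn (fun y => 1 / ((a - y) * √y * √(w - y))) (Set.Ioo 0 w) ∧
    ∫ y in Set.Ioo 0 w, 1 / ((a - y) * √y * √(w - y)) = π / (√a * √(a - w)) := by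
  have ha : 0 < a := hw.trans hwa
  have hA : 0 < √a := Real.sqrt_pos.2 ha
  have hB : 0 < √(a - w) := Real.sqrt_pos.2 (by linarith)
  have hA2 := Real.sq_sqrt ha.le
  have hB2 := Real.sq_sqrt (show 0 ≤ a - w by linarith)
  have key := ftc_nonneg (p := 0) (q := w)
    (F := fun y => 1 / (√a * √(a - w)) * arcsin (2 * ((a - w) * y / (w * (a - y))) - 1))
    (f := fun y => 1 / ((a - y) * √y * √(w - y))) hw.le ?_ ?_ ?_
  · refine ⟨key.1, key.2.trans ?_⟩
    have : (a - w) * w / (w * (a - w)) = 1 := by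
      have : a - w ≠ 0 := by linarith
      field_simp
    simp only [this]
    norm_num
    ring
  · refine ContinuousOn.mul continuousOn_const ?_
    refine Real.continuous_arcsin.comp_continuousOn ?_
    refine ContinuousOn.sub (ContinuousOn.mul continuousOn_const ?_) continuousOn_const
    refine ContinuousOn.div (by fun_prop) (by fun_prop) ?_
    intro y hy
    have : 0 < a - y := by linarith [hy.2]
    positivity
  · intro y hy
    have h1 : 0 < a - y := by linarith [hy.2]
    have h2 : 0 < a - w := by linarith
    have h3 : 0 < y := hy.1
    have h4 : 0 < w - y := by linarith [hy.2]
    have e1 : 1 - (a - w) * y / (w * (a - y)) = a * (w - y) / (w * (a - y)) := by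
      field_simp; ring
    have hu0 : 0 < (a - w) * y / (w * (a - y)) := by positivity
    have hu1 : (a - w) * y / (w * (a - y)) < 1 := by
      have : 0 < a * (w - y) / (w * (a - y)) := by positivity
      linarith
    have hd : HasDerivAt (fun y => (a - w) * y / (w * (a - y))) ((a - w) * a / (w * (a - y)^2)) y := by
      have := ((hasDerivAt_id y).const_mul (a - w)).div
        (((hasDerivAt_id y).const_sub a).const_mul w) (by simp only [id]; positivity)
      refine this.congr_deriv ?_
      simp only [id]
      field_simp
      ring
    have := ((arcsin_deriv_aux hu0 hu1).comp y hd).const_mul (1 / (√a * √(a - w)))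
    refine this.congr_deriv ?_
    rw [e1, ← Real.sqrt_mul hu0.le]
    have e2 : (a - w) * y / (w * (a - y)) * (a * (w - y) / (w * (a - y))) =
      (a * (a - w) * (y * (w - y))) / (w * (a - y))^2 := by field_simp
    rw [e2, Real.sqrt_div (by positivity), Real.sqrt_sq (by positivity),
      Real.sqrt_mul (by positivity), Real.sqrt_mul ha.le, Real.sqrt_mul h3.le]
    have hp : 0 < √y := Real.sqrt_pos.2 h3
    have hq : 0 < √(w - y) := Real.sqrt_pos.2 h4
    field_simp
    rw [hA2, hB2]
  · intro y hy
    have h1 : 0 < a - y := by linarith [hy.2]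
    positivity

lemma beta_int {p q : ℝ} (hpq : p < q) :
    Integrable (fun y => 1 / (√(y - p) * √(q - y))) ∧
    ∫ y, 1 / (√(y - p) * √(q - y)) = π := by
  have hz : ∀ y ∉ Set.Ioo p q, 1 / (√(y - p) * √(q - y)) = 0 := by
    intro y hy
    rw [Set.mem_Ioo, not_and_or, not_lt, not_lt] at hy
    rcases hy with h | h
    · rw [Real.sqrt_eq_zero_of_nonpos (show y - p ≤ 0 by linarith)]; simp
    · rw [Real.sqrt_eq_zero_of_nonpos (show q - y ≤ 0 by linarith)]; simp
  have h0 : 0 < q - p := by linarith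
  have key := ftc_nonneg (p := p) (q := q)
    (F := fun y => arcsin (2 * ((y - p) / (q - p)) - 1))
    (f := fun y => 1 / (√(y - p) * √(q - y))) hpq.le ?_ ?_ ?_
  · refine ⟨key.1.integrable_of_forall_notMem_eq_zero hz, ?_⟩
    rw [← setIntegral_eq_integral_of_forall_compl_eq_zero hz, key.2]
    simp only [sub_self, div_self h0.ne']
    norm_num
  · exact (Real.continuous_arcsin.comp (by fun_prop)).continuousOn
  · intro y hy
    have h3 : 0 < y - p := by linarith [hy.1]
    have h4 : 0 < q - y := by linarith [hy.2]
    have e1 : 1 - (y - p) / (q - p) = (q - y) / (q - p) := by field_simp; ring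
    have hu0 : 0 < (y - p) / (q - p) := by positivity
    have hu1 : (y - p) / (q - p) < 1 := by
      have : 0 < (q - y) / (q - p) := by positivity
      linarith
    have hd : HasDerivAt (fun y => (y - p) / (q - p)) (1 / (q - p)) y :=
      ((hasDerivAt_id y).sub_const p).div_const _
    refine ((arcsin_deriv_aux hu0 hu1).comp y hd).congr_deriv ?_
    rw [e1, Real.sqrt_div h3.le, Real.sqrt_div h4.le]
    have hp : 0 < √(y - p) := Real.sqrt_pos.2 h3
    have hq : 0 < √(q - y) := Real.sqrt_pos.2 h4
    have hr : 0 < √(q - p) := Real.sqrt_pos.2 h0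
    have hr2 := Real.sq_sqrt h0.le
    field_simp
    rw [hr2]
  · intro y hy
    positivity

/-- the antiderivative in the case `a < w` -/
noncomputable def PhiAux (a w y : ℝ) : ℝ :=
  1 / (√a * √(w - a)) * (2 * Real.log (√a * √(w - y) + √(w - a) * √y) - Real.log (a - y))

lemma phi_pos {a w y : ℝ} (ha : 0 < a) (haw : a < w) (hy : y ∈ Set.Icc 0 w) :
    0 < √a * √(w - y) + √(w - a) * √y := by
  have hA : 0 < √a := Real.sqrt_pos.2 ha
  have hB : 0 < √(w - a) := Real.sqrt_pos.2 (by linarith)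
  rcases eq_or_lt_of_le hy.1 with h | h
  · have : 0 < √(w - y) := Real.sqrt_pos.2 (by linarith)
    positivity
  · have : 0 < √y := Real.sqrt_pos.2 h
    positivity

lemma phi_cont {a w : ℝ} (ha : 0 < a) (haw : a < w) {s : Set ℝ} (hs : s ⊆ Set.Icc 0 w)
    (has : a ∉ s) : ContinuousOn (PhiAux a w) s := by
  unfold PhiAux
  refine ContinuousOn.mul continuousOn_const (ContinuousOn.sub (ContinuousOn.mul continuousOn_const
    (ContinuousOn.log (by fun_prop) ?_)) (ContinuousOn.log (by fun_prop) ?_))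
  · intro y hy
    exact (phi_pos ha haw (hs hy)).ne'
  · intro y hy h
    exact has ((sub_eq_zero.1 h) ▸ hy)

lemma phi_deriv {a w y : ℝ} (ha : 0 < a) (haw : a < w) (hy : y ∈ Set.Ioo 0 w) (hya : y ≠ a) :
    HasDerivAt (PhiAux a w) (1 / ((a - y) * √y * √(w - y))) y := by
  have hN := phi_pos ha haw (Set.Ioo_subset_Icc_self hy)
  have hA : 0 < √a := Real.sqrt_pos.2 ha
  have hB : 0 < √(w - a) := Real.sqrt_pos.2 (by linarith)
  have hp : 0 < √y := Real.sqrt_pos.2 hy.1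
  have hq : 0 < √(w - y) := Real.sqrt_pos.2 (by linarith [hy.2])
  have hay : a - y ≠ 0 := fun h => hya (by linarith)
  have h1 : HasDerivAt (fun y => √a * √(w - y) + √(w - a) * √y)
      (√a * (-1 / (2 * √(w - y))) + √(w - a) * (1 / (2 * √y))) y :=
    ((((hasDerivAt_id y).const_sub w).sqrt (by simp only [id]; linarith [hy.2])).const_mul _).add
      (((hasDerivAt_id y).sqrt hy.1.ne').const_mul _)
  have h2 := (((h1.log hN.ne').const_mul 2).sub
    (((hasDerivAt_id y).const_sub a).log hay)).const_mul (1 / (√a * √(w - a)))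
  refine h2.congr_deriv ?_
  simp only [id]
  have e1 := Real.sq_sqrt ha.le
  have e2 := Real.sq_sqrt (show 0 ≤ w - a by linarith)
  have e3 := Real.sq_sqrt hy.1.le
  have e4 := Real.sq_sqrt (show 0 ≤ w - y by linarith [hy.2])
  generalize √a = A at *
  generalize √(w - a) = B at *
  generalize √y = P at *
  generalize √(w - y) = Q at *
  have ea : a - y = A ^ 2 - P ^ 2 := by rw [e1, e3]
  rw [ea] at hay ⊢
  have eQ : A ^ 2 + B ^ 2 = P ^ 2 + Q ^ 2 := by rw [e1, e2, e3, e4]; ring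
  have hne : A * Q + B * P ≠ 0 := hN.ne'
  field_simp
  have hB2 : B ^ 2 = P ^ 2 + Q ^ 2 - A ^ 2 := by linarith
  linear_combination (- A * P) * eQ

lemma phi_zero {a w : ℝ} (ha : 0 < a) (haw : a < w) :
    PhiAux a w 0 = 1 / (√a * √(w - a)) * Real.log w := by
  have hA : 0 < √a := Real.sqrt_pos.2 ha
  have hW : 0 < √w := Real.sqrt_pos.2 (by linarith)
  unfold PhiAux
  simp only [sub_zero, Real.sqrt_zero, mul_zero, add_zero]
  rw [Real.log_mul hA.ne' hW.ne', Real.log_sqrt ha.le, Real.log_sqrt (by linarith)]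
  ring

lemma phi_end {a w : ℝ} (ha : 0 < a) (haw : a < w) :
    PhiAux a w w = 1 / (√a * √(w - a)) * Real.log w := by
  have hB : 0 < √(w - a) := Real.sqrt_pos.2 (by linarith)
  have hW : 0 < √w := Real.sqrt_pos.2 (by linarith)
  unfold PhiAux
  simp only [sub_self, Real.sqrt_zero, mul_zero, zero_add]
  rw [Real.log_mul hB.ne' hW.ne', Real.log_sqrt (by linarith), Real.log_sqrt (by linarith),
    ← Real.log_neg_eq_log (a - w), neg_sub]
  ring

/-- truncated domain -/
def SAux (a ε : ℝ) : Set ℝ := {y | y ∈ Set.Ioo (0:ℝ) 1 ∧ ε < |y - a|}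

lemma measurableSet_SAux (a ε : ℝ) : MeasurableSet (SAux a ε) := by
  have h : MeasurableSet {y : ℝ | ε < |y - a|} := measurableSet_lt measurable_const (by fun_prop)
  exact measurableSet_Ioo.inter h

/-- truncated inner integral -/
noncomputable def JAux (a ε w : ℝ) : ℝ := ∫ y in SAux a ε, 1 / ((a - y) * √y * √(w - y))

lemma JAux_eq {a ε w : ℝ} {s : Set ℝ} (hs : s ⊆ SAux a ε) (hs2 : ∀ y ∈ SAux a ε, y < w → y ∈ s) :
    JAux a ε w = ∫ y in s, 1 / ((a - y) * √y * √(w - y)) := by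
  unfold JAux
  refine setIntegral_eq_of_subset_of_forall_sdiff_eq_zero (measurableSet_SAux a ε) hs ?_
  intro y hy
  have : w ≤ y := by
    by_contra h
    exact hy.2 (hs2 y hy.1 (not_le.1 h))
  rw [Real.sqrt_eq_zero_of_nonpos (show w - y ≤ 0 by linarith)]; simp

lemma JAux_lt_eq {a ε w : ℝ} (ha1 : a < 1) (hw : 0 < w) (hwa : w < a) (hεw : ε < a - w) :
    JAux a ε w = π / (√a * √(a - w)) := by
  rw [← (inner_lt hw hwa).2]
  apply JAux_eq
  · intro y hy
    refine ⟨⟨hy.1, by linarith [hy.2]⟩, ?_⟩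
    rw [abs_sub_comm]
    exact lt_of_lt_of_le (by linarith [hy.2]) (le_abs_self _)
  · intro y hy h
    exact ⟨hy.1.1, h⟩

lemma JAux_lt_bound {a ε w : ℝ} (ha1 : a < 1) (hw : 0 < w) (hwa : w < a) :
    |JAux a ε w| ≤ π / (√a * √(a - w)) := by
  have h : JAux a ε w = ∫ y in SAux a ε ∩ Set.Ioo 0 w, 1 / ((a - y) * √y * √(w - y)) := by
    apply JAux_eq Set.inter_subset_left
    intro y hy h
    exact ⟨hy, hy.1.1, h⟩
  have hpos : ∀ y ∈ Set.Ioo 0 w, 0 ≤ 1 / ((a - y) * √y * √(w - y)) := by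
    intro y hy
    have : 0 < a - y := by linarith [hy.2]
    positivity
  rw [h, abs_of_nonneg, ← (inner_lt hw hwa).2]
  · refine setIntegral_mono_set (inner_lt hw hwa).1 ?_ (Set.inter_subset_right.eventuallyLE)
    exact (ae_restrict_iff' measurableSet_Ioo).2 (ae_of_all _ hpos)
  · refine setIntegral_nonneg ((measurableSet_SAux a ε).inter measurableSet_Ioo) ?_
    intro y hy
    exact hpos y hy.2

lemma inner_left {a w ε : ℝ} (ha : 0 < a) (haw : a < w) (hε : 0 < ε) (hεa : ε < a) :
    IntegrableOn (fun y => 1 / ((a - y) * √y * √(w - y))) (Set.Ioo 0 (a - ε)) ∧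
    ∫ y in Set.Ioo 0 (a - ε), 1 / ((a - y) * √y * √(w - y)) =
      PhiAux a w (a - ε) - PhiAux a w 0 := by
  refine ftc_nonneg (by linarith) (phi_cont ha haw ?_ ?_) ?_ ?_
  · exact Set.Icc_subset_Icc le_rfl (by linarith)
  · intro h; linarith [h.2]
  · intro y hy
    exact phi_deriv ha haw ⟨hy.1, by linarith [hy.2]⟩ (by linarith [hy.2])
  · intro y hy
    have : 0 < a - y := by linarith [hy.2]
    positivity

lemma inner_right {a w ε : ℝ} (ha : 0 < a) (haw : a < w) (hε : 0 < ε) (hεw : ε < w - a) :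
    IntegrableOn (fun y => 1 / ((a - y) * √y * √(w - y))) (Set.Ioo (a + ε) w) ∧
    ∫ y in Set.Ioo (a + ε) w, 1 / ((a - y) * √y * √(w - y)) =
      PhiAux a w w - PhiAux a w (a + ε) := by
  refine ftc_nonpos (by linarith) (phi_cont ha haw ?_ ?_) ?_ ?_
  · exact Set.Icc_subset_Icc (by linarith) le_rfl
  · intro h; linarith [h.1]
  · intro y hy
    exact phi_deriv ha haw ⟨by linarith [hy.1], by linarith [hy.2]⟩ (by linarith [hy.1])
  · intro y hy
    have : a - y ≤ 0 := by linarith [hy.1]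
    apply div_nonpos_of_nonneg_of_nonpos zero_le_one
    rw [mul_assoc]
    exact mul_nonpos_of_nonpos_of_nonneg this (by positivity)

/-- numerator in the logarithm -/
noncomputable def NAux (a w y : ℝ) : ℝ := √a * √(w - y) + √(w - a) * √y

lemma JAux_gt_small {a ε w : ℝ} (ha : 0 < a) (haw : a < w) (hw1 : w < 1) (hε : 0 < ε)
    (hεa : ε < a) (hεw : ε < w - a) :
    JAux a ε w = 1 / (√a * √(w - a)) *
      (2 * (Real.log (NAux a w (a - ε)) - Real.log (NAux a w (a + ε)))) := by
  have h : JAux a ε w = ∫ y in Set.Ioo 0 (a - ε) ∪ Set.Ioo (a + ε) w,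
      1 / ((a - y) * √y * √(w - y)) := by
    apply JAux_eq
    · rintro y (hy | hy)
      · refine ⟨⟨hy.1, by linarith [hy.2]⟩, ?_⟩
        rw [abs_sub_comm]
        exact lt_of_lt_of_le (by linarith [hy.2]) (le_abs_self _)
      · refine ⟨⟨by linarith [hy.1], by linarith [hy.2]⟩, ?_⟩
        exact lt_of_lt_of_le (by linarith [hy.1]) (le_abs_self _)
    · intro y hy h
      rcases lt_abs.1 hy.2 with h' | h'
      · right; exact ⟨by linarith, h⟩
      · left; exact ⟨hy.1.1, by linarith⟩
  have hl := inner_left ha haw hε hεa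
  have hr := inner_right ha haw hε hεw
  rw [h, setIntegral_union ?_ measurableSet_Ioo hl.1 hr.1, hl.2, hr.2, phi_zero ha haw,
    phi_end ha haw]
  · unfold PhiAux NAux
    rw [show a - (a - ε) = ε by ring, show a - (a + ε) = -ε by ring, Real.log_neg_eq_log]
    ring
  · rw [Set.disjoint_left]
    intro y hy hy'
    linarith [hy.2, hy'.1]

lemma log3 : Real.log 3 ≤ 2 := by
  have := Real.log_le_sub_one_of_pos (show (0:ℝ) < 3 by norm_num)
  linarith

lemma sqrt_two_mul_le {c d : ℝ} (hc : 0 ≤ c) (h : d ≤ 2 * c) : √d ≤ 2 * √c := by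
  apply Real.sqrt_le_iff.2
  refine ⟨by positivity, ?_⟩
  rw [mul_pow, Real.sq_sqrt hc]
  linarith

lemma JAux_gt_bound {a ε w : ℝ} (ha : 0 < a) (haw : a < w) (hw1 : w < 1) (hε : 0 < ε)
    (hεa : ε < a) : |JAux a ε w| ≤ 4 / (√a * √(w - a)) := by
  have hA : 0 < √a := Real.sqrt_pos.2 ha
  have hB : 0 < √(w - a) := Real.sqrt_pos.2 (by linarith)
  rcases lt_or_ge ε (w - a) with hεw | hεw
  · rw [JAux_gt_small ha haw hw1 hε hεa hεw, abs_mul, abs_of_pos (by positivity), div_eq_mul_one_div 4,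
      mul_comm (4:ℝ)]
    refine mul_le_mul_of_nonneg_left ?_ (by positivity)
    rw [abs_mul, abs_of_pos (by norm_num : (0:ℝ) < 2)]
    have hAB : 0 < √a * √(w - a) := by positivity
    have l1 : √a * √(w - a) ≤ NAux a w (a - ε) := by
      unfold NAux
      have : √(w - a) ≤ √(w - (a - ε)) := Real.sqrt_le_sqrt (by linarith)
      have := mul_le_mul_of_nonneg_left this hA.le
      have : 0 ≤ √(w - a) * √(a - ε) := by positivity
      linarith
    have l2 : √a * √(w - a) ≤ NAux a w (a + ε) := by
      unfold NAux
      have : √a ≤ √(a + ε) := Real.sqrt_le_sqrt (by linarith)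
      have := mul_le_mul_of_nonneg_left this hB.le
      have : 0 ≤ √a * √(w - (a + ε)) := by positivity
      linarith
    have u1 : NAux a w (a - ε) ≤ 3 * (√a * √(w - a)) := by
      unfold NAux
      have h1 : √(a - ε) ≤ √a := Real.sqrt_le_sqrt (by linarith)
      have h2 : √(w - (a - ε)) ≤ 2 * √(w - a) := sqrt_two_mul_le (by linarith) (by linarith)
      have := mul_le_mul_of_nonneg_left h1 hB.le
      have := mul_le_mul_of_nonneg_left h2 hA.le
      linarith
    have u2 : NAux a w (a + ε) ≤ 3 * (√a * √(w - a)) := by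
      unfold NAux
      have h1 : √(w - (a + ε)) ≤ √(w - a) := Real.sqrt_le_sqrt (by linarith)
      have h2 : √(a + ε) ≤ 2 * √a := sqrt_two_mul_le (by linarith) (by linarith)
      have := mul_le_mul_of_nonneg_left h1 hA.le
      have := mul_le_mul_of_nonneg_left h2 hB.le
      linarith
    have m1 := Real.log_le_log hAB l1
    have m2 := Real.log_le_log hAB l2
    have m3 := Real.log_le_log (by linarith) u1
    have m4 := Real.log_le_log (by linarith) u2
    rw [Real.log_mul (by norm_num) hAB.ne'] at m3 m4
    have := log3
    have : |Real.log (NAux a w (a - ε)) - Real.log (NAux a w (a + ε))| ≤ 2 := by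
      rw [abs_le]; constructor <;> linarith
    linarith
  · have h : JAux a ε w = ∫ y in Set.Ioo 0 (a - ε), 1 / ((a - y) * √y * √(w - y)) := by
      apply JAux_eq
      · intro y hy
        refine ⟨⟨hy.1, by linarith [hy.2]⟩, ?_⟩
        rw [abs_sub_comm]
        exact lt_of_lt_of_le (by linarith [hy.2]) (le_abs_self _)
      · intro y hy h
        rcases lt_abs.1 hy.2 with h' | h'
        · linarith
        · exact ⟨hy.1.1, by linarith⟩
    rw [h, abs_of_nonneg, (inner_left ha haw hε hεa).2, phi_zero ha haw]
    · unfold PhiAux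
      rw [← mul_sub, div_eq_mul_one_div 4, mul_comm (4:ℝ)]
      refine mul_le_mul_of_nonneg_left ?_ (by positivity)
      have hE : 0 < √ε := Real.sqrt_pos.2 hε
      have hN := phi_pos (y := a - ε) ha haw ⟨by linarith, by linarith⟩
      have u1 : √a * √(w - (a - ε)) + √(w - a) * √(a - ε) ≤ 3 * (√a * √ε) := by
        have h1 : √(a - ε) ≤ √a := Real.sqrt_le_sqrt (by linarith)
        have h2 : √(w - (a - ε)) ≤ 2 * √ε := sqrt_two_mul_le (by linarith) (by linarith)
        have h3 : √(w - a) ≤ √ε := Real.sqrt_le_sqrt (by linarith)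
        have := mul_le_mul h3 h1 (by positivity) (by positivity)
        have := mul_le_mul_of_nonneg_left h2 hA.le
        linarith
      have m := Real.log_le_log hN u1
      rw [Real.log_mul (by norm_num) (by positivity), Real.log_mul hA.ne' hE.ne',
        Real.log_sqrt ha.le, Real.log_sqrt hε.le] at m
      have := Real.log_le_log ha haw.le
      have := log3
      rw [show a - (a - ε) = ε by ring]
      linarith
    · refine setIntegral_nonneg measurableSet_Ioo ?_
      intro y hy
      have : 0 < a - y := by linarith [hy.2]
      positivity

lemma JAux_gt_tendsto {a w : ℝ} (ha : 0 < a) (haw : a < w) (hw1 : w < 1) :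
    Tendsto (fun ε => JAux a ε w) (𝓝[>] 0) (𝓝 0) := by
  have hA : 0 < √a := Real.sqrt_pos.2 ha
  have hB : 0 < √(w - a) := Real.sqrt_pos.2 (by linarith)
  have hc : ContinuousAt (fun ε : ℝ => 1 / (√a * √(w - a)) *
      (2 * (Real.log (NAux a w (a - ε)) - Real.log (NAux a w (a + ε))))) 0 := by
    have hN : 0 < NAux a w a := phi_pos ha haw ⟨ha.le, haw.le⟩
    unfold NAux at *
    refine continuousAt_const.mul (continuousAt_const.mul (ContinuousAt.sub
      (ContinuousAt.log (by fun_prop) ?_) (ContinuousAt.log (by fun_prop) ?_)))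
    · simpa using hN.ne'
    · simpa using hN.ne'
  have h1 := hc.tendsto.mono_left (nhdsWithin_le_nhds (s := Set.Ioi 0))
  simp only [sub_zero, add_zero, sub_self, mul_zero] at h1
  refine h1.congr' ?_
  have e1 : ∀ᶠ ε in 𝓝[>] (0:ℝ), ε < a := nhdsWithin_le_nhds (eventually_lt_nhds ha)
  have e2 : ∀ᶠ ε in 𝓝[>] (0:ℝ), ε < w - a :=
    nhdsWithin_le_nhds (eventually_lt_nhds (by linarith))
  filter_upwards [e1, e2, self_mem_nhdsWithin] with ε h1 h2 h3
  exact (JAux_gt_small ha haw hw1 h3 h1 h2).symm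

lemma cov {p q : ℝ} (hpq : p < q) (h : ℝ → ℝ) :
    ∫ w, h w * (1 / (√(w - p) * √(q - w))) =
      ∫ θ in (0:ℝ)..(π/2), 2 * h (p + (q - p) * sin θ ^ 2) := by
  have hd0 : 0 < q - p := by linarith
  have hpi := Real.pi_pos
  have hz : ∀ w ∉ Set.Ioo p q, h w * (1 / (√(w - p) * √(q - w))) = 0 := by
    intro y hy
    rw [Set.mem_Ioo, not_and_or, not_lt, not_lt] at hy
    rcases hy with h | h
    · rw [Real.sqrt_eq_zero_of_nonpos (show y - p ≤ 0 by linarith)]; simp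
    · rw [Real.sqrt_eq_zero_of_nonpos (show q - y ≤ 0 by linarith)]; simp
  have hsp : ∀ θ ∈ Set.Ioo 0 (π/2), 0 < sin θ := fun θ hθ =>
    Real.sin_pos_of_pos_of_lt_pi hθ.1 (by linarith [hθ.2])
  have hcp : ∀ θ ∈ Set.Ioo 0 (π/2), 0 < cos θ := fun θ hθ =>
    Real.cos_pos_of_mem_Ioo ⟨by linarith [hθ.1], hθ.2⟩
  have him : (fun θ => p + (q - p) * sin θ ^ 2) '' Set.Ioo 0 (π/2) = Set.Ioo p q := by
    ext w
    constructor
    · rintro ⟨θ, hθ, rfl⟩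
      have h1 := hsp θ hθ
      have h2 := hcp θ hθ
      have h3 := Real.sin_sq_add_cos_sq θ
      constructor
      · have : 0 < (q - p) * sin θ ^ 2 := by positivity
        simp only; linarith
      · have : 0 < (q - p) * cos θ ^ 2 := by positivity
        have : (q - p) * sin θ ^ 2 + (q - p) * cos θ ^ 2 = q - p := by rw [← mul_add, h3, mul_one]
        simp only; linarith
    · intro hw
      have h1 : 0 < (w - p) / (q - p) := div_pos (by linarith [hw.1]) hd0
      have h2 : (w - p) / (q - p) < 1 := (div_lt_one hd0).2 (by linarith [hw.2])
      have h3 : 0 < √((w - p) / (q - p)) := Real.sqrt_pos.2 h1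
      have h4 : √((w - p) / (q - p)) < 1 := by
        rw [Real.sqrt_lt' one_pos]; linarith
      refine ⟨arcsin (√((w - p) / (q - p))), ⟨Real.arcsin_pos.2 h3, Real.arcsin_lt_pi_div_two.2 h4⟩, ?_⟩
      simp only
      rw [Real.sin_arcsin (by linarith) h4.le, Real.sq_sqrt h1.le]
      field_simp
      ring
  rw [← setIntegral_eq_integral_of_forall_compl_eq_zero hz, ← him,
    integral_image_eq_integral_abs_deriv_smul measurableSet_Ioo
      (f' := fun θ => (q - p) * (2 * sin θ * cos θ)),
    intervalIntegral.integral_of_le (by linarith), integral_Ioc_eq_integral_Ioo]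
  · refine setIntegral_congr_fun measurableSet_Ioo ?_
    intro θ hθ
    have h1 := hsp θ hθ
    have h2 := hcp θ hθ
    simp only [smul_eq_mul]
    rw [abs_of_pos (by positivity), show p + (q - p) * sin θ ^ 2 - p = (q - p) * sin θ ^ 2 by ring,
      show q - (p + (q - p) * sin θ ^ 2) = (q - p) * cos θ ^ 2 by rw [Real.cos_sq']; ring,
      Real.sqrt_mul hd0.le, Real.sqrt_mul hd0.le, Real.sqrt_sq h1.le, Real.sqrt_sq h2.le]
    have h3 : 0 < √(q - p) := Real.sqrt_pos.2 hd0
    have h4 := Real.sq_sqrt hd0.le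
    field_simp
    rw [h4]
    ring
  · intro θ hθ
    have := (((Real.hasDerivAt_sin θ).pow 2).const_mul (q - p)).const_add p
    refine (this.congr_deriv ?_).hasDerivWithinAt
    simp
  · intro s hs t ht hst
    have e : sin s ^ 2 = sin t ^ 2 := by
      simp only at hst
      exact mul_left_cancel₀ hd0.ne' (by linarith)
    have e2 : sin s = sin t := (sq_eq_sq₀ (hsp s hs).le (hsp t ht).le).1 e
    exact Real.injOn_sin ⟨by linarith [hs.1], hs.2.le⟩ ⟨by linarith [ht.1], ht.2.le⟩ e2

lemma ellipticK_rep {y : ℝ} (hy : y ∈ Set.Ioo (0:ℝ) 1) :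
    ellipticK √(1 - y) = ∫ w, 1 / (2 * √w * √(1 - w)) * (1 / √(w - y)) := by
  have h := cov hy.2 (fun w => 1 / (2 * √w))
  have e : (fun w => 1 / (2 * √w * √(1 - w)) * (1 / √(w - y))) =
      fun w => 1 / (2 * √w) * (1 / (√(w - y) * √(1 - w))) := by
    funext w
    simp only [one_div, mul_inv]
    ring
  rw [e, h]
  unfold ellipticK
  have h2 := intervalIntegral.integral_comp_sub_left (a := 0) (b := π/2)
    (fun θ => 1 / √(1 - √(1 - y) ^ 2 * sin θ ^ 2)) (π/2)
  simp only [sub_self, sub_zero] at h2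
  rw [← h2]
  refine intervalIntegral.integral_congr ?_
  intro θ _
  simp only [Real.sin_pi_div_two_sub]
  rw [Real.sq_sqrt (by linarith [hy.2]), Real.cos_sq', show 1 - (1 - y) * (1 - sin θ ^ 2) =
    y + (1 - y) * sin θ ^ 2 by ring]
  simp only [one_div, mul_inv]
  ring

lemma limit_eq {a : ℝ} (ha : 0 < a) :
    ∫ w, 1 / (2 * √w * √(1 - w)) * (π / (√a * √(a - w))) = π * (ellipticK √a / √a) := by
  have h := cov ha (fun w => π / 2 * (1 / (√a * √(1 - w))))
  have e : (fun w => 1 / (2 * √w * √(1 - w)) * (π / (√a * √(a - w)))) =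
      fun w => π / 2 * (1 / (√a * √(1 - w))) * (1 / (√(w - 0) * √(a - w))) := by
    funext w
    rw [sub_zero]
    simp only [one_div, mul_inv, div_eq_mul_inv]
    ring
  rw [e, h]
  unfold ellipticK
  rw [← intervalIntegral.integral_div, ← intervalIntegral.integral_const_mul]
  refine intervalIntegral.integral_congr ?_
  intro θ _
  simp only
  rw [Real.sq_sqrt ha.le, sub_zero, zero_add]
  simp only [one_div, mul_inv, div_eq_mul_inv]
  ring

lemma beta_int0 {w : ℝ} (hw : 0 < w) :
    Integrable (fun y => 1 / (√y * √(w - y))) ∧ ∫ y, 1 / (√y * √(w - y)) = π := by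
  simpa only [sub_zero] using beta_int hw

lemma m_integrable : Integrable
    (fun z : ℝ × ℝ => 1 / (2 * √z.2 * √(1 - z.2)) * (1 / (√z.1 * √(z.2 - z.1))))
    (volume.prod volume) := by
  rw [integrable_prod_iff']
  · constructor
    · refine ae_of_all _ fun w => ?_
      rcases le_or_gt w 0 with hw | hw
      · simp [Real.sqrt_eq_zero_of_nonpos hw]
      · exact (beta_int0 hw).1.const_mul (1 / (2 * √w * √(1 - w)))
    · have h := (beta_int0 one_pos).1.const_mul (π / 2)
      refine h.congr (ae_of_all _ fun w => ?_)
      simp only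
      rcases le_or_gt w 0 with hw | hw
      · simp [Real.sqrt_eq_zero_of_nonpos hw]
      · have : ∀ y, ‖1 / (2 * √w * √(1 - w)) * (1 / (√y * √(w - y)))‖ =
            1 / (2 * √w * √(1 - w)) * (1 / (√y * √(w - y))) := by
          intro y
          exact Real.norm_of_nonneg (by positivity)
        simp only [this]
        rw [MeasureTheory.integral_const_mul, (beta_int0 hw).2]
        simp only [one_div, mul_inv, div_eq_mul_inv]
        ring
  · exact (by fun_prop : Measurable _).aestronglyMeasurable

lemma k_integrable (a : ℝ) {ε : ℝ} (hε : 0 < ε) : Integrable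
    (Function.uncurry fun y w : ℝ => 1 / (2 * √w * √(1 - w)) * (1 / ((a - y) * √y * √(w - y))))
    ((volume.restrict (SAux a ε)).prod volume) := by
  have hm : (volume.restrict (SAux a ε)).prod (volume : Measure ℝ) =
      (volume.prod volume).restrict (SAux a ε ×ˢ Set.univ) := by
    rw [← Measure.prod_restrict, Measure.restrict_univ]
  rw [hm]
  refine (m_integrable.const_mul (1 / ε)).restrict.mono'
    (by unfold Function.uncurry; exact (by fun_prop : Measurable _).aestronglyMeasurable) ?_
  refine (ae_restrict_iff' ((measurableSet_SAux a ε).prod MeasurableSet.univ)).2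
    (ae_of_all _ ?_)
  rintro ⟨y, w⟩ hz
  have hy : ε < |a - y| := by rw [abs_sub_comm]; exact hz.1.2
  simp only [Function.uncurry]
  have e : 1 / (2 * √w * √(1 - w)) * (1 / ((a - y) * √y * √(w - y))) =
      1 / (a - y) * (1 / (2 * √w * √(1 - w)) * (1 / (√y * √(w - y)))) := by
    simp only [one_div, mul_inv]
    ring
  rw [e, norm_mul, Real.norm_of_nonneg (show
    0 ≤ 1 / (2 * √w * √(1 - w)) * (1 / (√y * √(w - y))) by positivity), norm_div, norm_one,
    Real.norm_eq_abs]
  refine mul_le_mul_of_nonneg_right ?_ (by positivity)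
  exact one_div_le_one_div_of_le hε hy.le

lemma swap_eq (a : ℝ) {ε : ℝ} (hε : 0 < ε) :
    ∫ y in SAux a ε, ellipticK √(1 - y) / ((a - y) * √y) =
      ∫ w, 1 / (2 * √w * √(1 - w)) * JAux a ε w := by
  have h := integral_integral_swap (k_integrable a hε)
  simp only [MeasureTheory.integral_const_mul] at h
  unfold JAux
  rw [← h]
  refine setIntegral_congr_fun (measurableSet_SAux a ε) ?_
  intro y hy
  simp only
  rw [ellipticK_rep hy.1, ← MeasureTheory.integral_div]
  congr 1
  funext w
  simp only [one_div, mul_inv, div_eq_mul_inv]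
  ring

lemma bound_integrable {a : ℝ} (ha : 0 < a) (ha1 : a < 1) :
    Integrable (fun w => 1 / (2 * √w * √(1 - w)) * (4 / (√a * √|a - w|))) := by
  have i1 := (beta_int0 ha).1.const_mul (2 / (√a * √(1 - a)))
  have i2 := (beta_int ha1).1.const_mul (2 / (√a * √a))
  refine (i1.add i2).mono' (by exact (by fun_prop : Measurable _).aestronglyMeasurable)
    (ae_of_all _ fun w => ?_)
  rw [Real.norm_of_nonneg (by positivity)]
  simp only [Pi.add_apply]
  have p1 : 0 ≤ 2 / (√a * √(1 - a)) * (1 / (√w * √(a - w))) := by positivity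
  have p2 : 0 ≤ 2 / (√a * √a) * (1 / (√(w - a) * √(1 - w))) := by positivity
  have hA : 0 < √a := Real.sqrt_pos.2 ha
  have hA1 : 0 < √(1 - a) := Real.sqrt_pos.2 (by linarith)
  rcases lt_trichotomy w a with h | h | h
  · refine le_trans ?_ (le_add_of_nonneg_right p2)
    rw [abs_of_pos (by linarith)]
    have : 1 / √(1 - w) ≤ 1 / √(1 - a) :=
      one_div_le_one_div_of_le hA1 (Real.sqrt_le_sqrt (by linarith))
    calc _ = 2 / (√a) * (1 / (√w * √(a - w))) * (1 / √(1 - w)) := by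
          simp only [one_div, mul_inv, div_eq_mul_inv]; ring
      _ ≤ 2 / (√a) * (1 / (√w * √(a - w))) * (1 / √(1 - a)) :=
          mul_le_mul_of_nonneg_left this (by positivity)
      _ = _ := by simp only [one_div, mul_inv, div_eq_mul_inv]; ring
  · subst h
    simp
  · refine le_trans ?_ (le_add_of_nonneg_left p1)
    rw [abs_sub_comm, abs_of_pos (by linarith)]
    have : 1 / √w ≤ 1 / √a :=
      one_div_le_one_div_of_le hA (Real.sqrt_le_sqrt (by linarith))
    calc _ = 2 / (√a) * (1 / (√(w - a) * √(1 - w))) * (1 / √w) := by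
          simp only [one_div, mul_inv, div_eq_mul_inv]; ring
      _ ≤ 2 / (√a) * (1 / (√(w - a) * √(1 - w))) * (1 / √a) :=
          mul_le_mul_of_nonneg_left this (by positivity)
      _ = _ := by simp only [one_div, mul_inv, div_eq_mul_inv]; ring

lemma pref_zero {w : ℝ} (hw : w ∉ Set.Ioo (0:ℝ) 1) : 1 / (2 * √w * √(1 - w)) = 0 := by
  rw [Set.mem_Ioo, not_and_or, not_lt, not_lt] at hw
  rcases hw with h | h
  · rw [Real.sqrt_eq_zero_of_nonpos h]; simp
  · rw [Real.sqrt_eq_zero_of_nonpos (show 1 - w ≤ 0 by linarith)]; simp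

lemma main_y {a : ℝ} (ha : 0 < a) (ha1 : a < 1) :
    Tendsto (fun ε : ℝ => ∫ y in SAux a ε, ellipticK √(1 - y) / ((a - y) * √y))
      (𝓝[>] 0) (𝓝 (π * (ellipticK √a / √a))) := by
  rw [← limit_eq ha]
  have hD : Tendsto (fun ε : ℝ => ∫ w, 1 / (2 * √w * √(1 - w)) * JAux a ε w) (𝓝[>] 0)
      (𝓝 (∫ w, 1 / (2 * √w * √(1 - w)) * (π / (√a * √(a - w))))) := by
    have hne : ∀ᵐ w : ℝ, w ≠ a := by simp [ae_iff]
    refine tendsto_integral_filter_of_dominated_convergence _ ?_ ?_ (bound_integrable ha ha1) ?_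
    · filter_upwards [self_mem_nhdsWithin] with ε hε
      have := (k_integrable a hε).integral_prod_right
      simp only [Function.uncurry, MeasureTheory.integral_const_mul] at this
      exact this.aestronglyMeasurable
    · have e1 : ∀ᶠ ε in 𝓝[>] (0:ℝ), ε < a := nhdsWithin_le_nhds (eventually_lt_nhds ha)
      filter_upwards [e1, self_mem_nhdsWithin] with ε hεa hε
      filter_upwards [hne] with w hw
      by_cases hm : w ∈ Set.Ioo (0:ℝ) 1
      · rw [norm_mul, Real.norm_of_nonneg (by positivity), Real.norm_eq_abs]
        refine mul_le_mul_of_nonneg_left ?_ (by positivity)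
        rcases lt_or_gt_of_ne hw with h | h
        · rw [abs_of_pos (show 0 < a - w by linarith)]
          refine (JAux_lt_bound ha1 hm.1 h).trans ?_
          gcongr
          exact Real.pi_le_four
        · rw [abs_sub_comm a w, abs_of_pos (show 0 < w - a by linarith)]
          exact JAux_gt_bound ha h hm.2 hε hεa
      · rw [pref_zero hm]; simp
    · filter_upwards [hne] with w hw
      by_cases hm : w ∈ Set.Ioo (0:ℝ) 1
      · refine Tendsto.const_mul _ ?_
        rcases lt_or_gt_of_ne hw with h | h
        · refine tendsto_const_nhds.congr' ?_
          have e1 : ∀ᶠ ε in 𝓝[>] (0:ℝ), ε < a - w :=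
            nhdsWithin_le_nhds (eventually_lt_nhds (by linarith))
          filter_upwards [e1] with ε hε
          exact (JAux_lt_eq ha1 hm.1 h hε).symm
        · rw [Real.sqrt_eq_zero_of_nonpos (show a - w ≤ 0 by linarith)]
          simpa using JAux_gt_tendsto ha h hm.2
      · rw [pref_zero hm]; simp
  refine hD.congr' ?_
  filter_upwards [self_mem_nhdsWithin] with ε hε
  exact (swap_eq a hε).symm

theorem stmt_11 (x : ℝ) (hx : x ∈ Set.Ioo (-1:ℝ) 1) :
    Tendsto (fun ε : ℝ =>
        ∫ ξ in {ξ : ℝ | ξ ∈ Set.Ioo (-1:ℝ) 1 ∧ ε < |ξ - x|},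
          ellipticK (Real.sqrt ((1-ξ)/2)) / (π * (x - ξ) * Real.sqrt (1+ξ)))
      (𝓝[>] 0)
      (𝓝 (ellipticK (Real.sqrt ((1+x)/2)) / Real.sqrt (1+x))) := by
  have hm := main_y (a := (1 + x) / 2) (by linarith [hx.1]) (by linarith [hx.2])
  have hpi := Real.pi_pos
  have h2 : 0 < √(2:ℝ) := by positivity
  have ht : Tendsto (fun ε : ℝ => ε / 2) (𝓝[>] 0) (𝓝[>] 0) := by
    refine tendsto_nhdsWithin_iff.2 ⟨?_, ?_⟩
    · have : Continuous fun ε : ℝ => ε / 2 := by fun_prop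
      have := (this.tendsto 0).mono_left (nhdsWithin_le_nhds (s := Set.Ioi 0))
      simpa using this
    · filter_upwards [self_mem_nhdsWithin] with ε hε
      exact half_pos (Set.mem_Ioi.1 hε)
  have hf := (hm.comp ht).const_mul (1 / (π * √2))
  have e1 : 1 / (π * √2) * (π * (ellipticK √((1 + x) / 2) / √((1 + x) / 2))) =
      ellipticK (Real.sqrt ((1+x)/2)) / Real.sqrt (1+x) := by
    have h3 : √(1 + x) = √2 * √((1 + x) / 2) := by
      rw [← Real.sqrt_mul (by norm_num)]; congr 1; ring
    have : 0 < √((1 + x) / 2) := Real.sqrt_pos.2 (by linarith [hx.1])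
    rw [h3]
    field_simp
  rw [e1] at hf
  refine hf.congr fun ε => ?_
  have him : {ξ : ℝ | ξ ∈ Set.Ioo (-1:ℝ) 1 ∧ ε < |ξ - x|} =
      (fun y => 2 * y - 1) '' SAux ((1 + x) / 2) (ε / 2) := by
    ext ξ
    have habs : |ξ - x| = 2 * |(1 + ξ) / 2 - (1 + x) / 2| := by
      rw [show ξ - x = 2 * ((1 + ξ) / 2 - (1 + x) / 2) by ring, abs_mul, abs_two]
    constructor
    · rintro ⟨h1, h3⟩
      exact ⟨(1 + ξ) / 2, ⟨⟨by linarith [h1.1], by linarith [h1.2]⟩, by linarith⟩, by ring⟩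
    · rintro ⟨y, ⟨h1, h3⟩, rfl⟩
      simp only at habs ⊢
      rw [show (1 + (2 * y - 1)) / 2 = y by ring] at habs
      exact ⟨⟨by linarith [h1.1], by linarith [h1.2]⟩, by linarith⟩
  rw [him, integral_image_eq_integral_abs_deriv_smul (measurableSet_SAux _ _) (f' := fun _ => 2)]
  · simp only [Function.comp]
    rw [← MeasureTheory.integral_const_mul]
    refine setIntegral_congr_fun (measurableSet_SAux _ _) ?_
    intro y hy
    simp only [smul_eq_mul, abs_two]
    rw [show (1 - (2 * y - 1)) / 2 = 1 - y by ring, show 1 + (2 * y - 1) = 2 * y by ring,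
      show x - (2 * y - 1) = 2 * ((1 + x) / 2 - y) by ring, Real.sqrt_mul (by norm_num)]
    generalize (1 + x) / 2 - y = d
    simp only [one_div, mul_inv, div_eq_mul_inv]
    ring
  · intro y _
    simpa using (((hasDerivAt_id y).const_mul 2).sub_const 1).hasDerivWithinAt
  · intro s _ t _ hst
    simp only at hst
    linarith
end
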